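/- arXiv:0904.0650 — 4 statements merged into one kernel-verified Lean document; each statement's English description precedes it below -/
import Mathlib

section
/- Let Q be a monic cubic complex polynomial and P a complex polynomial of degree at most 2. Suppose that for each n (in some infinite set of positive integers) S_n is a polynomial of degree exactly n and V_n a polynomial of degree at most 1 with Q·S_n'' + P·S_n' + V_n·S_n = 0 identically, that all roots of all S_n lie in a fixed compact subset of ℂ, that the root-counting measures of S_n, S_n' and S_n'' converge weakly to measures ν⁰, ν¹, ν² respectively, and that the polynomials −V_n/(n(n−1)) converge coefficientwise to a monic polynomial Ṽ of degree 1. Then ν⁰ = ν¹ = ν², and the Cauchy transform C of ν⁰ satisfies C(z)² = Ṽ(z)/Q(z) for Lebesgue-almost every z ∈ ℂ. -/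
open MeasureTheory Polynomial Filter

/-- The root-counting measure of a polynomial: the uniform probability measure on the
roots (counted with multiplicity). -/
noncomputable def rootMeasure (p : Polynomial ℂ) : Measure ℂ :=
  ((p.natDegree : ENNReal))⁻¹ • (p.roots.map (fun z => (Measure.dirac z))).sum

/-!
Write `C` and `U` for Cauchy transforms and logarithmic potentials. The kernels `w⁻¹` and `log ‖w‖`
are locally integrable on the plane, and potentials with bounded continuous kernels converge
pointwise under weak convergence; approximating the kernel in `L¹`, the transforms `C` and `U` of
weakly convergent, uniformly compactly supported measures converge in measure on every ball, hence
almost everywhere along a subsequence.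

For the root measure of `p` of degree `n` one has `C = p' / (n p)`. Dividing the differential
equation by `n (n - 1) S` thus gives `Q C⁰ C¹ = Ṽ` in the limit, so `C⁰` and `C¹` vanish almost
nowhere. If `U` and `U'` belong to the roots of `p` and of its derivative `p'`, then
`n (U' - U) = log ‖C‖ + U'`; wherever the limit of `C` is nonzero, `U` and `U'` therefore have the
same limit.

Finally, the logarithmic potential determines a compactly supported measure: averaging over circles
of radius `r` replaces `log ‖w‖` by `log (max r ‖w‖)`, and the difference of these kernels for `2 r`
and `r` is a compactly supported bump whose Fourier transform is nonzero at any prescribed frequency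
once `r` is small. Convolution with it can then be cancelled on the side of characteristic
functions.
-/

open Set Topology Metric
open scoped ENNReal BoundedContinuousFunction RealInnerProductSpace

section Potential

variable {G 𝕜 : Type*} [NormedAddCommGroup G] [MeasurableSpace G] [RCLike 𝕜]

/-- The potential `z ↦ ∫ k (z - ξ) dμ(ξ)` of a measure `μ` with respect to a convolution kernel
`k`; it covers both Cauchy transforms and logarithmic potentials. At points where the integrand
is not integrable its value is the junk value `0`. -/
noncomputable def potential (k : G → 𝕜) (μ : Measure G) (z : G) : 𝕜 := ∫ ξ, k (z - ξ) ∂μ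

lemma enorm_potential_le_of_boundedContinuous (h : G →ᵇ 𝕜) (ρ : FiniteMeasure G) (z : G) :
    ‖potential h ρ z‖ₑ ≤ ‖h‖ₑ * ρ.mass := by
  calc ‖potential h ρ z‖ₑ ≤ ∫⁻ ξ, ‖h (z - ξ)‖ₑ ∂ρ := enorm_integral_le_lintegral_enorm _
    _ ≤ ∫⁻ _, ‖h‖ₑ ∂ρ := lintegral_mono fun ξ => enorm_le_iff_norm_le.2 (h.norm_coe_le_norm _)
    _ = ‖h‖ₑ * ρ.mass := by rw [lintegral_const, FiniteMeasure.ennreal_mass]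

variable {ι : Type*} {l : Filter ι} {ρ : ι → FiniteMeasure G} {ρ' : FiniteMeasure G}

variable [BorelSpace G]

lemma tendsto_potential_of_boundedContinuous (h : G →ᵇ 𝕜) (hρ : Tendsto ρ l (𝓝 ρ')) (z : G) :
    Tendsto (fun i => potential h (ρ i) z) l (𝓝 (potential h ρ' z)) :=
  (FiniteMeasure.tendsto_iff_forall_integral_rclike_tendsto 𝕜).1 hρ
    (h.compContinuous ⟨fun ξ => z - ξ, by fun_prop⟩)

variable [SecondCountableTopology G] {s : Set G} {m μ : Measure G}
  [SFinite m] [m.IsAddRightInvariant] [IsFiniteMeasure μ] {k h : G → 𝕜}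

lemma integrable_comp_sub_prod (hk : Integrable k m) :
    Integrable (fun p : G × G => k (p.1 - p.2)) (m.prod μ) :=
  (measurePreserving_sub_prod m μ).integrable_comp_of_integrable (hk.comp_fst μ)

lemma ae_integrable_comp_sub (hk : Integrable k m) :
    ∀ᵐ z ∂m, Integrable (fun ξ => k (z - ξ)) μ :=
  (integrable_comp_sub_prod hk).prod_right_ae

lemma integrable_potential (hk : Integrable k m) : Integrable (potential k μ) m :=
  (integrable_comp_sub_prod hk).integral_prod_left

lemma lintegral_enorm_potential_le (hk : Integrable k m) :
    ∫⁻ z, ‖potential k μ z‖ₑ ∂m ≤ (∫⁻ w, ‖k w‖ₑ ∂m) * μ univ := by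
  calc ∫⁻ z, ‖potential k μ z‖ₑ ∂m
      ≤ ∫⁻ z, ∫⁻ ξ, ‖k (z - ξ)‖ₑ ∂μ ∂m :=
        lintegral_mono fun z => enorm_integral_le_lintegral_enorm _
    _ = ∫⁻ ξ, ∫⁻ z, ‖k (z - ξ)‖ₑ ∂m ∂μ :=
        lintegral_lintegral_swap (integrable_comp_sub_prod hk).aestronglyMeasurable.enorm
    _ = (∫⁻ w, ‖k w‖ₑ ∂m) * μ univ := by
        simp only [lintegral_sub_right_eq_self (fun w => ‖k w‖ₑ), lintegral_const]

lemma potential_sub_ae_eq (hk : Integrable k m) (hh : Integrable h m) :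
    potential (k - h) μ =ᵐ[m] potential k μ - potential h μ := by
  filter_upwards [ae_integrable_comp_sub (μ := μ) hk, ae_integrable_comp_sub (μ := μ) hh]
    with z hkz hhz using integral_sub hkz hhz

lemma tendsto_setLIntegral_potential_sub_of_boundedContinuous [l.IsCountablyGenerated]
    (h : G →ᵇ 𝕜) (hh : Integrable h m) (hρ : Tendsto ρ l (𝓝 ρ')) (hs : m s ≠ ∞) :
    Tendsto (fun i => ∫⁻ z in s, ‖potential h (ρ i) z - potential h ρ' z‖ₑ ∂m) l (𝓝 0) := by
  have hmass : ∀ᶠ i in l, (ρ i).mass ≤ ρ'.mass + 1 :=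
    hρ.mass.eventually_le_const (lt_add_one _)
  rw [← lintegral_zero (μ := m.restrict s)]
  refine tendsto_lintegral_filter_of_dominated_convergence'
    (fun _ => ‖h‖ₑ * (ρ'.mass + 1 : NNReal) + ‖h‖ₑ * ρ'.mass) (.of_forall fun i => ?_) ?_ ?_ ?_
  · exact ((integrable_potential hh).sub
      (integrable_potential hh)).aestronglyMeasurable.enorm.restrict
  · filter_upwards [hmass] with i hi
    refine .of_forall fun z => enorm_sub_le.trans (add_le_add ?_ ?_)
    · exact (enorm_potential_le_of_boundedContinuous h _ z).trans (by gcongr)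
    · exact enorm_potential_le_of_boundedContinuous h _ z
  · rw [setLIntegral_const]
    finiteness
  · refine .of_forall fun z => ?_
    simpa using ((tendsto_potential_of_boundedContinuous h hρ z).sub_const
      (potential h ρ' z)).enorm

lemma setLIntegral_potential_sub_le {μ' : Measure G} [IsFiniteMeasure μ'] (hk : Integrable k m)
    (hh : Integrable h m) (s : Set G) :
    ∫⁻ z in s, ‖potential k μ z - potential k μ' z‖ₑ ∂m ≤
      (∫⁻ w, ‖k w - h w‖ₑ ∂m) * μ univ +
        (∫⁻ z in s, ‖potential h μ z - potential h μ' z‖ₑ ∂m) +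
        (∫⁻ w, ‖k w - h w‖ₑ ∂m) * μ' univ := by
  have hdecomp : ∀ᵐ z ∂m, potential k μ z - potential k μ' z =
      potential (k - h) μ z + (potential h μ z - potential h μ' z) - potential (k - h) μ' z := by
    filter_upwards [potential_sub_ae_eq (μ := μ) hk hh, potential_sub_ae_eq (μ := μ') hk hh]
      with z hz hz'
    rw [hz, hz', Pi.sub_apply, Pi.sub_apply]
    ring
  calc ∫⁻ z in s, ‖potential k μ z - potential k μ' z‖ₑ ∂m
      ≤ ∫⁻ z in s, (‖potential (k - h) μ z‖ₑ + ‖potential h μ z - potential h μ' z‖ₑ) +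
          ‖potential (k - h) μ' z‖ₑ ∂m := by
        refine lintegral_mono_ae ((ae_restrict_of_ae hdecomp).mono fun z hz => ?_)
        rw [hz]
        exact enorm_sub_le.trans (by gcongr; exact enorm_add_le _ _)
    _ = (∫⁻ z in s, ‖potential (k - h) μ z‖ₑ ∂m) +
          (∫⁻ z in s, ‖potential h μ z - potential h μ' z‖ₑ ∂m) +
          ∫⁻ z in s, ‖potential (k - h) μ' z‖ₑ ∂m := by
        rw [lintegral_add_right', lintegral_add_right']
        · exact ((integrable_potential hh).sub
            (integrable_potential hh)).aestronglyMeasurable.enorm.restrict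
        · exact (integrable_potential (hk.sub hh)).aestronglyMeasurable.enorm.restrict
    _ ≤ _ := by
        gcongr <;>
          exact (setLIntegral_le_lintegral s _).trans (lintegral_enorm_potential_le (hk.sub hh))

lemma tendsto_setLIntegral_potential_sub [m.WeaklyRegular] [l.IsCountablyGenerated]
    (hk : Integrable k m) (hρ : Tendsto ρ l (𝓝 ρ')) (hs : m s ≠ ∞) :
    Tendsto (fun i => ∫⁻ z in s, ‖potential k (ρ i) z - potential k ρ' z‖ₑ ∂m) l (𝓝 0) := by
  refine ENNReal.tendsto_nhds_zero.2 fun ε hε => ?_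
  obtain ⟨a, ha0, ha⟩ := ENNReal.exists_nnreal_pos_mul_lt
    (show ((ρ'.mass + ρ'.mass : NNReal) : ℝ≥0∞) ≠ ∞ by finiteness) hε.ne'
  obtain ⟨h, hkh, hh⟩ :=
    hk.exists_boundedContinuous_lintegral_sub_le (ENNReal.coe_ne_zero.2 ha0.ne')
  have hlim : Tendsto (fun i => a * (ρ i).mass +
      (∫⁻ z in s, ‖potential h (ρ i) z - potential h ρ' z‖ₑ ∂m) + a * ρ'.mass) l
      (𝓝 (a * ρ'.mass + 0 + a * ρ'.mass)) :=
    ((ENNReal.Tendsto.const_mul (ENNReal.tendsto_coe.2 hρ.mass) (.inr ENNReal.coe_ne_top)).add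
      (tendsto_setLIntegral_potential_sub_of_boundedContinuous h hh hρ hs)).add_const _
  filter_upwards [hlim.eventually_le_const (by simpa [mul_add] using ha)] with i hi
  refine (setLIntegral_potential_sub_le hk hh s).trans (le_trans ?_ hi)
  rw [← FiniteMeasure.ennreal_mass, ← FiniteMeasure.ennreal_mass]
  gcongr

end Potential

section LocalConvergence

lemma tendstoInMeasure_prodMk {α ι E F : Type*} [MeasurableSpace α] [PseudoEMetricSpace E]
    [PseudoEMetricSpace F] {μ : Measure α} {l : Filter ι} {f : ι → α → E} {f' : α → E}
    {g : ι → α → F} {g' : α → F} (hf : TendstoInMeasure μ f l f')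
    (hg : TendstoInMeasure μ g l g') :
    TendstoInMeasure μ (fun i x => (f i x, g i x)) l (fun x => (f' x, g' x)) := by
  intro ε hε
  refine tendsto_of_tendsto_of_tendsto_of_le_of_le tendsto_const_nhds
    (by simpa using (hf ε hε).add (hg ε hε)) (fun _ => zero_le) fun i => ?_
  refine (measure_mono fun x hx => ?_).trans (measure_union_le _ _)
  exact le_max_iff.1 (by simpa [Prod.edist_eq] using hx)

lemma ae_of_forall_ae_restrict_ball {X : Type*} [PseudoMetricSpace X] [MeasurableSpace X]
    {m : Measure X} {p : X → Prop} (x : X) (h : ∀ r : ℝ, ∀ᵐ z ∂m.restrict (ball x r), p z) :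
    ∀ᵐ z ∂m, p z := by
  rw [← Measure.restrict_univ (μ := m), ← iUnion_ball_nat x, ae_restrict_iUnion_iff]
  exact fun n => h n

lemma ae_mem_of_tendsto_of_isClosed {Ω ι : Type*} [TopologicalSpace Ω] [MeasurableSpace Ω]
    [OpensMeasurableSpace Ω] [HasOuterApproxClosed Ω] {l : Filter ι} [l.NeBot]
    {ρ : ι → FiniteMeasure Ω} {ρ' : FiniteMeasure Ω} (hρ : Tendsto ρ l (𝓝 ρ')) {F : Set Ω}
    (hF : IsClosed F) (h : ∀ i, ∀ᵐ ξ ∂(ρ i : Measure Ω), ξ ∈ F) :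
    ∀ᵐ ξ ∂(ρ' : Measure Ω), ξ ∈ F := by
  have hmass (i : ι) : (ρ i : Measure Ω) F = (ρ i).mass := by
    rw [FiniteMeasure.ennreal_mass]
    exact (ae_iff_measure_eq hF.nullMeasurableSet).1 (h i)
  have hlim : l.limsup (fun i => (ρ i : Measure Ω) F) = ρ'.mass := by
    simp only [hmass]
    exact (ENNReal.tendsto_coe.2 hρ.mass).limsup_eq
  have hle := FiniteMeasure.limsup_measure_closed_le_of_tendsto hρ hF
  rw [hlim, FiniteMeasure.ennreal_mass] at hle
  exact (ae_iff_measure_eq hF.nullMeasurableSet).2 (le_antisymm (measure_mono (subset_univ _)) hle)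

variable {G 𝕜 : Type*} [NormedAddCommGroup G] [MeasurableSpace G] [RCLike 𝕜] {k : G → 𝕜}

lemma indicator_closedBall_comp_sub_ae_eq {μ : Measure G} {M R : ℝ}
    (hM : ∀ᵐ ξ ∂μ, ξ ∈ closedBall 0 M) {z : G} (hz : z ∈ ball 0 R) :
    (fun ξ => (closedBall 0 (R + M)).indicator k (z - ξ)) =ᵐ[μ] fun ξ => k (z - ξ) := by
  filter_upwards [hM] with ξ hξ
  refine indicator_of_mem ?_ _
  rw [mem_closedBall_zero_iff] at hξ ⊢
  rw [mem_ball_zero_iff] at hz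
  exact (norm_sub_le z ξ).trans (by gcongr)

variable [BorelSpace G] [ProperSpace G] {m : Measure G}

lemma integrable_indicator_closedBall (hk : LocallyIntegrable k m) (R : ℝ) :
    Integrable ((closedBall 0 R).indicator k) m :=
  (hk.integrableOn_isCompact (isCompact_closedBall 0 R)).integrable_indicator
    measurableSet_closedBall

variable [m.IsAddRightInvariant] [IsFiniteMeasureOnCompacts m]

lemma ae_integrable_comp_sub_of_locallyIntegrable (hk : LocallyIntegrable k m) {μ : Measure G}
    [IsFiniteMeasure μ] {M : ℝ} (hM : ∀ᵐ ξ ∂μ, ξ ∈ closedBall 0 M) :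
    ∀ᵐ z ∂m, Integrable (fun ξ => k (z - ξ)) μ := by
  refine ae_of_forall_ae_restrict_ball 0 fun R => ?_
  filter_upwards [ae_restrict_mem measurableSet_ball, ae_restrict_of_ae
    (ae_integrable_comp_sub (μ := μ) (integrable_indicator_closedBall hk (R + M)))] with z hz hint
  exact hint.congr (indicator_closedBall_comp_sub_ae_eq hM hz)

theorem tendstoInMeasure_potential (hk : LocallyIntegrable k m)
    {ι : Type*} {l : Filter ι} [l.NeBot] [l.IsCountablyGenerated] {ρ : ι → FiniteMeasure G}
    {ρ' : FiniteMeasure G} (hρ : Tendsto ρ l (𝓝 ρ')) {M : ℝ}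
    (hM : ∀ i, ∀ᵐ ξ ∂(ρ i : Measure G), ξ ∈ closedBall 0 M) (R : ℝ) :
    TendstoInMeasure (m.restrict (ball 0 R)) (fun i => potential k (ρ i)) l
      (potential k ρ') := by
  set kR := (closedBall (0 : G) (R + M)).indicator k
  have hkR : Integrable kR m := integrable_indicator_closedBall hk _
  have hM' := ae_mem_of_tendsto_of_isClosed hρ isClosed_closedBall hM
  have hcongr (ρ₀ : FiniteMeasure G) (h : ∀ᵐ ξ ∂(ρ₀ : Measure G), ξ ∈ closedBall 0 M) :
      potential kR ρ₀ =ᵐ[m.restrict (ball 0 R)] potential k ρ₀ :=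
    (ae_restrict_mem measurableSet_ball).mono fun z hz =>
      integral_congr_ae (indicator_closedBall_comp_sub_ae_eq h hz)
  refine TendstoInMeasure.congr (fun i => hcongr _ (hM i)) (hcongr _ hM') ?_
  refine tendstoInMeasure_of_tendsto_eLpNorm one_ne_zero
    (fun i => (integrable_potential hkR).aestronglyMeasurable.restrict)
    (integrable_potential hkR).aestronglyMeasurable.restrict ?_
  simp only [eLpNorm_one_eq_lintegral_enorm, Pi.sub_apply]
  exact tendsto_setLIntegral_potential_sub hkR hρ measure_ball_lt_top.ne

end LocalConvergence

section Deconvolution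

variable {V : Type*} [NormedAddCommGroup V] [InnerProductSpace ℝ V] [MeasurableSpace V]
  [BorelSpace V] [SecondCountableTopology V] {m : Measure V}

lemma integral_cexp_inner_mul_potential [SFinite m] [m.IsAddRightInvariant] {k : V → ℂ}
    (hk : Integrable k m) (ν : Measure V) [IsFiniteMeasure ν] (t : V) :
    ∫ z, Complex.exp (⟪z, t⟫ * Complex.I) * potential k ν z ∂m =
      (∫ w, Complex.exp (⟪w, t⟫ * Complex.I) * k w ∂m) * charFun ν t := by
  have hint : Integrable
      (fun p : V × V => Complex.exp (⟪p.1, t⟫ * Complex.I) * k (p.1 - p.2)) (m.prod ν) :=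
    (integrable_comp_sub_prod hk).bdd_mul (c := 1) (by fun_prop)
      (.of_forall fun p => (Complex.norm_exp_ofReal_mul_I _).le)
  calc ∫ z, Complex.exp (⟪z, t⟫ * Complex.I) * potential k ν z ∂m
      = ∫ z, ∫ ξ, Complex.exp (⟪z, t⟫ * Complex.I) * k (z - ξ) ∂ν ∂m := by
        simp only [potential, integral_const_mul]
    _ = ∫ ξ, ∫ z, Complex.exp (⟪z, t⟫ * Complex.I) * k (z - ξ) ∂m ∂ν :=
        integral_integral_swap hint
    _ = ∫ ξ, ∫ w, Complex.exp (⟪w + ξ, t⟫ * Complex.I) * k w ∂m ∂ν := by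
        refine integral_congr_ae (.of_forall fun ξ => ?_)
        simpa only [sub_add_cancel] using integral_sub_right_eq_self (μ := m)
          (fun w => Complex.exp (⟪w + ξ, t⟫ * Complex.I) * k w) ξ
    _ = (∫ w, Complex.exp (⟪w, t⟫ * Complex.I) * k w ∂m) * charFun ν t := by
        simp only [inner_add_left, Complex.ofReal_add, add_mul, Complex.exp_add, mul_right_comm,
          integral_mul_const, integral_const_mul, charFun_apply]

theorem eq_of_potential_ae_eq [CompleteSpace V] [SFinite m] [m.IsAddRightInvariant]
    {ν₀ ν₁ : Measure V} [IsFiniteMeasure ν₀] [IsFiniteMeasure ν₁]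
    (h : ∀ t : V, ∃ k : V → ℂ, Integrable k m ∧
      ∫ w, Complex.exp (⟪w, t⟫ * Complex.I) * k w ∂m ≠ 0 ∧
      potential k ν₀ =ᵐ[m] potential k ν₁) :
    ν₀ = ν₁ := by
  refine Measure.ext_of_charFun (funext fun t => ?_)
  obtain ⟨k, hk, hne, heq⟩ := h t
  refine mul_left_cancel₀ hne ?_
  rw [← integral_cexp_inner_mul_potential hk, ← integral_cexp_inner_mul_potential hk]
  exact integral_congr_ae (heq.mono fun z hz => by simp only [hz])

lemma integral_cexp_inner_mul_ne_zero [m.IsOpenPosMeasure] [IsFiniteMeasureOnCompacts m]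
    {f : V → ℝ} (hf : Continuous f) (hf_supp : HasCompactSupport f) (hf_nonneg : 0 ≤ f)
    (hf_zero : f 0 ≠ 0) {t : V} (ht : ∀ w, f w ≠ 0 → |⟪w, t⟫| < Real.pi / 2) :
    ∫ w, Complex.exp (⟪w, t⟫ * Complex.I) * f w ∂m ≠ 0 := by
  have hint : Integrable (fun w => Complex.exp (⟪w, t⟫ * Complex.I) * f w) m :=
    (hf.integrable_of_hasCompactSupport hf_supp).ofReal.bdd_mul (c := 1) (by fun_prop)
      (.of_forall fun w => (Complex.norm_exp_ofReal_mul_I _).le)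
  have hre : (∫ w, Complex.exp (⟪w, t⟫ * Complex.I) * f w ∂m).re =
      ∫ w, Real.cos ⟪w, t⟫ * f w ∂m := by
    rw [← RCLike.re_eq_complex_re, ← integral_re hint]
    simp [Complex.exp_ofReal_mul_I_re]
  have hpos : 0 < ∫ w, Real.cos ⟪w, t⟫ * f w ∂m := by
    refine Continuous.integral_pos_of_hasCompactSupport_nonneg_nonzero (x := 0) (by fun_prop)
      hf_supp.mul_left (fun w => ?_) (by simpa using hf_zero)
    by_cases hw : f w = 0
    · simp [hw]
    · exact mul_nonneg (Real.cos_pos_of_mem_Ioo (abs_lt.1 (ht w hw))).le (hf_nonneg w)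
  intro h
  rw [h] at hre
  exact hpos.ne hre

end Deconvolution

section LogPotential

/-- The logarithmic potential `z ↦ ∫ log ‖z - ξ‖ dμ(ξ)` of a measure on the complex plane. -/
noncomputable abbrev logPotential (μ : Measure ℂ) : ℂ → ℝ := potential (fun w => Real.log ‖w‖) μ

/-- The Cauchy transform `z ↦ ∫ (z - ξ)⁻¹ dμ(ξ)` of a measure on the complex plane. -/
noncomputable abbrev cauchyTransform (μ : Measure ℂ) : ℂ → ℂ := potential (fun w => w⁻¹) μ

lemma locallyIntegrable_inv : LocallyIntegrable (fun w : ℂ => w⁻¹) volume :=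
  locallyIntegrable_of_norm_le_rpow (C := 1) (α := 1) (by simp) (by simp)
    (.of_forall fun w => by simp [Real.rpow_neg_one]) (by fun_prop)

lemma locallyIntegrable_log_norm : LocallyIntegrable (fun w : ℂ => Real.log ‖w‖) volume := by
  have hinv : LocallyIntegrable (fun w : ℂ => Real.posLog ‖w‖⁻¹) volume := by
    refine locallyIntegrable_of_norm_le_rpow (C := 1) (α := 1) (by simp) (by simp)
      (.of_forall fun w => ?_) (by fun_prop)
    rw [Real.norm_of_nonneg Real.posLog_nonneg, one_mul, Real.rpow_neg_one]
    exact max_le (by positivity) (Real.log_le_self (by positivity))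
  have hpos : LocallyIntegrable (fun w : ℂ => Real.posLog ‖w‖) volume :=
    Continuous.locallyIntegrable (by fun_prop)
  refine (hpos.sub hinv).congr (.of_forall fun w => ?_)
  exact Real.posLog_sub_posLog_inv

lemma ae_circleAverage_congr {E : Type*} [NormedAddCommGroup E] [NormedSpace ℝ E] {u v : ℂ → E}
    (h : u =ᵐ[volume] v) (r : ℝ) :
    ∀ᵐ c, Real.circleAverage u c r = Real.circleAverage v c r := by
  have hqmp : Measure.QuasiMeasurePreserving (fun p : ℂ × ℝ => circleMap p.1 r p.2)
      (volume.prod volume) volume := by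
    refine QuasiMeasurePreserving.prod_of_left (by unfold circleMap; fun_prop)
      (.of_forall fun θ => ?_)
    exact (measurePreserving_add_right (volume : Measure ℂ)
      (r * Complex.exp (θ * Complex.I))).quasiMeasurePreserving
  filter_upwards [Measure.ae_ae_of_ae_prod (hqmp.ae h)] with c hc
  rw [Real.circleAverage_def, Real.circleAverage_def]
  congr 1
  exact intervalIntegral.integral_congr_ae (hc.mono fun θ hθ _ => hθ)

lemma ae_circleAverage_potential {k : ℂ → ℝ} (hk : LocallyIntegrable k volume) {ν : Measure ℂ}
    [IsFiniteMeasure ν] {M : ℝ} (hM : ∀ᵐ ξ ∂ν, ξ ∈ closedBall 0 M) (r : ℝ) :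
    ∀ᵐ c, Real.circleAverage (potential k ν) c r =
      potential (fun w => Real.circleAverage k w r) ν c := by
  set σ : Measure (ℝ × ℂ) := (volume.restrict (Set.uIoc 0 (2 * Real.pi))).prod ν
  have : IsFiniteMeasure (volume.restrict (Set.uIoc 0 (2 * Real.pi))) := ⟨by simp [uIoc]⟩
  have hφ : Measurable (fun p : ℝ × ℂ => p.2 - circleMap 0 r p.1) := by unfold circleMap; fun_prop
  have hσ : ∀ᵐ η ∂σ.map (fun p => p.2 - circleMap 0 r p.1), η ∈ closedBall 0 (M + |r|) := by
    refine (ae_map_iff hφ.aemeasurable measurableSet_closedBall).2 ?_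
    filter_upwards [Measure.quasiMeasurePreserving_snd.ae hM] with p hp
    rw [mem_closedBall_zero_iff] at hp
    rw [dist_zero_right]
    exact (norm_sub_le _ _).trans (by gcongr; simp)
  filter_upwards [ae_integrable_comp_sub_of_locallyIntegrable hk hσ] with c hc
  have hint : Integrable (Function.uncurry fun θ ξ => k (circleMap c r θ - ξ)) σ := by
    convert hc.comp_measurable hφ using 1
    funext p
    simp [circleMap, add_sub_assoc, sub_sub_eq_add_sub, add_comm, Function.uncurry_def]
  simp only [Real.circleAverage_def, potential, integral_smul]
  rw [intervalIntegral_integral_swap hint]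
  simp only [circleMap, add_sub_right_comm]

lemma circleAverage_log_norm_eq_log_max {r : ℝ} (hr : 0 < r) (w : ℂ) :
    Real.circleAverage (fun z => Real.log ‖z‖) w r = Real.log (max r ‖w‖) := by
  have h := circleAverage_log_norm_sub_const_eq_log_radius_add_posLog (a := 0) (c := w) hr.ne'
  simp only [sub_zero] at h
  rw [h, Real.posLog_eq_log_max_one (by positivity), ← Real.log_mul hr.ne' (by positivity),
    mul_max_of_nonneg _ _ hr.le, mul_one, mul_inv_cancel_left₀ hr.ne']

/-- The difference of the averages of `log ‖·‖` over circles of radii `2 * r` and `r`, as a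
function of their common centre: a compactly supported radial bump. -/
noncomputable def logBump (r : ℝ) (w : ℂ) : ℝ :=
  Real.log (max (2 * r) ‖w‖) - Real.log (max r ‖w‖)

lemma continuous_log_max_norm {r : ℝ} (hr : 0 < r) :
    Continuous (fun w : ℂ => Real.log (max r ‖w‖)) :=
  Continuous.log (by fun_prop) fun w => (lt_max_of_lt_left hr).ne'

lemma continuous_logBump {r : ℝ} (hr : 0 < r) : Continuous (logBump r) :=
  (continuous_log_max_norm (by positivity)).sub (continuous_log_max_norm hr)

lemma logBump_nonneg {r : ℝ} (hr : 0 < r) : 0 ≤ logBump r := by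
  refine fun w => sub_nonneg.2 (Real.log_le_log (by positivity) ?_)
  gcongr
  linarith

lemma logBump_eq_zero {r : ℝ} (hr : 0 < r) {w : ℂ} (hw : 2 * r ≤ ‖w‖) : logBump r w = 0 := by
  rw [logBump, max_eq_right hw, max_eq_right (by linarith), sub_self]

lemma hasCompactSupport_logBump {r : ℝ} (hr : 0 < r) : HasCompactSupport (logBump r) :=
  HasCompactSupport.intro (isCompact_closedBall 0 (2 * r)) fun w hw =>
    logBump_eq_zero hr (by simpa using (not_le.1 (mt mem_closedBall_zero_iff.2 hw)).le)

lemma logBump_zero_ne_zero {r : ℝ} (hr : 0 < r) : logBump r 0 ≠ 0 := by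
  rw [logBump, norm_zero, max_eq_left (by positivity), max_eq_left hr.le,
    Real.log_mul two_ne_zero hr.ne', add_sub_cancel_right]
  exact (Real.log_pos one_lt_two).ne'

variable {ν₀ ν₁ : Measure ℂ} [IsFiniteMeasure ν₀] [IsFiniteMeasure ν₁] {M : ℝ}

lemma ae_circleAverage_logPotential (hM : ∀ᵐ ξ ∂ν₀, ξ ∈ closedBall 0 M) {r : ℝ} (hr : 0 < r) :
    ∀ᵐ c, Real.circleAverage (logPotential ν₀) c r =
      potential (fun w => Real.log (max r ‖w‖)) ν₀ c := by
  simpa only [circleAverage_log_norm_eq_log_max hr] using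
    ae_circleAverage_potential locallyIntegrable_log_norm hM r

lemma ae_potential_logBump (hM : ∀ᵐ ξ ∂ν₀, ξ ∈ closedBall 0 M) {r : ℝ} (hr : 0 < r) :
    ∀ᵐ c, potential (logBump r) ν₀ c = Real.circleAverage (logPotential ν₀) c (2 * r) -
      Real.circleAverage (logPotential ν₀) c r := by
  have hint {s : ℝ} (hs : 0 < s) := ae_integrable_comp_sub_of_locallyIntegrable
    (continuous_log_max_norm hs).locallyIntegrable (m := volume) hM
  have h2r : 0 < 2 * r := by positivity
  filter_upwards [ae_circleAverage_logPotential hM hr, ae_circleAverage_logPotential hM h2r,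
    hint hr, hint h2r] with c hc hc₂ hi hi₂
  rw [hc, hc₂]
  exact integral_sub hi₂ hi

lemma integral_cexp_inner_mul_logBump_ne_zero {r : ℝ} (hr : 0 < r) {t : ℂ}
    (hrt : 2 * r * ‖t‖ ≤ 1) :
    ∫ w, Complex.exp (⟪w, t⟫ * Complex.I) * logBump r w ≠ 0 := by
  refine integral_cexp_inner_mul_ne_zero (continuous_logBump hr) (hasCompactSupport_logBump hr)
    (logBump_nonneg hr) (logBump_zero_ne_zero hr) fun w hw => ?_
  have hw : ‖w‖ < 2 * r := not_le.1 (mt (logBump_eq_zero hr) hw)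
  calc |⟪w, t⟫| ≤ ‖w‖ * ‖t‖ := abs_real_inner_le_norm w t
    _ ≤ 2 * r * ‖t‖ := by gcongr
    _ ≤ 1 := hrt
    _ < Real.pi / 2 := by linarith [Real.pi_gt_three]

theorem eq_of_logPotential_ae_eq (h₀ : ∀ᵐ ξ ∂ν₀, ξ ∈ closedBall 0 M)
    (h₁ : ∀ᵐ ξ ∂ν₁, ξ ∈ closedBall 0 M) (h : logPotential ν₀ =ᵐ[volume] logPotential ν₁) :
    ν₀ = ν₁ := by
  refine eq_of_potential_ae_eq (m := volume) fun t => ?_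
  set r : ℝ := (2 * (‖t‖ + 1))⁻¹
  have hr : 0 < r := by positivity
  have hrt : 2 * r * ‖t‖ ≤ 1 := by
    rw [show 2 * r = (‖t‖ + 1)⁻¹ by simp only [r]; field_simp, inv_mul_le_one₀ (by positivity)]
    linarith
  refine ⟨fun w => logBump r w, ?_, integral_cexp_inner_mul_logBump_ne_zero hr hrt, ?_⟩
  · exact ((continuous_logBump hr).integrable_of_hasCompactSupport
      (hasCompactSupport_logBump hr)).ofReal
  filter_upwards [ae_potential_logBump h₀ hr, ae_potential_logBump h₁ hr,
    ae_circleAverage_congr h r, ae_circleAverage_congr h (2 * r)] with c hc₀ hc₁ hc hc₂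
  have hcast : potential (logBump r) ν₀ c = potential (logBump r) ν₁ c := by
    rw [hc₀, hc₁, hc, hc₂]
  simpa only [potential, integral_complex_ofReal] using congrArg Complex.ofReal hcast

end LogPotential

section RootMeasure

section DiracSum

variable {α : Type*} [MeasurableSpace α] {s : Multiset α}

lemma integrable_multiset_sum_dirac [MeasurableSingletonClass α] {E : Type*}
    [NormedAddCommGroup E] (s : Multiset α) (f : α → E) :
    Integrable f (s.map Measure.dirac).sum := by
  induction s using Multiset.induction_on with
  | empty => simp
  | cons a s ih =>
    rw [Multiset.map_cons, Multiset.sum_cons]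
    exact (integrable_dirac (by simp)).add_measure ih

lemma integral_multiset_sum_dirac [MeasurableSingletonClass α] {E : Type*}
    [NormedAddCommGroup E] [NormedSpace ℝ E] [CompleteSpace E] (s : Multiset α) (f : α → E) :
    ∫ ξ, f ξ ∂(s.map Measure.dirac).sum = (s.map f).sum := by
  induction s using Multiset.induction_on with
  | empty => simp
  | cons a s ih =>
    simp only [Multiset.map_cons, Multiset.sum_cons]
    rw [integral_add_measure (integrable_dirac (by simp)) (integrable_multiset_sum_dirac s f), ih,
      integral_dirac]

lemma multiset_sum_dirac_univ (s : Multiset α) :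
    (s.map Measure.dirac).sum univ = Multiset.card s := by
  induction s using Multiset.induction_on with
  | empty => simp
  | cons a s ih => simp [ih, add_comm]

lemma ae_multiset_sum_dirac [MeasurableSingletonClass α] {q : α → Prop} (h : ∀ a ∈ s, q a) :
    ∀ᵐ a ∂(s.map Measure.dirac).sum, q a := by
  induction s using Multiset.induction_on with
  | empty => simp
  | cons a s ih =>
    simp only [Multiset.map_cons, Multiset.sum_cons, ae_add_measure_iff, ae_dirac_eq]
    exact ⟨h a (Multiset.mem_cons_self a s), ih fun b hb => h b (Multiset.mem_cons_of_mem hb)⟩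

end DiracSum

variable {p : ℂ[X]} {z : ℂ}

lemma isProbabilityMeasure_rootMeasure (hp : p.natDegree ≠ 0) :
    IsProbabilityMeasure (rootMeasure p) := by
  constructor
  rw [rootMeasure, Measure.smul_apply, multiset_sum_dirac_univ,
    IsAlgClosed.card_roots_eq_natDegree, smul_eq_mul]
  exact ENNReal.inv_mul_cancel (by exact_mod_cast hp) (by simp)

lemma roots_eq_zero_of_natDegree_eq_zero (hp : p.natDegree = 0) : p.roots = 0 := by
  rw [eq_C_of_natDegree_eq_zero hp, roots_C]

instance isFiniteMeasure_rootMeasure (p : ℂ[X]) : IsFiniteMeasure (rootMeasure p) := by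
  by_cases hp : p.natDegree = 0
  · rw [rootMeasure, roots_eq_zero_of_natDegree_eq_zero hp, Multiset.map_zero, Multiset.sum_zero,
      smul_zero]
    infer_instance
  · have := isProbabilityMeasure_rootMeasure hp
    infer_instance

/-- The root-counting measure as a finite measure; it is zero if `p` has degree zero. -/
noncomputable def rootFiniteMeasure (p : ℂ[X]) : FiniteMeasure ℂ :=
  ⟨rootMeasure p, inferInstance⟩

lemma ae_rootMeasure {q : ℂ → Prop} (h : ∀ ξ ∈ p.roots, q ξ) : ∀ᵐ ξ ∂rootMeasure p, q ξ :=
  Measure.ae_smul_measure (ae_multiset_sum_dirac h) _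

lemma natDegree_smul_integral_rootMeasure {E : Type*} [NormedAddCommGroup E] [NormedSpace ℝ E]
    [CompleteSpace E] (p : ℂ[X]) (f : ℂ → E) :
    (p.natDegree : ℝ) • ∫ ξ, f ξ ∂rootMeasure p = (p.roots.map f).sum := by
  by_cases hp : p.natDegree = 0
  · simp [hp, roots_eq_zero_of_natDegree_eq_zero hp]
  · rw [rootMeasure, integral_smul_measure, integral_multiset_sum_dirac, ENNReal.toReal_inv,
      ENNReal.toReal_natCast, smul_inv_smul₀ (by exact_mod_cast hp)]

lemma natDegree_mul_cauchyTransform_rootMeasure (hz : p.eval z ≠ 0) :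
    p.natDegree * cauchyTransform (rootMeasure p) z = p.derivative.eval z / p.eval z := by
  rw [(IsAlgClosed.splits p).eval_derivative_div_eval_of_ne_zero hz]
  simpa [potential] using natDegree_smul_integral_rootMeasure p fun ξ => (z - ξ)⁻¹

lemma natDegree_mul_logPotential_rootMeasure (hz : p.eval z ≠ 0) :
    p.natDegree * logPotential (rootMeasure p) z =
      Real.log ‖p.eval z‖ - Real.log ‖p.leadingCoeff‖ := by
  have hprod := (IsAlgClosed.splits p).eval_eq_prod_roots z
  obtain ⟨hlead, hroots⟩ := mul_ne_zero_iff.1 (hprod ▸ hz)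
  have hne : ∀ ξ ∈ p.roots, ‖z - ξ‖ ≠ 0 := fun ξ hξ h =>
    hroots (Multiset.prod_eq_zero (Multiset.mem_map.2 ⟨ξ, hξ, norm_eq_zero.1 h⟩))
  have hlog : Real.log ‖(p.roots.map (z - ·)).prod‖ =
      (p.roots.map fun ξ => Real.log ‖z - ξ‖).sum := by
    rw [← normHom_apply, map_multiset_prod, Multiset.map_map]
    refine (Real.log_multiset_prod (Multiset.forall_mem_map_iff.2 hne)).trans ?_
    rw [Multiset.map_map]
    rfl
  rw [hprod, norm_mul, Real.log_mul (norm_ne_zero_iff.2 hlead) (norm_ne_zero_iff.2 hroots), hlog,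
    add_sub_cancel_left]
  exact natDegree_smul_integral_rootMeasure p fun ξ => Real.log ‖z - ξ‖

lemma natDegree_mul_logPotential_derivative_sub (hz : p.eval z ≠ 0)
    (hz' : p.derivative.eval z ≠ 0) :
    p.natDegree * (logPotential (rootMeasure p.derivative) z - logPotential (rootMeasure p) z) =
      Real.log ‖cauchyTransform (rootMeasure p) z‖ +
        logPotential (rootMeasure p.derivative) z := by
  have hp : p.natDegree ≠ 0 := fun h => hz' (by simp [derivative_of_natDegree_zero h])
  have hn : (p.natDegree : ℂ) ≠ 0 := by exact_mod_cast hp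
  have hlead : p.leadingCoeff ≠ 0 := leadingCoeff_ne_zero.2 fun h => hz (by simp [h])
  have hU := natDegree_mul_logPotential_rootMeasure hz
  have hU' := natDegree_mul_logPotential_rootMeasure hz'
  have hC : cauchyTransform (rootMeasure p) z = p.derivative.eval z / p.eval z / p.natDegree :=
    eq_div_of_mul_eq hn ((mul_comm _ _).trans (natDegree_mul_cauchyTransform_rootMeasure hz))
  rw [natDegree_derivative, Nat.cast_pred (Nat.pos_of_ne_zero hp), leadingCoeff_derivative,
    norm_mul, Real.log_mul (by simpa using hlead) (by simpa using hp), Complex.norm_natCast] at hU'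
  rw [hC, norm_div, norm_div, Complex.norm_natCast, Real.log_div (by positivity) (by positivity),
    Real.log_div (by positivity) (by positivity)]
  linarith

lemma mem_of_mem_roots_derivative {s : Set ℂ} (hs : Convex ℝ s) (h : ∀ ξ ∈ p.roots, ξ ∈ s) :
    ∀ ξ ∈ p.derivative.roots, ξ ∈ s := by
  intro ξ hξ
  have hdeg : 0 < p.degree := by
    by_contra! hp
    rw [eq_C_of_degree_le_zero hp] at hξ
    simp at hξ
  refine convexHull_min (fun w hw => ?_) hs (rootSet_derivative_subset_convexHull_rootSet hdeg ?_)
  · exact h w (by simpa [mem_rootSet, mem_roots'] using hw)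
  · simpa [mem_rootSet, mem_roots'] using hξ

lemma ae_eval_ne_zero {μ : Measure ℂ} [NullSingletonClass μ] (hp : p ≠ 0) :
    ∀ᵐ z ∂μ, p.eval z ≠ 0 := by
  filter_upwards [(p.rootSet_finite ℂ).countable.ae_notMem μ] with z hz h0
  exact hz (by simp [mem_rootSet, hp, h0])

lemma ae_eventually_eval_ne_zero {μ : Measure ℂ} [NullSingletonClass μ] {p : ℕ → ℂ[X]}
    (hp : ∀ᶠ k in atTop, p k ≠ 0) : ∀ᵐ z ∂μ, ∀ᶠ k in atTop, (p k).eval z ≠ 0 := by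
  have h : ∀ᵐ z ∂μ, ∀ k, p k ≠ 0 → (p k).eval z ≠ 0 :=
    ae_all_iff.2 fun k => Filter.eventually_imp_distrib_left.2 ae_eval_ne_zero
  filter_upwards [h] with z hz
  exact hp.mono hz

lemma isProbabilityMeasure_of_tendsto_integral {Ω ι : Type*} [TopologicalSpace Ω]
    [MeasurableSpace Ω] {l : Filter ι} [l.NeBot] {ρ : ι → Measure Ω} {ν : Measure Ω}
    (hρ : ∀ᶠ i in l, IsProbabilityMeasure (ρ i))
    (h : ∀ f : BoundedContinuousFunction Ω ℝ,
      Tendsto (fun i => ∫ x, f x ∂(ρ i)) l (𝓝 (∫ x, f x ∂ν))) :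
    IsProbabilityMeasure ν := by
  have hlim := h (.const Ω 1)
  simp only [BoundedContinuousFunction.const_apply, integral_const, smul_eq_mul, mul_one] at hlim
  have hone : ν.real univ = 1 :=
    tendsto_nhds_unique hlim (tendsto_const_nhds.congr' (hρ.mono fun i _ => by simp))
  exact ⟨(ENNReal.toReal_eq_one_iff _).1 hone⟩

lemma exists_tendsto_rootFiniteMeasure {ι : Type*} {l : Filter ι} [l.NeBot] {p : ι → ℂ[X]}
    (hdeg : Tendsto (fun i => (p i).natDegree) l atTop) {ν : Measure ℂ}
    (h : ∀ f : BoundedContinuousFunction ℂ ℝ,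
      Tendsto (fun i => ∫ z, f z ∂rootMeasure (p i)) l (𝓝 (∫ z, f z ∂ν))) :
    ∃ ν' : FiniteMeasure ℂ, (ν' : Measure ℂ) = ν ∧
      Tendsto (fun i => rootFiniteMeasure (p i)) l (𝓝 ν') := by
  have := isProbabilityMeasure_of_tendsto_integral
    ((hdeg.eventually_ne_atTop 0).mono fun i hi => isProbabilityMeasure_rootMeasure hi) h
  exact ⟨⟨ν, inferInstance⟩, rfl, FiniteMeasure.tendsto_iff_forall_integral_tendsto.2 h⟩

end RootMeasure

section Derivative

lemma tendsto_natDegree_derivative {ι : Type*} {l : Filter ι} {p : ι → ℂ[X]}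
    (h : Tendsto (fun i => (p i).natDegree) l atTop) :
    Tendsto (fun i => (p i).derivative.natDegree) l atTop := by
  simpa only [natDegree_derivative, Function.comp_def] using (tendsto_sub_atTop_nat 1).comp h

lemma eventually_ne_zero_of_tendsto_natDegree {ι : Type*} {l : Filter ι} {p : ι → ℂ[X]}
    (h : Tendsto (fun i => (p i).natDegree) l atTop) : ∀ᶠ i in l, p i ≠ 0 :=
  (h.eventually_gt_atTop 0).mono fun _ => ne_zero_of_natDegree_gt

lemma eq_of_tendsto_logPotential_of_tendsto_cauchyTransform {ι : Type*} {l : Filter ι} [l.NeBot]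
    {p : ι → ℂ[X]} {z c : ℂ} {u u' : ℝ}
    (hdeg : Tendsto (fun i => (p i).natDegree) l atTop) (hz : ∀ᶠ i in l, (p i).eval z ≠ 0)
    (hz' : ∀ᶠ i in l, (p i).derivative.eval z ≠ 0) (hc : c ≠ 0)
    (hC : Tendsto (fun i => cauchyTransform (rootMeasure (p i)) z) l (𝓝 c))
    (hU : Tendsto (fun i => logPotential (rootMeasure (p i)) z) l (𝓝 u))
    (hU' : Tendsto (fun i => logPotential (rootMeasure (p i).derivative) z) l (𝓝 u')) :
    u = u' := by
  have hinv : Tendsto (fun i => ((p i).natDegree : ℝ)⁻¹) l (𝓝 0) :=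
    (tendsto_inv_atTop_nhds_zero_nat (𝕜 := ℝ)).comp hdeg
  have hsmall := hinv.mul ((hC.norm.log (norm_ne_zero_iff.2 hc)).add hU')
  rw [zero_mul] at hsmall
  refine (sub_eq_zero.1 (tendsto_nhds_unique (hU'.sub hU) (hsmall.congr' ?_))).symm
  filter_upwards [hz, hz', hdeg.eventually_ne_atTop 0] with i hi hi' hn
  rw [← natDegree_mul_logPotential_derivative_sub hi hi',
    inv_mul_cancel_left₀ (Nat.cast_ne_zero.2 hn)]

variable {p : ℕ → ℂ[X]} {ν₀ ν₁ : FiniteMeasure ℂ} {M : ℝ}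

lemma tendstoInMeasure_potential_rootMeasure {𝕜 : Type*} [RCLike 𝕜] {k : ℂ → 𝕜}
    (hk : LocallyIntegrable k volume) (hroots : ∀ i, ∀ z ∈ (p i).roots, z ∈ closedBall 0 M)
    (h : Tendsto (fun i => rootFiniteMeasure (p i)) atTop (𝓝 ν₀)) (R : ℝ) :
    TendstoInMeasure (volume.restrict (ball 0 R)) (fun i => potential k (rootMeasure (p i))) atTop
      (potential k ν₀) :=
  tendstoInMeasure_potential hk h (fun i => ae_rootMeasure (hroots i)) R

theorem eq_of_tendsto_rootFiniteMeasure_derivative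
    (hdeg : Tendsto (fun i => (p i).natDegree) atTop atTop)
    (hroots : ∀ i, ∀ z ∈ (p i).roots, z ∈ closedBall 0 M)
    (h₀ : Tendsto (fun i => rootFiniteMeasure (p i)) atTop (𝓝 ν₀))
    (h₁ : Tendsto (fun i => rootFiniteMeasure (p i).derivative) atTop (𝓝 ν₁))
    (hC : ∀ᵐ z, cauchyTransform ν₀ z ≠ 0) : ν₀ = ν₁ := by
  have hroots' i := mem_of_mem_roots_derivative (convex_closedBall 0 M) (hroots i)
  have hsupp₀ := ae_mem_of_tendsto_of_isClosed h₀ isClosed_closedBall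
    fun i => ae_rootMeasure (hroots i)
  have hsupp₁ := ae_mem_of_tendsto_of_isClosed h₁ isClosed_closedBall
    fun i => ae_rootMeasure (hroots' i)
  refine FiniteMeasure.toMeasure_injective (eq_of_logPotential_ae_eq hsupp₀ hsupp₁
    (ae_of_forall_ae_restrict_ball 0 fun R => ?_))
  obtain ⟨φ, hφ, hlim⟩ := (tendstoInMeasure_prodMk
    (tendstoInMeasure_potential_rootMeasure locallyIntegrable_inv hroots h₀ R)
    (tendstoInMeasure_prodMk
      (tendstoInMeasure_potential_rootMeasure locallyIntegrable_log_norm hroots h₀ R)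
      (tendstoInMeasure_potential_rootMeasure locallyIntegrable_log_norm hroots' h₁ R)
    )).exists_seq_tendsto_ae
  have hdegφ := hdeg.comp hφ.tendsto_atTop
  filter_upwards [hlim, ae_restrict_of_ae hC,
    ae_eventually_eval_ne_zero (eventually_ne_zero_of_tendsto_natDegree hdegφ),
    ae_eventually_eval_ne_zero
      (eventually_ne_zero_of_tendsto_natDegree (tendsto_natDegree_derivative hdegφ))]
    with z hz hCz hne hne'
  exact eq_of_tendsto_logPotential_of_tendsto_cauchyTransform hdegφ hne hne' hCz hz.fst_nhds
    hz.snd_nhds.fst_nhds hz.snd_nhds.snd_nhds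

end Derivative

section HeineStieltjes

lemma tendsto_eval_of_tendsto_coeff {R ι : Type*} [Semiring R] [TopologicalSpace R]
    [IsTopologicalSemiring R] {l : Filter ι} {p : ι → R[X]} {q : R[X]} {d : ℕ}
    (hp : ∀ᶠ i in l, (p i).natDegree ≤ d)
    (h : ∀ j, Tendsto (fun i => (p i).coeff j) l (𝓝 (q.coeff j))) (x : R) :
    Tendsto (fun i => (p i).eval x) l (𝓝 (q.eval x)) := by
  rw [eval_eq_sum_range' (Nat.lt_succ_of_le (le_max_right d q.natDegree))]
  refine (tendsto_finsetSum _ fun j _ => (h j).mul_const (x ^ j)).congr' ?_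
  filter_upwards [hp] with i hi
  exact (eval_eq_sum_range' (Nat.lt_succ_of_le (hi.trans (le_max_left _ _))) x).symm

lemma natDegree_le_of_mul_derivative_add_eq_zero {R : Type*} [CommRing R] [IsDomain R]
    {Q P S V : R[X]} (hS : S ≠ 0)
    (h : Q * derivative (derivative S) + P * derivative S + V * S = 0) :
    V.natDegree ≤ max Q.natDegree P.natDegree := by
  rcases eq_or_ne V 0 with rfl | hV
  · simp
  have hS' : (derivative S).natDegree ≤ S.natDegree := (natDegree_derivative_le S).trans (by omega)
  have hS'' : (derivative (derivative S)).natDegree ≤ S.natDegree :=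
    (natDegree_derivative_le _).trans (by omega)
  have hle : V.natDegree + S.natDegree ≤ max Q.natDegree P.natDegree + S.natDegree := by
    rw [← natDegree_mul hV hS, eq_neg_of_add_eq_zero_right h, natDegree_neg, ← max_add_add_right]
    refine (natDegree_add_le _ _).trans (max_le_max ?_ ?_) <;>
    exact natDegree_mul_le.trans (by gcongr)
  exact le_of_add_le_add_right hle

lemma eval_mul_cauchyTransform_mul_cauchyTransform {Q P S V : ℂ[X]}
    (h : Q * derivative (derivative S) + P * derivative S + V * S = 0) (hn : 2 ≤ S.natDegree)
    {z : ℂ} (hz : S.eval z ≠ 0) (hz' : (derivative S).eval z ≠ 0) :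
    Q.eval z * cauchyTransform (rootMeasure S) z *
        cauchyTransform (rootMeasure (derivative S)) z +
      P.eval z * cauchyTransform (rootMeasure S) z * ((derivative S).natDegree : ℂ)⁻¹ =
    -V.eval z / ((S.natDegree : ℂ) * ((S.natDegree : ℂ) - 1)) := by
  have hC₀ := natDegree_mul_cauchyTransform_rootMeasure hz
  have hC₁ := natDegree_mul_cauchyTransform_rootMeasure hz'
  have hcast : ((derivative S).natDegree : ℂ) = S.natDegree - 1 := by
    rw [natDegree_derivative, Nat.cast_pred (by omega)]
  have hn₀ : (S.natDegree : ℂ) ≠ 0 := Nat.cast_ne_zero.2 (by omega)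
  have hn₁ : (S.natDegree : ℂ) - 1 ≠ 0 := by
    rw [← hcast, natDegree_derivative]
    exact Nat.cast_ne_zero.2 (by omega)
  have hode := congrArg (eval z) h
  simp only [eval_add, eval_mul, eval_zero] at hode
  rw [hcast] at hC₁ ⊢
  rw [eq_div_iff hz] at hC₀
  rw [eq_div_iff hz'] at hC₁
  rw [← hC₁, ← hC₀] at hode
  field_simp
  refine mul_right_cancel₀ hz ?_
  linear_combination hode

variable {Q P : ℂ[X]} {S V : ℕ → ℂ[X]} {Vt : ℂ[X]}

theorem ae_eval_mul_cauchyTransform_mul_cauchyTransform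
    (hdeg : Tendsto (fun k => (S k).natDegree) atTop atTop)
    (heq : ∀ k, Q * derivative (derivative (S k)) + P * derivative (S k) + V k * S k = 0)
    {M : ℝ} (hroots : ∀ k, ∀ z ∈ (S k).roots, z ∈ closedBall 0 M) {ν₀ ν₁ : FiniteMeasure ℂ}
    (h₀ : Tendsto (fun k => rootFiniteMeasure (S k)) atTop (𝓝 ν₀))
    (h₁ : Tendsto (fun k => rootFiniteMeasure (derivative (S k))) atTop (𝓝 ν₁))
    (hV : ∀ z, Tendsto
      (fun k => -(V k).eval z / (((S k).natDegree : ℂ) * (((S k).natDegree : ℂ) - 1))) atTop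
      (𝓝 (Vt.eval z))) :
    ∀ᵐ z, Q.eval z * cauchyTransform ν₀ z * cauchyTransform ν₁ z = Vt.eval z := by
  have hroots' k := mem_of_mem_roots_derivative (convex_closedBall 0 M) (hroots k)
  refine ae_of_forall_ae_restrict_ball 0 fun R => ?_
  obtain ⟨φ, hφ, hlim⟩ := (tendstoInMeasure_prodMk
    (tendstoInMeasure_potential_rootMeasure locallyIntegrable_inv hroots h₀ R)
    (tendstoInMeasure_potential_rootMeasure locallyIntegrable_inv hroots' h₁ R)
    ).exists_seq_tendsto_ae
  have hdegφ := hdeg.comp hφ.tendsto_atTop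
  have hdegφ' := tendsto_natDegree_derivative hdegφ
  have hinv := (tendsto_inv_atTop_nhds_zero_nat (𝕜 := ℂ)).comp hdegφ'
  filter_upwards [hlim,
    ae_eventually_eval_ne_zero (eventually_ne_zero_of_tendsto_natDegree hdegφ),
    ae_eventually_eval_ne_zero (eventually_ne_zero_of_tendsto_natDegree hdegφ')]
    with z hz hne hne'
  have hleft := ((hz.fst_nhds.const_mul (Q.eval z)).mul hz.snd_nhds).add
    ((hz.fst_nhds.const_mul (P.eval z)).mul hinv)
  rw [mul_zero, add_zero] at hleft
  refine tendsto_nhds_unique hleft (((hV z).comp hφ.tendsto_atTop).congr' ?_)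
  filter_upwards [hne, hne', hdegφ.eventually_ge_atTop 2] with k hk hk' hn
  exact (eval_mul_cauchyTransform_mul_cauchyTransform (heq (φ k)) hn hk hk').symm

lemma tendsto_neg_eval_div (hS : ∀ᶠ k in atTop, S k ≠ 0)
    (heq : ∀ k, Q * derivative (derivative (S k)) + P * derivative (S k) + V k * S k = 0)
    {c : ℕ → ℂ} (hV : ∀ i, Tendsto (fun k => -(V k).coeff i / c k) atTop (𝓝 (Vt.coeff i)))
    (z : ℂ) : Tendsto (fun k => -(V k).eval z / c k) atTop (𝓝 (Vt.eval z)) := by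
  have hdeg : ∀ᶠ k in atTop,
      (C (-(c k)⁻¹) * V k).natDegree ≤ max Q.natDegree P.natDegree := hS.mono fun k hk =>
    (natDegree_C_mul_le _ _).trans (natDegree_le_of_mul_derivative_add_eq_zero hk (heq k))
  have h := tendsto_eval_of_tendsto_coeff (q := Vt) hdeg (fun i => ?_) z
  · refine h.congr fun k => ?_
    rw [eval_mul, eval_C, neg_mul, neg_div, div_eq_inv_mul]
  · refine (hV i).congr fun k => ?_
    rw [coeff_C_mul, neg_mul, neg_div, div_eq_inv_mul]

end HeineStieltjes

theorem stmt9_general (Q P : ℂ[X]) (S V : ℕ → ℂ[X])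
    (hdeg : Tendsto (fun k => (S k).natDegree) atTop atTop)
    (heq : ∀ k,
      Q * (derivative (derivative (S k))) + P * (derivative (S k)) + V k * S k = 0)
    (K : Set ℂ) (hK : Bornology.IsBounded K) (hroots : ∀ k, ∀ z ∈ (S k).roots, z ∈ K)
    (ν0 ν1 ν2 : Measure ℂ)
    (h0 : ∀ f : BoundedContinuousFunction ℂ ℝ,
      Tendsto (fun k => ∫ z, f z ∂(rootMeasure (S k))) atTop (𝓝 (∫ z, f z ∂ν0)))
    (h1 : ∀ f : BoundedContinuousFunction ℂ ℝ,
      Tendsto (fun k => ∫ z, f z ∂(rootMeasure (derivative (S k)))) atTop (𝓝 (∫ z, f z ∂ν1)))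
    (h2 : ∀ f : BoundedContinuousFunction ℂ ℝ,
      Tendsto (fun k => ∫ z, f z ∂(rootMeasure (derivative (derivative (S k))))) atTop
        (𝓝 (∫ z, f z ∂ν2)))
    (Vt : ℂ[X]) (hVt : Vt ≠ 0)
    (hVconv : ∀ i, Tendsto
      (fun k => -((V k).coeff i) / (((S k).natDegree : ℂ) * (((S k).natDegree : ℂ) - 1))) atTop
      (𝓝 (Vt.coeff i))) :
    ν0 = ν1 ∧ ν1 = ν2 ∧ ∀ᵐ z, (∫ ξ, (z - ξ)⁻¹ ∂ν0) ^ 2 = Vt.eval z / Q.eval z := by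
  have hdeg' := tendsto_natDegree_derivative hdeg
  obtain ⟨M, hM⟩ := hK.subset_closedBall 0
  have hrootsM k : ∀ z ∈ (S k).roots, z ∈ closedBall 0 M := fun z hz => hM (hroots k z hz)
  have hrootsM' k := mem_of_mem_roots_derivative (convex_closedBall 0 M) (hrootsM k)
  obtain ⟨ν₀, rfl, hν₀⟩ := exists_tendsto_rootFiniteMeasure hdeg h0
  obtain ⟨ν₁, rfl, hν₁⟩ := exists_tendsto_rootFiniteMeasure hdeg' h1
  obtain ⟨ν₂, rfl, hν₂⟩ :=
    exists_tendsto_rootFiniteMeasure (tendsto_natDegree_derivative hdeg') h2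
  have hprod := ae_eval_mul_cauchyTransform_mul_cauchyTransform hdeg heq hrootsM hν₀ hν₁
    (tendsto_neg_eval_div (eventually_ne_zero_of_tendsto_natDegree hdeg) heq hVconv)
  have hne : ∀ᵐ z, Q.eval z * cauchyTransform ν₀ z * cauchyTransform ν₁ z ≠ 0 := by
    filter_upwards [hprod, ae_eval_ne_zero hVt] with z hz hVz
    rwa [hz]
  obtain rfl := eq_of_tendsto_rootFiniteMeasure_derivative hdeg hrootsM hν₀ hν₁
    (hne.mono fun z hz => right_ne_zero_of_mul (left_ne_zero_of_mul hz))
  obtain rfl := eq_of_tendsto_rootFiniteMeasure_derivative hdeg' hrootsM' hν₁ hν₂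
    (hne.mono fun z hz => right_ne_zero_of_mul hz)
  refine ⟨rfl, rfl, ?_⟩
  filter_upwards [hprod, hne] with z hz hz0
  rw [← hz, eq_div_iff (left_ne_zero_of_mul (left_ne_zero_of_mul hz0))]
  simp only [potential]
  ring

/-- Lemma 7: along an infinite set of degrees `n k`, if `Q Sₖ'' + P Sₖ' + Vₖ Sₖ = 0` with
`deg Sₖ = n k`, all roots of the `Sₖ` in a fixed compact set, the root-counting measures
of `Sₖ, Sₖ', Sₖ''` converging weakly to `ν⁰, ν¹, ν²`, and `-Vₖ/(nₖ(nₖ-1))` converging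
coefficientwise to a monic linear `Ṽ`, then `ν⁰ = ν¹ = ν²` and the Cauchy transform `C`
of `ν⁰` satisfies `C(z)² = Ṽ(z)/Q(z)` a.e. -/
theorem stmt9 (Q P : Polynomial ℂ) (hQmonic : Q.Monic) (hQdeg : Q.natDegree = 3)
    (hP : P.degree ≤ 2)
    (n : ℕ → ℕ) (hn : StrictMono n) (hnpos : ∀ k, 0 < n k)
    (S V : ℕ → Polynomial ℂ)
    (hS : ∀ k, (S k).natDegree = n k)
    (hV : ∀ k, (V k).degree ≤ 1)
    (heq : ∀ k,
      Q * (derivative (derivative (S k))) + P * (derivative (S k)) + V k * S k = 0)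
    (K : Set ℂ) (hK : IsCompact K) (hroots : ∀ k, ∀ z ∈ (S k).roots, z ∈ K)
    (ν0 ν1 ν2 : Measure ℂ)
    (h0 : ∀ f : BoundedContinuousFunction ℂ ℝ,
      Tendsto (fun k => ∫ z, f z ∂(rootMeasure (S k))) atTop (nhds (∫ z, f z ∂ν0)))
    (h1 : ∀ f : BoundedContinuousFunction ℂ ℝ,
      Tendsto (fun k => ∫ z, f z ∂(rootMeasure (derivative (S k)))) atTop
        (nhds (∫ z, f z ∂ν1)))
    (h2 : ∀ f : BoundedContinuousFunction ℂ ℝ,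
      Tendsto (fun k => ∫ z, f z ∂(rootMeasure (derivative (derivative (S k))))) atTop
        (nhds (∫ z, f z ∂ν2)))
    (Vt : Polynomial ℂ) (hVtmonic : Vt.Monic) (hVtdeg : Vt.natDegree = 1)
    (hVconv : ∀ i : ℕ,
      Tendsto (fun k => -((V k).coeff i) / ((n k : ℂ) * ((n k : ℂ) - 1))) atTop
        (nhds (Vt.coeff i))) :
    ν0 = ν1 ∧ ν1 = ν2 ∧
    ∀ᵐ z ∂(MeasureTheory.volume : Measure ℂ),
      (∫ ξ, (z - ξ)⁻¹ ∂ν0) ^ 2 = Vt.eval z / Q.eval z := by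
  exact stmt9_general Q P S V (by simpa only [hS] using hn.tendsto_atTop) heq K hK.isBounded hroots
    ν0 ν1 ν2 h0 h1 h2 Vt hVtmonic.ne_zero (by simpa only [hS] using hVconv)
end

section
/- Let a_j < a_k be real numbers and a_i ∈ ℂ with Im a_i > 0; set Q(z) = (z−a_i)(z−a_j)(z−a_k) and let Δ be the closed triangle (the convex hull of {a_i, a_j, a_k} in ℂ ≅ ℝ²). Say that a point b ∈ ℂ satisfies condition (R) if there exists a continuous integrable function g : (a_j, a_k) → ℂ with g(t)² = (b−t)/Q(t) for all t ∈ (a_j, a_k) and ∫_{a_j}^{a_k} g(t) dt ∈ ℝ. Then for every b ∈ Δ there exists exactly one point b' ∈ ℂ with Im b' = Im b satisfying (R), and this b' lies in Δ. -/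
open MeasureTheory

/-- Condition (R): there is a continuous integrable branch `g` of the square root of
`(b - t)/Q(t)` on the interval `(a_j, a_k)` (with `Q(z) = (z-a_i)(z-a_j)(z-a_k)`) whose
integral over the interval is real. -/
def condR (aj ak : ℝ) (ai : ℂ) (b : ℂ) : Prop :=
  ∃ g : ℝ → ℂ, ContinuousOn g (Set.Ioo aj ak) ∧
    IntegrableOn g (Set.Ioo aj ak) ∧
    (∀ t ∈ Set.Ioo aj ak, (g t) ^ 2 =
      (b - (t : ℂ)) / (((t : ℂ) - ai) * ((t : ℂ) - (aj : ℂ)) * ((t : ℂ) - (ak : ℂ)))) ∧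
    (∫ t in Set.Ioo aj ak, g t).im = 0

/-!
Write `√` for the principal square root of a complex number, which maps the closed upper half-plane
continuously into the closed first quadrant. Up to sign, the only continuous branch is
`√(b - t) / √(a_i - t) / √((t - a_j) (a_k - t))`, except when `b` is an interior point of the
interval, where the sign may change at `b`.

For `z ≠ 0`, `Im z ≥ 0` and `Im w > 0` the quotient `√z / √w` has positive real part, so its
imaginary part has the sign of `Im (z / w)`. Along the segment from a base point `x` to `a_i` this
makes the branch negative to one side of `x` and positive to the other. Taking `x = a_j` and
`x = a_k` gives the two signs needed to find a zero of the imaginary part of the integral by the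
intermediate value theorem; taking `b = x` inside the interval shows that changing the sign at `b`
makes the imaginary part of the integrand of constant sign, hence the integral not real. Uniqueness
holds because the imaginary part of `√z / √w` strictly decreases as `z` moves to the right.
-/

open Set

section PrincipalSqrt

variable {z z' w : ℂ}

theorem csqrt_sq (z : ℂ) : z.sqrt ^ 2 = z :=
  Complex.cpow_ofNat_inv_pow z 2

theorem csqrt_ne_zero (hz : z ≠ 0) : z.sqrt ≠ 0 := fun h =>
  hz (by rw [← csqrt_sq z, h, zero_pow two_ne_zero])

theorem csqrt_re_nonneg (z : ℂ) : 0 ≤ z.sqrt.re :=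
  (Real.sqrt_nonneg _).trans_eq (Complex.cpow_inv_two_re z).symm

theorem csqrt_im_nonneg (hz : 0 ≤ z.im) : 0 ≤ z.sqrt.im :=
  (Real.sqrt_nonneg _).trans_eq (Complex.cpow_inv_two_im_eq_sqrt hz).symm

theorem csqrt_re_mul_im (z : ℂ) : 2 * (z.sqrt.re * z.sqrt.im) = z.im := by
  conv_rhs => rw [← csqrt_sq z, sq, Complex.mul_im]
  ring

theorem csqrt_re_pos (hz : 0 < z.im) : 0 < z.sqrt.re :=
  (csqrt_re_nonneg z).lt_of_ne' fun h => hz.ne' (by rw [← csqrt_re_mul_im z, h]; simp)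

theorem csqrt_im_pos (hz : 0 < z.im) : 0 < z.sqrt.im :=
  (csqrt_im_nonneg hz.le).lt_of_ne' fun h => hz.ne' (by rw [← csqrt_re_mul_im z, h]; simp)

theorem continuousOn_csqrt : ContinuousOn Complex.sqrt {z | 0 ≤ z.im} := by
  have hformula : Continuous fun z : ℂ =>
      (√((‖z‖ + z.re) / 2) : ℂ) + (√((‖z‖ - z.re) / 2) : ℂ) * Complex.I := by
    fun_prop
  refine hformula.continuousOn.congr fun z (hz : 0 ≤ z.im) => ?_
  simp [Complex.sqrt_eq_real_add_ite, hz]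

theorem re_div_pos_of_first_quadrant (hz : z ≠ 0) (hzre : 0 ≤ z.re) (hzim : 0 ≤ z.im)
    (hwre : 0 < w.re) (hwim : 0 < w.im) : 0 < (z / w).re := by
  have hw : 0 < Complex.normSq w := Complex.normSq_pos.2 fun h => by simp [h] at hwre
  rw [Complex.div_re, ← add_div]
  refine div_pos ?_ hw
  rcases hzre.lt_or_eq with h | h
  · positivity
  · have : 0 < z.im := hzim.lt_of_ne' fun h' => hz (Complex.ext h.symm h')
    positivity

theorem im_mul_pos_of_first_quadrant (hz : z ≠ 0) (hzre : 0 ≤ z.re) (hzim : 0 ≤ z.im)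
    (hwre : 0 < w.re) (hwim : 0 < w.im) : 0 < (z * w).im := by
  rw [Complex.mul_im]
  rcases hzre.lt_or_eq with h | h
  · positivity
  · have : 0 < z.im := hzim.lt_of_ne' fun h' => hz (Complex.ext h.symm h')
    positivity

theorem sign_im_csqrt_div_csqrt (hz : 0 ≤ z.im) (hw : 0 < w.im) :
    SignType.sign (z.sqrt / w.sqrt).im = SignType.sign (z / w).im := by
  rcases eq_or_ne z 0 with rfl | hz0
  · simp
  have hre : 0 < (z.sqrt / w.sqrt).re :=
    re_div_pos_of_first_quadrant (csqrt_ne_zero hz0) (csqrt_re_nonneg z) (csqrt_im_nonneg hz)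
      (csqrt_re_pos hw) (csqrt_im_pos hw)
  have him : (z / w).im = 2 * (z.sqrt / w.sqrt).re * (z.sqrt / w.sqrt).im := by
    rw [← csqrt_sq z, ← csqrt_sq w, ← div_pow, csqrt_sq, csqrt_sq, sq, Complex.mul_im]
    ring
  rw [him, sign_mul, sign_pos (mul_pos two_pos hre), one_mul]

theorem im_csqrt_div_csqrt_lt (hz : 0 ≤ z.im) (hw : 0 < w.im) (him : z'.im = z.im)
    (hre : z.re < z'.re) : (z'.sqrt / w.sqrt).im < (z.sqrt / w.sqrt).im := by
  have hsub : z' - z = ((z'.re - z.re : ℝ) : ℂ) := by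
    apply Complex.ext <;> simp [him]
  have hfactor : (z'.sqrt - z.sqrt) * (z'.sqrt + z.sqrt) = ((z'.re - z.re : ℝ) : ℂ) := by
    rw [← hsub]
    linear_combination csqrt_sq z' - csqrt_sq z
  have hsum : z'.sqrt + z.sqrt ≠ 0 := fun h => by
    rw [h, mul_zero, eq_comm, Complex.ofReal_eq_zero] at hfactor
    linarith
  have hw0 : w.sqrt ≠ 0 := csqrt_ne_zero fun h => by simp [h] at hw
  have hprod : 0 < ((z'.sqrt + z.sqrt) * w.sqrt).im :=
    im_mul_pos_of_first_quadrant hsum (add_nonneg (csqrt_re_nonneg z') (csqrt_re_nonneg z))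
      (add_nonneg (csqrt_im_nonneg (him ▸ hz)) (csqrt_im_nonneg hz)) (csqrt_re_pos hw)
      (csqrt_im_pos hw)
  have hdiff : z'.sqrt / w.sqrt - z.sqrt / w.sqrt =
      ((z'.re - z.re : ℝ) : ℂ) * ((z'.sqrt + z.sqrt) * w.sqrt)⁻¹ := by
    rw [← hfactor]
    field_simp
  rw [← sub_neg, ← Complex.sub_im, hdiff, Complex.im_ofReal_mul, Complex.inv_im]
  exact mul_neg_of_pos_of_neg (sub_pos.2 hre)
    (div_neg_of_neg_of_pos (neg_neg_of_pos hprod) (Complex.normSq_pos.2 (mul_ne_zero hsum hw0)))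

end PrincipalSqrt

section Integrals

theorem intervalIntegrable_inv_sqrt_sub_mul_sub {p q : ℝ} (hpq : p < q) :
    IntervalIntegrable (fun t : ℝ => (√((t - p) * (q - t)))⁻¹) volume p q := by
  have hL : 0 < q - p := sub_pos.2 hpq
  -- The integrand is the derivative of `arcsin` of the affine map from `[p, q]` onto `[-1, 1]`.
  refine intervalIntegral.intervalIntegrable_deriv_of_nonneg
    (g := fun t => Real.arcsin ((2 * t - p - q) / (q - p))) (by fun_prop) ?_
    fun t _ => by positivity
  rw [min_eq_left hpq.le, max_eq_right hpq.le]
  intro t ⟨hpt, htq⟩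
  have hlower : (2 * t - p - q) / (q - p) ≠ -1 := by
    rw [ne_eq, div_eq_iff hL.ne']
    intro h
    linarith
  have hupper : (2 * t - p - q) / (q - p) ≠ 1 := by
    rw [ne_eq, div_eq_iff hL.ne']
    intro h
    linarith
  have hinner : HasDerivAt (fun t : ℝ => (2 * t - p - q) / (q - p)) (2 / (q - p)) t := by
    simpa using ((((hasDerivAt_id t).const_mul 2).sub_const p).sub_const q).div_const (q - p)
  have hsqrt : √(1 - ((2 * t - p - q) / (q - p)) ^ 2) = 2 / (q - p) * √((t - p) * (q - t)) := by
    rw [← Real.sqrt_sq (div_pos two_pos hL).le, ← Real.sqrt_mul (sq_nonneg _)]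
    congr 1
    field_simp
    ring
  refine ((Real.hasDerivAt_arcsin hlower hupper).comp t hinner).congr_deriv ?_
  rw [hsqrt]
  field_simp

theorem intervalIntegrable_ofReal_inv_sqrt_sub_mul_sub {p q : ℝ} (hpq : p < q) :
    IntervalIntegrable (fun t : ℝ => (((√((t - p) * (q - t)))⁻¹ : ℝ) : ℂ)) volume p q :=
  have h := intervalIntegrable_inv_sqrt_sub_mul_sub hpq
  ⟨h.1.ofReal, h.2.ofReal⟩

theorem continuousOn_intervalIntegral_mul {X A : Type*} [TopologicalSpace X]
    [FirstCountableTopology X] [NormedRing A] [NormedSpace ℝ A] {K : X → ℝ → A} {f : ℝ → A}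
    {S : Set X} {p q : ℝ} (hS : IsCompact S)
    (hK : ContinuousOn (Function.uncurry K) (S ×ˢ uIcc p q))
    (hf : IntervalIntegrable f volume p q) :
    ContinuousOn (fun x => ∫ t in p..q, K x t * f t) S := by
  obtain ⟨C, hC⟩ := (hS.prod isCompact_uIcc).exists_bound_of_continuousOn hK
  have hKx : ∀ x ∈ S, ContinuousOn (K x) (uIcc p q) := fun x hx =>
    hK.comp (Continuous.prodMk_right x).continuousOn fun t ht => ⟨hx, ht⟩
  have hKt : ∀ t ∈ uIcc p q, ContinuousOn (fun x => K x t) S := fun t ht =>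
    hK.comp (Continuous.prodMk_left t).continuousOn fun x hx => ⟨hx, ht⟩
  refine fun x₀ hx₀ => intervalIntegral.continuousWithinAt_of_dominated_interval
    (bound := fun t => C * ‖f t‖) ?_ ?_ (hf.norm.const_mul C) (.of_forall fun t ht => ?_)
  · filter_upwards [self_mem_nhdsWithin] with x hx
    exact (hf.continuousOn_mul (hKx x hx)).def'.aestronglyMeasurable
  · filter_upwards [self_mem_nhdsWithin] with x hx
    exact .of_forall fun t ht => (norm_mul_le _ _).trans
      (mul_le_mul_of_nonneg_right (hC (x, t) ⟨hx, uIoc_subset_uIcc ht⟩) (norm_nonneg _))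
  · exact (hKt t (uIoc_subset_uIcc ht) x₀ hx₀).mul_const _

theorem sign_im_intervalIntegral {f : ℝ → ℂ} {p q : ℝ} {σ : SignType} (hpq : p < q)
    (hf : IntervalIntegrable f volume p q)
    (hσ : ∀ t ∈ Ioo p q, SignType.sign (f t).im = σ) :
    SignType.sign (∫ t in p..q, f t).im = σ := by
  have hfim : IntervalIntegrable (fun t => (f t).im) volume p q := ⟨hf.1.im, hf.2.im⟩
  have him : ∫ t in p..q, (f t).im = (∫ t in p..q, f t).im :=
    intervalIntegral.intervalIntegral_im hf
  rw [← him]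
  rcases σ.trichotomy with rfl | rfl | rfl
  · rw [sign_eq_neg_one_iff, ← neg_pos, ← intervalIntegral.integral_neg]
    exact intervalIntegral.intervalIntegral_pos_of_pos_on hfim.neg
      (fun t ht => neg_pos.2 (sign_eq_neg_one_iff.1 (hσ t ht))) hpq
  · rw [sign_eq_zero_iff, intervalIntegral.integral_of_le hpq.le, integral_Ioc_eq_integral_Ioo]
    exact setIntegral_eq_zero_of_forall_eq_zero fun t ht => sign_eq_zero_iff.1 (hσ t ht)
  · rw [sign_eq_one_iff]
    exact intervalIntegral.intervalIntegral_pos_of_pos_on hfim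
      (fun t ht => sign_eq_one_iff.1 (hσ t ht)) hpq

theorem intervalIntegral_eq_or_eq_neg_of_sq_eq {g s : ℝ → ℂ} {p q : ℝ} (hpq : p ≤ q)
    (hg : ContinuousOn g (Ioo p q)) (hs : ContinuousOn s (Ioo p q))
    (hsq : ∀ t ∈ Ioo p q, g t ^ 2 = s t ^ 2) (hne : ∀ t ∈ Ioo p q, s t ≠ 0) :
    ∫ t in p..q, g t = ∫ t in p..q, s t ∨ ∫ t in p..q, g t = -∫ t in p..q, s t := by
  simp only [intervalIntegral.integral_of_le hpq, integral_Ioc_eq_integral_Ioo, ← integral_neg]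
  exact (isPreconnected_Ioo.eq_or_eq_neg_of_sq_eq hg hs hsq fun {t} => hne t).imp
    (setIntegral_congr_fun measurableSet_Ioo) (setIntegral_congr_fun measurableSet_Ioo)

end Integrals

/-- The branch of the square root of `(b - t) / Q(t)` on `(aj, ak)` obtained from the principal
square roots of `b - t`, of `ai - t` and of the positive number `(t - aj) (ak - t)`. -/
noncomputable def sqrtBranch (aj ak : ℝ) (ai b : ℂ) (t : ℝ) : ℂ :=
  (b - t).sqrt / (ai - t).sqrt * ((√((t - aj) * (ak - t)))⁻¹ : ℝ)

/-- The integral of `sqrtBranch` over the interval, whose being real turns out to express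
condition (R). -/
noncomputable def sqrtPeriod (aj ak : ℝ) (ai b : ℂ) : ℂ :=
  ∫ t in aj..ak, sqrtBranch aj ak ai b t

section Branch

variable {aj ak : ℝ} {ai b c : ℂ} {t x u : ℝ}

theorem inv_sqrt_sub_mul_sub_pos (ht : t ∈ Ioo aj ak) : 0 < (√((t - aj) * (ak - t)))⁻¹ :=
  inv_pos.2 (Real.sqrt_pos.2 (mul_pos (sub_pos.2 ht.1) (sub_pos.2 ht.2)))

theorem sqrtBranch_sq (ht : t ∈ Ioo aj ak) :
    sqrtBranch aj ak ai b t ^ 2 = (b - t) / ((t - ai) * (t - aj) * (t - ak)) := by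
  have hweight : (((√((t - aj) * (ak - t)))⁻¹ : ℝ) : ℂ) ^ 2 = (((t : ℂ) - aj) * (ak - t))⁻¹ := by
    rw [← Complex.ofReal_pow, inv_pow,
      Real.sq_sqrt (mul_pos (sub_pos.2 ht.1) (sub_pos.2 ht.2)).le]
    push_cast
    rfl
  rw [sqrtBranch, mul_pow, div_pow, csqrt_sq, csqrt_sq, hweight, ← div_eq_mul_inv, div_div]
  congr 1
  ring

theorem sqrtBranch_ne_zero (hai : 0 < ai.im) (ht : t ∈ Ioo aj ak) (hbt : b ≠ t) :
    sqrtBranch aj ak ai b t ≠ 0 := by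
  have hait : ai - t ≠ 0 := fun h => by simpa [hai.ne'] using congrArg Complex.im h
  exact mul_ne_zero (div_ne_zero (csqrt_ne_zero (sub_ne_zero.2 hbt)) (csqrt_ne_zero hait))
    (Complex.ofReal_ne_zero.2 (inv_sqrt_sub_mul_sub_pos ht).ne')

theorem im_sqrtBranch (aj ak : ℝ) (ai b : ℂ) (t : ℝ) :
    (sqrtBranch aj ak ai b t).im =
      ((b - t).sqrt / (ai - t).sqrt).im * (√((t - aj) * (ak - t)))⁻¹ :=
  Complex.im_mul_ofReal _ _

theorem im_sqrtBranch_lt (hai : 0 < ai.im) (hb : 0 ≤ b.im) (him : c.im = b.im)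
    (hre : b.re < c.re) (ht : t ∈ Ioo aj ak) :
    (sqrtBranch aj ak ai c t).im < (sqrtBranch aj ak ai b t).im := by
  rw [im_sqrtBranch, im_sqrtBranch]
  exact mul_lt_mul_of_pos_right
    (im_csqrt_div_csqrt_lt (by simpa using hb) (by simpa using hai) (by simpa using him)
      (by simpa using hre))
    (inv_sqrt_sub_mul_sub_pos ht)

theorem lineMap_ofReal_im (ai : ℂ) (x u : ℝ) :
    (AffineMap.lineMap (x : ℂ) ai u).im = u * ai.im := by
  simp [AffineMap.lineMap_apply]

-- `x + u (ai - x) - t = u (ai - t) + (1 - u) (x - t)`, so only the second term contributes to the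
-- imaginary part after division by `ai - t`.
theorem im_lineMap_sub_div (hai : 0 < ai.im) (x u t : ℝ) :
    ((AffineMap.lineMap (x : ℂ) ai u - t) / (ai - t)).im =
      (1 - u) * (t - x) * (ai.im / Complex.normSq (ai - t)) := by
  have hait : ai - t ≠ 0 := fun h => by simpa [hai.ne'] using congrArg Complex.im h
  have hsplit : (AffineMap.lineMap (x : ℂ) ai u - t) / (ai - t) =
      (u : ℂ) + (((1 - u) * (x - t) : ℝ) : ℂ) * (ai - t)⁻¹ := by
    rw [AffineMap.lineMap_apply]
    simp only [vsub_eq_sub, vadd_eq_add, Complex.real_smul]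
    push_cast
    field_simp
    ring
  rw [hsplit, Complex.add_im, Complex.im_ofReal_mul, Complex.inv_im, Complex.ofReal_im,
    Complex.sub_im, Complex.ofReal_im]
  ring

theorem sign_im_sqrtBranch_lineMap (hai : 0 < ai.im) (hu : 0 ≤ u) (ht : t ∈ Ioo aj ak) :
    SignType.sign (sqrtBranch aj ak ai (AffineMap.lineMap (x : ℂ) ai u) t).im =
      SignType.sign ((1 - u) * (t - x)) := by
  have hb : 0 ≤ (AffineMap.lineMap (x : ℂ) ai u - t).im := by
    simpa [lineMap_ofReal_im] using mul_nonneg hu hai.le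
  have hait : 0 < (ai - t).im := by simpa using hai
  have hnorm : 0 < Complex.normSq (ai - t) := Complex.normSq_pos.2 fun h => by simp [h] at hait
  rw [im_sqrtBranch, sign_mul, sign_pos (inv_sqrt_sub_mul_sub_pos ht), mul_one,
    sign_im_csqrt_div_csqrt hb hait, im_lineMap_sub_div hai, sign_mul,
    sign_pos (div_pos hai hnorm), mul_one]

theorem sign_im_sqrtBranch_ofReal (hai : 0 < ai.im) (ht : t ∈ Ioo aj ak) :
    SignType.sign (sqrtBranch aj ak ai x t).im = SignType.sign (t - x) := by
  simpa using sign_im_sqrtBranch_lineMap (x := x) hai le_rfl ht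

theorem continuousOn_csqrt_sub_div_csqrt_sub (hai : 0 < ai.im) :
    ContinuousOn (fun p : ℂ × ℝ => (p.1 - p.2).sqrt / (ai - p.2).sqrt)
      ({b | 0 ≤ b.im} ×ˢ univ) := by
  refine ContinuousOn.div
    (continuousOn_csqrt.comp (by fun_prop) fun p hp => ?_)
    (continuousOn_csqrt.comp (by fun_prop) fun p _ => ?_) fun p _ => csqrt_ne_zero fun h => ?_
  · simpa using hp.1
  · simpa using hai.le
  · simpa [hai.ne'] using congrArg Complex.im h

theorem continuous_csqrt_sub_div_csqrt_sub (hai : 0 < ai.im) (hb : 0 ≤ b.im) :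
    Continuous fun t : ℝ => (b - t).sqrt / (ai - t).sqrt :=
  (continuousOn_csqrt_sub_div_csqrt_sub hai).comp_continuous (Continuous.prodMk_right b)
    fun _ => ⟨hb, mem_univ _⟩

theorem continuousOn_sqrtBranch (hai : 0 < ai.im) (hb : 0 ≤ b.im) :
    ContinuousOn (sqrtBranch aj ak ai b) (Ioo aj ak) := by
  refine (continuous_csqrt_sub_div_csqrt_sub hai hb).continuousOn.mul
    (Complex.continuous_ofReal.comp_continuousOn (ContinuousOn.inv₀ (by fun_prop) fun t ht => ?_))
  exact (inv_pos.1 (inv_sqrt_sub_mul_sub_pos ht)).ne'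

theorem intervalIntegrable_sqrtBranch (hjk : aj < ak) (hai : 0 < ai.im) (hb : 0 ≤ b.im) :
    IntervalIntegrable (sqrtBranch aj ak ai b) volume aj ak :=
  (intervalIntegrable_ofReal_inv_sqrt_sub_mul_sub hjk).continuousOn_mul
    (continuous_csqrt_sub_div_csqrt_sub hai hb).continuousOn

theorem im_sqrtPeriod_lt (hjk : aj < ak) (hai : 0 < ai.im) (hb : 0 ≤ b.im) (him : c.im = b.im)
    (hre : b.re < c.re) : (sqrtPeriod aj ak ai c).im < (sqrtPeriod aj ak ai b).im := by
  have hbint := intervalIntegrable_sqrtBranch hjk hai hb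
  have hcint := intervalIntegrable_sqrtBranch hjk hai (him.symm ▸ hb)
  rw [← sub_pos, ← Complex.sub_im, sqrtPeriod, sqrtPeriod,
    ← intervalIntegral.integral_sub hbint hcint, ← sign_eq_one_iff]
  refine sign_im_intervalIntegral hjk (hbint.sub hcint) fun t ht => ?_
  rw [sign_eq_one_iff, Complex.sub_im, sub_pos]
  exact im_sqrtBranch_lt hai hb him hre ht

theorem eq_of_im_sqrtPeriod_eq (hjk : aj < ak) (hai : 0 < ai.im) (hb : 0 ≤ b.im)
    (him : c.im = b.im) (h : (sqrtPeriod aj ak ai c).im = (sqrtPeriod aj ak ai b).im) :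
    c = b := by
  refine Complex.ext ?_ him
  rcases lt_trichotomy c.re b.re with hlt | heq | hgt
  · exact absurd h (im_sqrtPeriod_lt hjk hai (him.symm ▸ hb) him.symm hlt).ne'
  · exact heq
  · exact absurd h (im_sqrtPeriod_lt hjk hai hb him hgt).ne

theorem im_integral_sqrtBranch_ofReal_neg (hai : 0 < ai.im) (hx : x ∈ Ioo aj ak) :
    (∫ t in aj..x, sqrtBranch aj ak ai x t).im < 0 := by
  have hintegrable := intervalIntegrable_sqrtBranch (b := x) (hx.1.trans hx.2) hai (by simp)
  rw [← sign_eq_neg_one_iff]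
  refine sign_im_intervalIntegral hx.1 (hintegrable.mono_set ?_) fun t ht => ?_
  · exact uIcc_subset_uIcc_left (mem_uIcc_of_le hx.1.le hx.2.le)
  · rw [sign_im_sqrtBranch_ofReal hai ⟨ht.1, ht.2.trans hx.2⟩, sign_neg (sub_neg.2 ht.2)]

theorem im_integral_sqrtBranch_ofReal_pos (hai : 0 < ai.im) (hx : x ∈ Ioo aj ak) :
    0 < (∫ t in x..ak, sqrtBranch aj ak ai x t).im := by
  have hintegrable := intervalIntegrable_sqrtBranch (b := x) (hx.1.trans hx.2) hai (by simp)
  rw [← sign_eq_one_iff]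
  refine sign_im_intervalIntegral hx.2 (hintegrable.mono_set ?_) fun t ht => ?_
  · exact uIcc_subset_uIcc_right (mem_uIcc_of_le hx.1.le hx.2.le)
  · rw [sign_im_sqrtBranch_ofReal hai ⟨hx.1.trans ht.1, ht.2⟩, sign_pos (sub_pos.2 ht.1)]

theorem integral_eq_or_eq_neg_integral_sqrtBranch {g : ℝ → ℂ} {p q : ℝ} (hai : 0 < ai.im)
    (hb : 0 ≤ b.im) (hpq : p ≤ q) (hsub : Ioo p q ⊆ Ioo aj ak)
    (hg : ContinuousOn g (Ioo aj ak))
    (hsq : ∀ t ∈ Ioo aj ak, g t ^ 2 = (b - t) / ((t - ai) * (t - aj) * (t - ak)))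
    (hne : ∀ t ∈ Ioo p q, b ≠ t) :
    ∫ t in p..q, g t = ∫ t in p..q, sqrtBranch aj ak ai b t ∨
      ∫ t in p..q, g t = -∫ t in p..q, sqrtBranch aj ak ai b t :=
  intervalIntegral_eq_or_eq_neg_of_sq_eq hpq (hg.mono hsub)
    ((continuousOn_sqrtBranch hai hb).mono hsub)
    (fun t ht => (hsq t (hsub ht)).trans (sqrtBranch_sq (hsub ht)).symm)
    fun t ht => sqrtBranch_ne_zero hai (hsub ht) (hne t ht)

theorem im_sqrtPeriod_eq_zero_of_condR (hjk : aj < ak) (hai : 0 < ai.im) (hb : 0 ≤ b.im)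
    (hR : condR aj ak ai b) : (sqrtPeriod aj ak ai b).im = 0 := by
  obtain ⟨g, hg, hgint, hsq, hreal⟩ := hR
  rw [← integral_Ioc_eq_integral_Ioo, ← intervalIntegral.integral_of_le hjk.le] at hreal
  by_cases hne : ∀ t ∈ Ioo aj ak, b ≠ (t : ℂ)
  · rcases integral_eq_or_eq_neg_integral_sqrtBranch hai hb hjk.le subset_rfl hg hsq hne with h | h
    · rwa [h] at hreal
    · rwa [h, Complex.neg_im, neg_eq_zero] at hreal
  push Not at hne
  obtain ⟨x, hx, rfl⟩ := hne
  have hleft := integral_eq_or_eq_neg_integral_sqrtBranch hai hb hx.1.le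
    (Ioo_subset_Ioo_right hx.2.le) hg hsq fun t ht h => ht.2.ne' (Complex.ofReal_injective h)
  have hright := integral_eq_or_eq_neg_integral_sqrtBranch hai hb hx.2.le
    (Ioo_subset_Ioo_left hx.1.le) hg hsq fun t ht h => ht.1.ne (Complex.ofReal_injective h)
  have himleft := hleft.imp (congrArg Complex.im) (congrArg Complex.im)
  have himright := hright.imp (congrArg Complex.im) (congrArg Complex.im)
  rw [Complex.neg_im] at himleft himright
  have hleft_neg := im_integral_sqrtBranch_ofReal_neg hai hx
  have hright_pos := im_integral_sqrtBranch_ofReal_pos hai hx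
  have hx' : x ∈ uIcc aj ak := mem_uIcc_of_le hx.1.le hx.2.le
  have hsplit : ∀ {f : ℝ → ℂ}, IntervalIntegrable f volume aj ak →
      (∫ t in aj..ak, f t).im = (∫ t in aj..x, f t).im + (∫ t in x..ak, f t).im := fun hf => by
    rw [← Complex.add_im, intervalIntegral.integral_add_adjacent_intervals
      (hf.mono_set (uIcc_subset_uIcc_left hx')) (hf.mono_set (uIcc_subset_uIcc_right hx'))]
  rw [hsplit ((intervalIntegrable_iff_integrableOn_Ioo_of_le hjk.le).2 hgint)] at hreal
  rw [sqrtPeriod, hsplit (intervalIntegrable_sqrtBranch hjk hai hb)]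
  rcases himleft with hl | hl <;> rcases himright with hr | hr <;> linarith

theorem condR_iff_im_sqrtPeriod_eq_zero (hjk : aj < ak) (hai : 0 < ai.im) (hb : 0 ≤ b.im) :
    condR aj ak ai b ↔ (sqrtPeriod aj ak ai b).im = 0 := by
  refine ⟨im_sqrtPeriod_eq_zero_of_condR hjk hai hb, fun h =>
    ⟨sqrtBranch aj ak ai b, continuousOn_sqrtBranch hai hb, ?_, fun t ht => sqrtBranch_sq ht, ?_⟩⟩
  · exact (intervalIntegrable_iff_integrableOn_Ioo_of_le hjk.le).1
      (intervalIntegrable_sqrtBranch hjk hai hb)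
  · rwa [← integral_Ioc_eq_integral_Ioo, ← intervalIntegral.integral_of_le hjk.le]

theorem continuousOn_sqrtPeriod_lineMap (hjk : aj < ak) (hai : 0 < ai.im) (hu : 0 ≤ u) {S : Set ℝ}
    (hS : IsCompact S) :
    ContinuousOn (fun x : ℝ => sqrtPeriod aj ak ai (AffineMap.lineMap (x : ℂ) ai u)) S := by
  refine continuousOn_intervalIntegral_mul hS ?_
    (intervalIntegrable_ofReal_inv_sqrt_sub_mul_sub hjk)
  refine (continuousOn_csqrt_sub_div_csqrt_sub hai).comp
    (f := fun p : ℝ × ℝ => (AffineMap.lineMap (p.1 : ℂ) ai u, p.2)) ?_ fun p _ => ?_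
  · simp only [AffineMap.lineMap_apply]
    fun_prop
  · exact ⟨(mul_nonneg hu hai.le).trans_eq (lineMap_ofReal_im ai p.1 u).symm, mem_univ _⟩

theorem sign_im_sqrtPeriod_lineMap_left (hjk : aj < ak) (hai : 0 < ai.im) (hu : 0 ≤ u) :
    SignType.sign (sqrtPeriod aj ak ai (AffineMap.lineMap (aj : ℂ) ai u)).im =
      SignType.sign (1 - u) := by
  have hb : 0 ≤ (AffineMap.lineMap (aj : ℂ) ai u).im :=
    (mul_nonneg hu hai.le).trans_eq (lineMap_ofReal_im ai aj u).symm
  refine sign_im_intervalIntegral hjk (intervalIntegrable_sqrtBranch hjk hai hb) fun t ht => ?_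
  rw [sign_im_sqrtBranch_lineMap hai hu ht, sign_mul, sign_pos (sub_pos.2 ht.1), mul_one]

theorem sign_im_sqrtPeriod_lineMap_right (hjk : aj < ak) (hai : 0 < ai.im) (hu : 0 ≤ u) :
    SignType.sign (sqrtPeriod aj ak ai (AffineMap.lineMap (ak : ℂ) ai u)).im =
      SignType.sign (u - 1) := by
  have hb : 0 ≤ (AffineMap.lineMap (ak : ℂ) ai u).im :=
    (mul_nonneg hu hai.le).trans_eq (lineMap_ofReal_im ai ak u).symm
  refine sign_im_intervalIntegral hjk (intervalIntegrable_sqrtBranch hjk hai hb) fun t ht => ?_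
  rw [sign_im_sqrtBranch_lineMap hai hu ht, ← neg_mul_neg, neg_sub, neg_sub, sign_mul,
    sign_pos (sub_pos.2 ht.2), mul_one]

theorem exists_im_sqrtPeriod_lineMap_eq_zero (hjk : aj < ak) (hai : 0 < ai.im) (hu : 0 ≤ u) :
    ∃ x ∈ Icc aj ak, (sqrtPeriod aj ak ai (AffineMap.lineMap (x : ℂ) ai u)).im = 0 := by
  have hcont := Complex.continuous_im.comp_continuousOn
    (continuousOn_sqrtPeriod_lineMap hjk hai hu (isCompact_uIcc (a := aj) (b := ak)))
  have hleft := sign_im_sqrtPeriod_lineMap_left hjk hai hu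
  have hright := sign_im_sqrtPeriod_lineMap_right hjk hai hu
  rw [← uIcc_of_le hjk.le]
  refine intermediate_value_uIcc hcont (mem_uIcc.2 ?_)
  rcases le_total 1 u with h | h
  · exact .inl ⟨sign_nonpos_iff.1 (hleft.trans_le (sign_nonpos_iff.2 (sub_nonpos.2 h))),
      sign_nonneg_iff.1 ((sign_nonneg_iff.2 (sub_nonneg.2 h)).trans_eq hright.symm)⟩
  · exact .inr ⟨sign_nonpos_iff.1 (hright.trans_le (sign_nonpos_iff.2 (sub_nonpos.2 h))),
      sign_nonneg_iff.1 ((sign_nonneg_iff.2 (sub_nonneg.2 h)).trans_eq hleft.symm)⟩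

end Branch

section Triangle

variable {aj ak : ℝ} {ai : ℂ}

theorem im_mem_Icc_of_mem_convexHull {b : ℂ} (hai : 0 ≤ ai.im)
    (hb : b ∈ convexHull ℝ ({ai, (aj : ℂ), (ak : ℂ)} : Set ℂ)) : b.im ∈ Icc 0 ai.im := by
  refine convexHull_min ?_ ((convex_Icc 0 ai.im).linear_preimage Complex.imLm) hb
  rintro z (rfl | rfl | rfl) <;> simp [hai]

theorem lineMap_mem_convexHull {x u : ℝ} (hx : x ∈ Icc aj ak) (hu : u ∈ Icc (0 : ℝ) 1) :
    AffineMap.lineMap (x : ℂ) ai u ∈ convexHull ℝ ({ai, (aj : ℂ), (ak : ℂ)} : Set ℂ) := by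
  have hconv := convex_convexHull ℝ ({ai, (aj : ℂ), (ak : ℂ)} : Set ℂ)
  have hvertex : ∀ {z : ℂ}, z ∈ ({ai, (aj : ℂ), (ak : ℂ)} : Set ℂ) → z ∈ convexHull ℝ _ :=
    fun hz => subset_convexHull ℝ _ hz
  have hbase : (x : ℂ) ∈ convexHull ℝ ({ai, (aj : ℂ), (ak : ℂ)} : Set ℂ) :=
    (hconv.linear_preimage Complex.ofRealLI.toLinearMap).ordConnected.out
      (hvertex (by simp) : (aj : ℂ) ∈ _) (hvertex (by simp) : (ak : ℂ) ∈ _) hx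
  exact hconv.lineMap_mem hbase (hvertex (by simp)) hu

end Triangle

theorem stmt11_general {aj ak : ℝ} (hjk : aj < ak) {ai : ℂ} (hai : 0 < ai.im) {h : ℝ}
    (hh : 0 ≤ h) :
    ∃ b' : ℂ, (b'.im = h ∧ condR aj ak ai b') ∧
      (h ≤ ai.im → b' ∈ convexHull ℝ ({ai, (aj : ℂ), (ak : ℂ)} : Set ℂ)) ∧
      ∀ c : ℂ, c.im = h → condR aj ak ai c → c = b' := by
  obtain ⟨x, hx, hzero⟩ :=
    exists_im_sqrtPeriod_lineMap_eq_zero hjk hai (div_nonneg hh hai.le)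
  have him : (AffineMap.lineMap (x : ℂ) ai (h / ai.im)).im = h := by
    rw [lineMap_ofReal_im, div_mul_cancel₀ h hai.ne']
  have him_nonneg := hh.trans_eq him.symm
  refine ⟨AffineMap.lineMap (x : ℂ) ai (h / ai.im),
    ⟨him, (condR_iff_im_sqrtPeriod_eq_zero hjk hai him_nonneg).2 hzero⟩, fun hle => ?_,
    fun c hc hR => ?_⟩
  · exact lineMap_mem_convexHull hx ⟨div_nonneg hh hai.le, (div_le_one hai).2 hle⟩
  · exact eq_of_im_sqrtPeriod_eq hjk hai him_nonneg (hc.trans him.symm)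
      ((im_sqrtPeriod_eq_zero_of_condR hjk hai (hc ▸ hh) hR).trans hzero.symm)

/-- Lemma 5: for every `b` in the closed triangle `Δ` with vertices `a_i, a_j, a_k`
(where `a_j < a_k` are real and `a_i` is in the upper half-plane), there is exactly one
point `b'` on the horizontal line through `b` satisfying condition (R), and this `b'`
lies in `Δ`. -/
theorem stmt11 (aj ak : ℝ) (hjk : aj < ak) (ai : ℂ) (hai : 0 < ai.im) :
    ∀ b ∈ convexHull ℝ ({ai, (aj : ℂ), (ak : ℂ)} : Set ℂ),
      ∃ b' : ℂ, (b'.im = b.im ∧ condR aj ak ai b') ∧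
        b' ∈ convexHull ℝ ({ai, (aj : ℂ), (ak : ℂ)} : Set ℂ) ∧
        ∀ c : ℂ, c.im = b.im → condR aj ak ai c → c = b' := by
  intro b hb
  obtain ⟨hb0, hb1⟩ := im_mem_Icc_of_mem_convexHull hai.le hb
  exact (stmt11_general hjk hai hb0).imp fun _ ⟨hR, hΔ, huniq⟩ => ⟨hR, hΔ hb1, huniq⟩
end

section
/- Let a₁, a₂, a₃ ∈ ℂ be three non-collinear points and Q(z) = (z−a₁)(z−a₂)(z−a₃). For i ∈ {1,2,3}, with {j,k} = {1,2,3} \ {i}, define γ_i to be the set of b ∈ ℂ for which there exists a continuous integrable function g : (0,1) → ℂ with g(s)² = (b−ℓ_i(s))/Q(ℓ_i(s)) for all s ∈ (0,1), where ℓ_i(s) = a_j + s(a_k−a_j), such that Im( (a_k−a_j)·∫₀¹ g(s) ds ) = 0. Then there exists exactly one point b₀ belonging to γ₁ ∩ γ₂ ∩ γ₃; moreover γ_i ∩ γ_{i'} = {b₀} for every pair i ≠ i', and b₀ lies in the interior of the convex hull of {a₁, a₂, a₃}. -/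
open MeasureTheory

/-- The curve `γ_i`: the set of `b ∈ ℂ` such that some continuous integrable branch `g`
of the square root of `(b - z)/Q(z)` along the segment from `a_j` to `a_k`
(parametrized by `ℓ_i(s) = a_j + s (a_k - a_j)`, with `{j,k} = {1,2,3} \ {i}` realized
as `j = i+1`, `k = i+2` in `Fin 3`) has `(a_k - a_j) ∫₀¹ g(s) ds` real. -/
def gammaSet (a : Fin 3 → ℂ) (i : Fin 3) : Set ℂ :=
  {b : ℂ | ∃ g : ℝ → ℂ, ContinuousOn g (Set.Ioo (0 : ℝ) 1) ∧
    IntegrableOn g (Set.Ioo (0 : ℝ) 1) ∧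
    (∀ s ∈ Set.Ioo (0 : ℝ) 1, (g s) ^ 2 =
      (b - (a (i + 1) + (s : ℂ) * (a (i + 2) - a (i + 1)))) /
        (((a (i + 1) + (s : ℂ) * (a (i + 2) - a (i + 1))) - a 0) *
         ((a (i + 1) + (s : ℂ) * (a (i + 2) - a (i + 1))) - a 1) *
         ((a (i + 1) + (s : ℂ) * (a (i + 2) - a (i + 1))) - a 2))) ∧
    ((a (i + 2) - a (i + 1)) * ∫ s in Set.Ioo (0 : ℝ) 1, g s).im = 0}

/-!
Let `a` be positively oriented. Over an edge `BC` with opposite vertex `A`, the integrand times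
`C - B` is, up to sign, the principal square root of `(z - b) / (z - A)` times `1 / √(s (1 - s))`,
so that inside the triangle `γ_i` is the zero set of the imaginary part of one explicit period.

* A real period forces its integrand to be real at some point of the edge, so that `b` lies on a
  line through `A` and a point of the open edge. Two such conditions put `b` inside the triangle.
* Inside the triangle the three imaginary parts add up to `0`, so two real periods force the third.
  To see this, place `b` at `0` and replace the contour `ζ` by `ζ / t`, letting `t` go from `1` to
  `0`: the derivative of each integral is a difference of two vertex terms, the sum of the three
  telescopes, and at `t = 0` only the integral of `dζ / ζ` around the triangle is left. The
  square root continued from infinity is `I` times the one chosen on the edges, so the imaginary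
  parts of the periods are real parts of the dilated integrals, and `∮ dζ / ζ` is imaginary.
* If neither `B` nor `C` lies to the left of the direction in which `b` moves, then the imaginary
  part for `BC` decreases. For any direction two of the vertices lie on the same side, which gives
  uniqueness. Along each segment from a point of `AB` to `C` the imaginary part for `BC` has exactly
  one zero; on the curve of these zeros the imaginary part for `CA` changes sign, which gives
  existence.
-/

namespace PeriodTriangle

open Set Filter Topology AffineMap Complex

/-! ### The principal square root -/

lemma sq_sqrt (z : ℂ) : sqrt z ^ 2 = z := cpow_ofNat_inv_pow z 2

lemma sqrt_sq_of_re_pos {z : ℂ} (hz : 0 < z.re) : sqrt (z ^ 2) = z := sq_cpow_two_inv hz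

lemma norm_sqrt (z : ℂ) : ‖sqrt z‖ = √‖z‖ := by
  rw [← Real.sqrt_sq (norm_nonneg (sqrt z)), ← norm_pow, sq_sqrt]

lemma sqrt_ne_zero {z : ℂ} (hz : z ≠ 0) : sqrt z ≠ 0 := by
  rw [← norm_ne_zero_iff, norm_sqrt]
  positivity

lemma sqrt_inv {z : ℂ} (hz : z ∈ slitPlane) : sqrt z⁻¹ = (sqrt z)⁻¹ :=
  inv_cpow z _ (mem_slitPlane_iff_arg.mp hz).1

lemma sqrt_ofReal_mul {r : ℝ} (hr : 0 < r) {z : ℂ} (hz : z ≠ 0) :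
    sqrt (r * z) = √r * sqrt z := by
  have hr' : (r : ℂ) ≠ 0 := ofReal_ne_zero.mpr hr.ne'
  have hsqrt : (√r : ℂ) = sqrt r := by
    rw [sqrt_of_nonneg (by simpa using hr.le), ofReal_re]
  rw [hsqrt, sqrt_eq_exp (mul_ne_zero hr' hz), sqrt_eq_exp hr', sqrt_eq_exp hz, ← exp_add,
    log_ofReal_mul hr hz, ofReal_log hr.le, add_div]

lemma re_sqrt_nonneg (z : ℂ) : 0 ≤ (sqrt z).re := by
  rw [sqrt, cpow_inv_two_re]
  positivity

lemma re_sqrt_pos {z : ℂ} (hz : z ∈ slitPlane) : 0 < (sqrt z).re := by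
  rw [sqrt, cpow_inv_two_re, Real.sqrt_pos]
  have := abs_re_le_norm z
  rcases hz with hre | him
  · positivity
  · linarith [abs_re_lt_norm.mpr him, neg_abs_le z.re]

lemma im_eq_two_mul_sqrt (z : ℂ) : z.im = 2 * (sqrt z).re * (sqrt z).im := by
  conv_lhs => rw [← sq_sqrt z, sq, mul_im]
  ring

lemma im_sqrt_nonneg {z : ℂ} (hz : 0 ≤ z.im) : 0 ≤ (sqrt z).im := by
  rw [sqrt, cpow_inv_two_im_eq_sqrt hz]
  positivity

lemma im_sqrt_pos {z : ℂ} (hz : 0 < z.im) : 0 < (sqrt z).im := by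
  rw [im_eq_two_mul_sqrt] at hz
  exact pos_of_mul_pos_right hz (by linarith [re_sqrt_nonneg z])

lemma sqrt_mul_sqrt_neg {z : ℂ} (hz : 0 < z.im) : sqrt z * sqrt (-z) = -I * z := by
  have hpos : 0 < (-I * sqrt z).re := by simpa using im_sqrt_pos hz
  have hneg : sqrt (-z) = -I * sqrt z := by
    rw [← sqrt_sq_of_re_pos hpos, mul_pow, sq_sqrt, neg_sq, I_sq, neg_one_mul]
  rw [hneg, mul_left_comm, ← sq, sq_sqrt]

lemma re_mul_pos_of_quadrants {k w : ℂ} (hre : 0 < k.re) (him : 0 < k.im) (hw : w ≠ 0)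
    (hwre : 0 ≤ w.re) (hwim : w.im ≤ 0) : 0 < (k * w).re := by
  rw [mul_re]
  rcases hwre.eq_or_lt with h | h
  · have : w.im ≠ 0 := fun h' => hw (Complex.ext h.symm h')
    nlinarith [lt_of_le_of_ne hwim this]
  · nlinarith

lemma im_div_pos_of_quadrants {k w : ℂ} (hre : 0 < k.re) (him : 0 < k.im) (hw : w ≠ 0)
    (hwre : 0 ≤ w.re) (hwim : w.im ≤ 0) : 0 < (k / w).im := by
  have hnum : 0 < k.im * w.re - k.re * w.im :=
    mul_re ⟨k.im, k.re⟩ w ▸ re_mul_pos_of_quadrants (k := ⟨k.im, k.re⟩) him hre hw hwre hwim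
  rw [div_im, ← sub_div]
  exact div_pos hnum (normSq_pos.mpr hw)

lemma sqrt_mul_of_im_pos_of_im_nonpos {κ p : ℂ} (hκ : 0 < κ.im) (hp : p.im ≤ 0) :
    sqrt (κ * p) = sqrt κ * (-I * sqrt (-p)) := by
  rcases eq_or_ne p 0 with rfl | hp₀
  · simp
  have hpos : 0 < (sqrt κ * (-I * sqrt (-p))).re :=
    re_mul_pos_of_quadrants (re_sqrt_pos (.inr hκ.ne')) (im_sqrt_pos hκ)
      (by simp [sqrt_ne_zero, hp₀]) (by simpa using im_sqrt_nonneg (z := -p) (by simpa))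
      (by simpa using re_sqrt_nonneg (-p))
  rw [← sqrt_sq_of_re_pos hpos, mul_pow, mul_pow, sq_sqrt, sq_sqrt, neg_sq, I_sq, neg_one_mul,
    neg_neg]

lemma im_sqrt_mul_sub_one_lt {κ p : ℂ} (hκ : 0 < κ.im) (hp : p.im ≤ 0) :
    (sqrt (κ * (p - 1))).im < (sqrt (κ * p)).im := by
  set q := -I * sqrt (-p)
  set q' := -I * sqrt (-(p - 1))
  have hq : q ^ 2 = p := by simp [q, mul_pow, sq_sqrt]
  have hq' : q' ^ 2 = p - 1 := by simp [q', mul_pow, sq_sqrt]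
  have hne : q + q' ≠ 0 := fun h => by
    have : q ^ 2 = q' ^ 2 := by rw [eq_neg_of_add_eq_zero_left h, neg_sq]
    rw [hq, hq'] at this
    exact one_ne_zero (by linear_combination this : (1 : ℂ) = 0)
  have hdiff : sqrt (κ * p) - sqrt (κ * (p - 1)) = sqrt κ / (q + q') := by
    rw [sqrt_mul_of_im_pos_of_im_nonpos hκ hp,
      sqrt_mul_of_im_pos_of_im_nonpos hκ (p := p - 1) (by simpa using hp), eq_div_iff hne]
    linear_combination sqrt κ * (hq - hq')
  rw [← sub_pos, ← sub_im, hdiff]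
  refine im_div_pos_of_quadrants (re_sqrt_pos (.inr hκ.ne')) (im_sqrt_pos hκ) hne ?_ ?_
  · simpa [q, q'] using add_nonneg (im_sqrt_nonneg (z := -p) (by simpa))
      (im_sqrt_nonneg (z := -(p - 1)) (by simpa))
  · simpa [q, q', neg_le_iff_add_nonneg'] using
      add_nonneg (re_sqrt_nonneg (-p)) (re_sqrt_nonneg (-(p - 1)))

lemma measurable_sqrt : Measurable sqrt := measurable_id.pow_const _

/-! ### Integrals over an open interval -/

lemma im_integral {α : Type*} [MeasurableSpace α] {μ : Measure α} {f : α → ℂ}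
    (hf : Integrable f μ) :
    (∫ s, f s ∂μ).im = ∫ s, (f s).im ∂μ :=
  (imCLM.integral_comp_comm hf).symm

lemma setIntegral_Ioo_pos {f : ℝ → ℝ} {x y : ℝ} (hxy : x < y) (hf : IntegrableOn f (Ioo x y))
    (hpos : ∀ s ∈ Ioo x y, 0 < f s) : 0 < ∫ s in Ioo x y, f s := by
  rw [← integral_Ioc_eq_integral_Ioo, ← intervalIntegral.integral_of_le hxy.le]
  refine intervalIntegral.intervalIntegral_pos_of_pos_on ?_ hpos hxy
  rwa [intervalIntegrable_iff_integrableOn_Ioo_of_le hxy.le]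

lemma exists_eq_zero_of_setIntegral_Ioo_eq_zero {f : ℝ → ℝ} {x y : ℝ} (hxy : x < y)
    (hc : ContinuousOn f (Ioo x y)) (hf : IntegrableOn f (Ioo x y))
    (h₀ : ∫ s in Ioo x y, f s = 0) : ∃ s ∈ Ioo x y, f s = 0 := by
  obtain ⟨s, hs, hfs⟩ : ∃ s ∈ Ioo x y, f s ≤ 0 := by
    by_contra! hpos
    exact (setIntegral_Ioo_pos hxy hf hpos).ne' h₀
  obtain ⟨t, ht, hft⟩ : ∃ t ∈ Ioo x y, 0 ≤ f t := by
    by_contra! hneg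
    have := setIntegral_Ioo_pos hxy hf.neg fun s hs => neg_pos.mpr (hneg s hs)
    simp only [Pi.neg_apply, integral_neg, h₀, neg_zero, lt_irrefl] at this
  exact isPreconnected_Ioo.intermediate_value hs ht hc ⟨hfs, hft⟩

lemma im_setIntegral_Ioo_lt {f g : ℝ → ℂ} {x y : ℝ} (hxy : x < y) (hf : IntegrableOn f (Ioo x y))
    (hg : IntegrableOn g (Ioo x y)) (hlt : ∀ s ∈ Ioo x y, (f s).im < (g s).im) :
    (∫ s in Ioo x y, f s).im < (∫ s in Ioo x y, g s).im := by
  have hgf : IntegrableOn (fun s => g s - f s) (Ioo x y) := hg.sub hf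
  rw [← sub_pos, ← sub_im, ← integral_sub hg hf, im_integral hgf]
  exact setIntegral_Ioo_pos hxy hgf.im fun s hs => by simpa using hlt s hs

/-- The density `1 / √(s (1 - s))` of the arcsine law, up to normalization: the endpoint
singularity of `1 / √Q` along an edge of the triangle. It is `0` at the endpoints. -/
noncomputable def arcsineWeight (s : ℝ) : ℝ := (√(s * (1 - s)))⁻¹

lemma arcsineWeight_nonneg (s : ℝ) : 0 ≤ arcsineWeight s := by
  unfold arcsineWeight
  positivity

lemma arcsineWeight_pos {s : ℝ} (hs : s ∈ Ioo (0 : ℝ) 1) : 0 < arcsineWeight s :=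
  inv_pos.mpr (Real.sqrt_pos.mpr (mul_pos hs.1 (sub_pos.mpr hs.2)))

lemma sq_arcsineWeight {s : ℝ} (hs : s ∈ Icc (0 : ℝ) 1) :
    arcsineWeight s ^ 2 = (s * (1 - s))⁻¹ := by
  rw [arcsineWeight, inv_pow, Real.sq_sqrt (mul_nonneg hs.1 (sub_nonneg.mpr hs.2))]

lemma continuousOn_arcsineWeight : ContinuousOn arcsineWeight (Ioo 0 1) :=
  ContinuousOn.inv₀ (by fun_prop) fun _ hs => (inv_pos.mp (arcsineWeight_pos hs)).ne'

lemma measurable_arcsineWeight : Measurable arcsineWeight := by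
  unfold arcsineWeight
  fun_prop

lemma integrableOn_arcsineWeight : IntegrableOn arcsineWeight (Ioo 0 1) := by
  rw [← integrableOn_Ioc_iff_integrableOn_Ioo]
  refine intervalIntegral.integrableOn_deriv_of_nonneg (g := fun s => Real.arcsin (2 * s - 1))
    (by fun_prop) (fun s hs => ?_) fun s _ => arcsineWeight_nonneg s
  have harcsin := Real.hasDerivAt_arcsin (x := 2 * s - 1) (by linarith [hs.1])
    (by linarith [hs.2])
  refine (harcsin.comp s (((hasDerivAt_id s).const_mul 2).sub_const 1)).congr_deriv ?_
  have hsq : √(1 - (2 * s - 1) ^ 2) = 2 * √(s * (1 - s)) := by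
    rw [show 1 - (2 * s - 1) ^ 2 = 2 ^ 2 * (s * (1 - s)) by ring, Real.sqrt_mul (by norm_num),
      Real.sqrt_sq (by norm_num)]
  rw [arcsineWeight, hsq]
  field_simp

/-! ### Oriented areas -/

attribute [local instance] Complex.finrank_real_complex_fact

local notation "ω" => Complex.orientation.areaForm

lemma im_div_eq_areaForm (x y : ℂ) : (y / x).im = ω x y / normSq x := by
  simp only [div_im, Complex.areaForm, mul_im, conj_re, conj_im]
  ring

lemma im_div_pos {x y : ℂ} (h : 0 < ω x y) : 0 < (y / x).im := by
  have hx : x ≠ 0 := fun hx => by simp [hx] at h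
  rw [im_div_eq_areaForm]
  exact div_pos h (normSq_pos.mpr hx)

lemma im_div_nonpos {x y : ℂ} (h : ω x y ≤ 0) : (y / x).im ≤ 0 := by
  rw [im_div_eq_areaForm]
  exact div_nonpos_of_nonpos_of_nonneg h (normSq_nonneg x)

-- Cramer's rule, written symmetrically in the three vectors.
lemma areaForm_smul_cyclic_sum (x y z : ℂ) : ω y z • x + ω z x • y + ω x y • z = 0 := by
  apply Complex.ext <;> simp <;> ring

lemma areaForm_ne_zero_or_areaForm_ne_zero {x y z : ℂ} (hx : x ≠ 0) (hyz : ω y z ≠ 0) :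
    ω x y ≠ 0 ∨ ω x z ≠ 0 := by
  by_contra! h
  have hcramer := areaForm_smul_cyclic_sum x y z
  rw [h.1, Complex.orientation.areaForm_swap z x, h.2, neg_zero, zero_smul, zero_smul, add_zero,
    add_zero] at hcramer
  exact (smul_ne_zero hyz hx) hcramer

lemma areaForm_lineMap_sub (δ B C b : ℂ) (s : ℝ) :
    ω δ (lineMap B C s - b) = (1 - s) * ω δ (B - b) + s * ω δ (C - b) := by
  simp [lineMap_apply_module]
  ring

lemma areaForm_lineMap_sub_edge (B C b : ℂ) (s : ℝ) :
    ω (lineMap B C s - b) (C - B) = ω (B - b) (C - b) := by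
  simp [lineMap_apply_module]
  ring

lemma areaForm_sub_rotate (A B C : ℂ) : ω (C - B) (A - B) = ω (B - A) (C - A) := by
  simp
  ring

lemma lineMap_sub_ne_zero {B C b : ℂ} (h : ω (B - b) (C - b) ≠ 0) (s : ℝ) :
    lineMap B C s - b ≠ 0 := by
  intro h₀
  rw [← areaForm_lineMap_sub_edge B C b s, h₀, map_zero] at h
  exact h rfl

/-! ### The period of an edge -/

variable {A B C b : ℂ}

/-- Over the edge `BC`, the branch of `√((z - b) / Q(z)) · (C - B)` on which the imaginary part
of the period of the edge is monotone in `b`. With `z = lineMap B C s` one has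
`Q(z) = -(C - B)² s (1 - s) (z - A)`, so that up to sign only the principal square root of
`(z - b) / (z - A)` and the arcsine weight remain. -/
noncomputable def branch (A B C b : ℂ) (s : ℝ) : ℂ :=
  sqrt ((lineMap B C s - b) / (lineMap B C s - A)) * arcsineWeight s

lemma measurable_branch (A B C b : ℂ) : Measurable (branch A B C b) := by
  have := measurable_sqrt
  have := measurable_arcsineWeight
  have : Measurable (lineMap B C : ℝ → ℂ) := lineMap_continuous.measurable
  unfold branch
  fun_prop

lemma continuous_ratio {X : Type*} [TopologicalSpace X] (hW : ω (B - A) (C - A) ≠ 0) {f : X → ℂ}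
    {g : X → ℝ} (hf : Continuous f) (hg : Continuous g) :
    Continuous fun x => (lineMap B C (g x) - f x) / (lineMap B C (g x) - A) :=
  Continuous.div (by fun_prop) (by fun_prop) fun x => lineMap_sub_ne_zero hW (g x)

lemma exists_norm_branch_le (hW : ω (B - A) (C - A) ≠ 0) {K : Set ℂ} (hK : IsCompact K) :
    ∃ M, ∀ b ∈ K, ∀ s ∈ Icc (0 : ℝ) 1, ‖branch A B C b s‖ ≤ M * arcsineWeight s := by
  obtain ⟨M, hM⟩ := (hK.prod (isCompact_Icc (a := (0 : ℝ)) (b := 1))).exists_bound_of_continuousOn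
    (continuous_ratio hW continuous_fst continuous_snd).norm.sqrt.continuousOn
  refine ⟨M, fun b hb s hs => ?_⟩
  rw [branch, norm_mul, norm_sqrt, norm_real, Real.norm_of_nonneg (arcsineWeight_nonneg s)]
  exact mul_le_mul_of_nonneg_right ((le_abs_self _).trans (hM (b, s) ⟨hb, hs⟩))
    (arcsineWeight_nonneg s)

lemma integrableOn_branch (hW : ω (B - A) (C - A) ≠ 0) (b : ℂ) :
    IntegrableOn (branch A B C b) (Ioo 0 1) := by
  obtain ⟨M, hM⟩ := exists_norm_branch_le hW (isCompact_singleton (x := b))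
  refine (integrableOn_arcsineWeight.const_mul M).mono'
    (measurable_branch A B C b).aestronglyMeasurable ?_
  exact ae_restrict_of_forall_mem measurableSet_Ioo fun s hs =>
    hM b rfl s (Ioo_subset_Icc_self hs)

/-- The period of `√((z - b) / Q(z)) dz` along the edge from `B` to `C` of the triangle `ABC`, for
the choice of the square root made in `branch`. -/
noncomputable def period (A B C b : ℂ) : ℂ := ∫ s in Ioo (0 : ℝ) 1, branch A B C b s

lemma im_branch_lt {δ : ℂ} {s : ℝ} (hs : s ∈ Ioo (0 : ℝ) 1)
    (hapex : ω δ (lineMap B C s - A) < 0) (hb : ω δ (lineMap B C s - b) ≤ 0) :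
    (branch A B C (b + δ) s).im < (branch A B C b s).im := by
  set z : ℂ := lineMap B C s
  have hδ : δ ≠ 0 := fun h => by simp [h] at hapex
  have hz : z - A ≠ 0 := fun h => by simp [h] at hapex
  have hκ : 0 < (δ / (z - A)).im := by
    rw [Complex.orientation.areaForm_swap] at hapex
    exact im_div_pos (neg_lt_zero.mp hapex)
  have hlt := im_sqrt_mul_sub_one_lt hκ (im_div_nonpos hb)
  have hw := arcsineWeight_pos hs
  have h₁ : δ / (z - A) * ((z - b) / δ) = (z - b) / (z - A) := by field_simp
  have h₂ : δ / (z - A) * ((z - b) / δ - 1) = (z - (b + δ)) / (z - A) := by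
    field_simp
    ring
  rw [h₁, h₂] at hlt
  simpa only [branch, im_mul_ofReal] using mul_lt_mul_of_pos_right hlt hw

lemma im_period_lt (hW : ω (B - A) (C - A) ≠ 0) {b' : ℂ} (hne : b' ≠ b)
    (hBA : ω (b' - b) (B - A) ≤ 0) (hCA : ω (b' - b) (C - A) ≤ 0)
    (hBb : ω (b' - b) (B - b) ≤ 0) (hCb : ω (b' - b) (C - b) ≤ 0) :
    (period A B C b').im < (period A B C b).im := by
  refine im_setIntegral_Ioo_lt one_pos (integrableOn_branch hW b') (integrableOn_branch hW b)
    fun s hs => ?_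
  have hs₁ := sub_pos.mpr hs.2
  rw [← add_sub_cancel b b']
  apply im_branch_lt hs <;> rw [areaForm_lineMap_sub]
  · rcases areaForm_ne_zero_or_areaForm_ne_zero (sub_ne_zero.mpr hne) hW with h | h
    · nlinarith [hs.1, lt_of_le_of_ne hBA h]
    · nlinarith [hs.1, lt_of_le_of_ne hCA h]
  · nlinarith [hs.1]

lemma im_period_apex (hW : ω (B - A) (C - A) ≠ 0) : (period A B C A).im = 0 := by
  rw [period, im_integral (integrableOn_branch hW A)]
  simp [branch, lineMap_sub_ne_zero hW]

lemma areaForm_eq_mul_of_lineMap_sub_eq {r s : ℝ}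
    (h : lineMap B C s - b = r • (lineMap B C s - A)) :
    ω (B - b) (C - b) = r * ω (B - A) (C - A) := by
  rw [← areaForm_lineMap_sub_edge B C b s, h, map_smul, LinearMap.smul_apply, smul_eq_mul,
    areaForm_lineMap_sub_edge]

lemma ratio_re_nonneg_or_im_ne_zero (hW : 0 < ω (B - A) (C - A)) (hb : 0 ≤ ω (B - b) (C - b))
    (s : ℝ) : 0 ≤ ((lineMap B C s - b) / (lineMap B C s - A)).re ∨
      ((lineMap B C s - b) / (lineMap B C s - A)).im ≠ 0 := by
  set u := (lineMap B C s - b) / (lineMap B C s - A) with hu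
  by_contra! h
  have hreal : lineMap B C s - b = u.re • (lineMap B C s - A) := by
    rw [real_smul, show (u.re : ℂ) = u from Complex.ext rfl (by simp [h.2]), hu,
      div_mul_cancel₀ _ (lineMap_sub_ne_zero hW.ne' s)]
  nlinarith [areaForm_eq_mul_of_lineMap_sub_eq hreal]

lemma continuousOn_branch (hW : 0 < ω (B - A) (C - A)) (hb : 0 ≤ ω (B - b) (C - b)) :
    ContinuousOn (branch A B C b) (Ioo 0 1) := by
  have hratio : Continuous fun s : ℝ => (lineMap B C s - b) / (lineMap B C s - A) :=
    continuous_ratio hW.ne' continuous_const continuous_id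
  have hsqrt : Continuous fun s : ℝ => sqrt ((lineMap B C s - b) / (lineMap B C s - A)) :=
    continuous_iff_continuousAt.mpr fun s => ContinuousAt.comp (g := sqrt)
      (continuousAt_sqrt (ratio_re_nonneg_or_im_ne_zero hW hb s)) hratio.continuousAt
  exact hsqrt.continuousOn.mul (continuous_ofReal.comp_continuousOn continuousOn_arcsineWeight)

lemma continuousOn_period (hW : 0 < ω (B - A) (C - A)) :
    ContinuousOn (period A B C) {b | 0 ≤ ω (B - b) (C - b)} := by
  intro b hb
  obtain ⟨M, hM⟩ := exists_norm_branch_le hW.ne' (isCompact_closedBall b 1)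
  refine continuousWithinAt_of_dominated (bound := fun s => M * arcsineWeight s) ?_ ?_
    (integrableOn_arcsineWeight.const_mul M) ?_
  · exact .of_forall fun b' => (measurable_branch A B C b').aestronglyMeasurable
  · filter_upwards [mem_nhdsWithin_of_mem_nhds (Metric.closedBall_mem_nhds b one_pos)] with b' hb'
    exact ae_restrict_of_forall_mem measurableSet_Ioo fun s hs =>
      hM b' hb' s (Ioo_subset_Icc_self hs)
  · refine ae_of_all _ fun s => ContinuousAt.continuousWithinAt ?_
    have hratio : Continuous fun b' : ℂ => (lineMap B C s - b') / (lineMap B C s - A) :=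
      continuous_ratio hW.ne' continuous_id continuous_const
    have hsqrt := continuousAt_sqrt (ratio_re_nonneg_or_im_ne_zero hW hb s)
    exact (ContinuousAt.comp_of_eq hsqrt hratio.continuousAt rfl).mul continuousAt_const

/-! ### The sets of real periods -/

/-- The points `b` for which some continuous branch of `√((z - b) / Q(z))` has a real period along
the edge `BC`. The branch is multiplied by `C - B`, so that its square is that of `branch`. -/
def realPeriodSet (A B C : ℂ) : Set ℂ :=
  {b | ∃ h : ℝ → ℂ, ContinuousOn h (Ioo 0 1) ∧ IntegrableOn h (Ioo 0 1) ∧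
    (∀ s ∈ Ioo (0 : ℝ) 1, h s ^ 2 =
      (lineMap B C s - b) / (lineMap B C s - A) * arcsineWeight s ^ 2) ∧
    (∫ s in Ioo (0 : ℝ) 1, h s).im = 0}

lemma sq_branch (A B C b : ℂ) (s : ℝ) :
    branch A B C b s ^ 2 = (lineMap B C s - b) / (lineMap B C s - A) * arcsineWeight s ^ 2 := by
  rw [branch, mul_pow, sq_sqrt]

lemma mem_realPeriodSet_iff (hW : 0 < ω (B - A) (C - A)) (hb : 0 < ω (B - b) (C - b)) :
    b ∈ realPeriodSet A B C ↔ (period A B C b).im = 0 := by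
  refine ⟨fun ⟨h, hcont, _, hsq, hreal⟩ => ?_, fun hreal => ⟨branch A B C b,
    continuousOn_branch hW hb.le, integrableOn_branch hW.ne' b, fun s _ => sq_branch A B C b s,
    hreal⟩⟩
  have hne : ∀ {s : ℝ}, s ∈ Ioo (0 : ℝ) 1 → branch A B C b s ≠ 0 := fun {s} hs =>
    mul_ne_zero (sqrt_ne_zero (div_ne_zero (lineMap_sub_ne_zero hb.ne' s)
      (lineMap_sub_ne_zero hW.ne' s))) (ofReal_ne_zero.mpr (arcsineWeight_pos hs).ne')
  have hsq' : EqOn (h ^ 2) (branch A B C b ^ 2) (Ioo 0 1) := fun s hs =>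
    (hsq s hs).trans (sq_branch A B C b s).symm
  rcases isPreconnected_Ioo.eq_or_eq_neg_of_sq_eq hcont (continuousOn_branch hW hb.le) hsq' hne
    with heq | heq <;> rw [setIntegral_congr_fun measurableSet_Ioo heq] at hreal
  · exact hreal
  · simpa only [period, Pi.neg_apply, integral_neg, neg_im, neg_eq_zero] using hreal

lemma exists_eq_lineMap_of_mem_realPeriodSet (hW : ω (B - A) (C - A) ≠ 0)
    (hb : b ∈ realPeriodSet A B C) :
    ∃ s ∈ Ioo (0 : ℝ) 1, ∃ r : ℝ, b = lineMap (lineMap B C s) A r := by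
  obtain ⟨h, hcont, hint, hsq, hreal⟩ := hb
  rw [im_integral hint] at hreal
  obtain ⟨s, hs, him⟩ := exists_eq_zero_of_setIntegral_Ioo_eq_zero one_pos
    (continuous_im.comp_continuousOn hcont) hint.im hreal
  refine ⟨s, hs, (h s).re ^ 2 / arcsineWeight s ^ 2, ?_⟩
  have hsq := hsq s hs
  rw [show h s = (h s).re from Complex.ext rfl him] at hsq
  have hA := lineMap_sub_ne_zero hW s
  have hw : (arcsineWeight s : ℂ) ≠ 0 := ofReal_ne_zero.mpr (arcsineWeight_pos hs).ne'
  rw [lineMap_apply, vsub_eq_sub, vadd_eq_add, real_smul, ofReal_div, ofReal_pow, ofReal_pow, hsq]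
  field_simp
  ring

lemma realPeriodSet_swap_subset (A B C : ℂ) : realPeriodSet A B C ⊆ realPeriodSet A C B := by
  rintro b ⟨h, hcont, hint, hsq, hreal⟩
  have hmaps : MapsTo (fun s : ℝ => 1 - s) (Ioo 0 1) (Ioo 0 1) := fun s hs =>
    ⟨sub_pos.mpr hs.2, sub_lt_self 1 hs.1⟩
  refine ⟨fun s => h (1 - s), hcont.comp (by fun_prop) hmaps, ?_, fun s hs => ?_, ?_⟩
  · rw [← intervalIntegrable_iff_integrableOn_Ioo_of_le zero_le_one] at hint ⊢
    simpa only [sub_self, sub_zero] using (hint.comp_sub_left 1).symm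
  · simpa [lineMap_apply_one_sub, arcsineWeight, mul_comm] using hsq (1 - s) (hmaps hs)
  · rw [← integral_Ioc_eq_integral_Ioo, ← intervalIntegral.integral_of_le zero_le_one] at hreal ⊢
    rwa [intervalIntegral.integral_comp_sub_left, sub_self, sub_zero]

lemma realPeriodSet_swap (A B C : ℂ) : realPeriodSet A B C = realPeriodSet A C B :=
  (realPeriodSet_swap_subset A B C).antisymm (realPeriodSet_swap_subset A C B)

lemma sq_edge_mul_integrand (hBC : B ≠ C) {s : ℝ} (hs : s ∈ Ioo (0 : ℝ) 1) :
    (C - B) ^ 2 * ((b - lineMap B C s) /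
        ((lineMap B C s - A) * (lineMap B C s - B) * (lineMap B C s - C))) =
      (lineMap B C s - b) / (lineMap B C s - A) * arcsineWeight s ^ 2 := by
  have hs₀ : (s : ℂ) ≠ 0 := ofReal_ne_zero.mpr hs.1.ne'
  have hs₁ : (1 - s : ℂ) ≠ 0 := by exact_mod_cast (sub_pos.mpr hs.2).ne'
  have hCB : C - B ≠ 0 := sub_ne_zero.mpr hBC.symm
  have hB : lineMap B C s - B = s * (C - B) := by simp [lineMap_apply]
  have hC : lineMap B C s - C = -((1 - s) * (C - B)) := by
    simp [lineMap_apply_module]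
    ring
  rw [← ofReal_pow, sq_arcsineWeight (Ioo_subset_Icc_self hs), hB, hC]
  push_cast
  by_cases hA : lineMap B C s - A = 0
  · simp [hA]
  · field_simp
    ring

@[to_additive]
lemma prod_univ_three_rotate {M : Type*} [CommMonoid M] (f : Fin 3 → M) (i : Fin 3) :
    ∏ j, f j = f i * f (i + 1) * f (i + 2) := by
  rw [Fin.prod_univ_three]
  fin_cases i
  · rfl
  · exact mul_rotate (f 0) (f 1) (f 2)
  · exact (mul_rotate (f 2) (f 0) (f 1)).symm

lemma gammaSet_eq_realPeriodSet {a : Fin 3 → ℂ} (ha : a.Injective) (i : Fin 3) :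
    gammaSet a i = realPeriodSet (a i) (a (i + 1)) (a (i + 2)) := by
  have hne : a (i + 1) ≠ a (i + 2) := ha.ne (by revert i; decide)
  have hCB : a (i + 2) - a (i + 1) ≠ 0 := sub_ne_zero.mpr hne.symm
  have hQ : ∀ z, (z - a 0) * (z - a 1) * (z - a 2) =
      (z - a i) * (z - a (i + 1)) * (z - a (i + 2)) := by
    intro z
    rw [← prod_univ_three_rotate (fun j => z - a j) i, Fin.prod_univ_three]
  have hline : ∀ s : ℝ, a (i + 1) + s * (a (i + 2) - a (i + 1)) =
      lineMap (a (i + 1)) (a (i + 2)) s := fun s => by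
    simp [lineMap_apply, add_comm]
  ext b
  simp only [gammaSet, hline, hQ]
  constructor
  · rintro ⟨g, hcont, hint, hsq, hreal⟩
    refine ⟨fun s => (a (i + 2) - a (i + 1)) * g s, by fun_prop, hint.const_mul _,
      fun s hs => ?_, ?_⟩
    · rw [mul_pow, hsq s hs, sq_edge_mul_integrand hne hs]
    · rwa [integral_const_mul]
  · rintro ⟨h, hcont, hint, hsq, hreal⟩
    refine ⟨fun s => (a (i + 2) - a (i + 1))⁻¹ * h s, by fun_prop, hint.const_mul _,
      fun s hs => ?_, ?_⟩
    · rw [mul_pow, hsq s hs, ← sq_edge_mul_integrand hne hs, inv_pow,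
        inv_mul_cancel_left₀ (pow_ne_zero 2 hCB)]
    · rwa [integral_const_mul, mul_inv_cancel_left₀ hCB]

lemma gammaSet_comp_perm {a : Fin 3 → ℂ} (ha : a.Injective) (σ : Equiv.Perm (Fin 3)) (i : Fin 3) :
    gammaSet (a ∘ σ) i = gammaSet a (σ i) := by
  rw [gammaSet_eq_realPeriodSet ha, gammaSet_eq_realPeriodSet (ha.comp σ.injective)]
  have hσ : σ (i + 1) = σ i + 1 ∧ σ (i + 2) = σ i + 2 ∨
      σ (i + 1) = σ i + 2 ∧ σ (i + 2) = σ i + 1 := by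
    revert σ i
    decide
  rcases hσ with ⟨h₁, h₂⟩ | ⟨h₁, h₂⟩ <;> simp only [Function.comp_apply, h₁, h₂]
  exact realPeriodSet_swap _ _ _

/-! ### Dilation of curves -/

lemma hasDerivAt_intervalIntegral_of_continuousOn {E : Type*} [NormedAddCommGroup E]
    [NormedSpace ℝ E] {F F' : ℝ → ℝ → E} {p q t r : ℝ} (hr : 0 < r)
    (hF : ∀ u ∈ Metric.closedBall t r, ContinuousOn (F u) (uIcc p q))
    (hF' : ContinuousOn (fun x : ℝ × ℝ => F' x.1 x.2) (Metric.closedBall t r ×ˢ uIcc p q))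
    (hderiv : ∀ u ∈ Metric.closedBall t r, ∀ s ∈ uIcc p q,
      HasDerivAt (fun u => F u s) (F' u s) u) :
    HasDerivAt (fun u => ∫ s in p..q, F u s) (∫ s in p..q, F' t s) t := by
  have ht : t ∈ Metric.closedBall t r := Metric.mem_closedBall_self hr.le
  have hnhds := Metric.closedBall_mem_nhds t hr
  have hF't : ContinuousOn (F' t) (uIcc p q) :=
    hF'.comp (f := fun s => (t, s)) (by fun_prop) fun s hs => ⟨ht, hs⟩
  obtain ⟨M, hM⟩ :=
    ((isCompact_closedBall t r).prod isCompact_uIcc).exists_bound_of_continuousOn hF'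
  refine (intervalIntegral.hasDerivAt_integral_of_dominated_loc_of_deriv_le hnhds
    (eventually_of_mem hnhds fun u hu => ?_) (hF t ht).intervalIntegrable ?_
    (ae_of_all _ fun s hs u hu => hM (u, s) ⟨hu, uIoc_subset_uIcc hs⟩) intervalIntegrable_const
    (ae_of_all _ fun s hs u hu => hderiv u hu s (uIoc_subset_uIcc hs))).2
  · exact ((hF u hu).mono uIoc_subset_uIcc).aestronglyMeasurable measurableSet_uIoc
  · exact (hF't.mono uIoc_subset_uIcc).aestronglyMeasurable measurableSet_uIoc

section Dilation

variable {G : ℂ → ℂ} {U : Set ℂ} {ζ ζ' : ℝ → ℂ} {p q : ℝ}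

lemma integral_deriv_comp_div (hU : IsOpen U) (hG : DifferentiableOn ℂ G U)
    (hζ : ∀ s ∈ uIcc p q, HasDerivAt ζ (ζ' s) s) (hζ' : ContinuousOn ζ' (uIcc p q))
    (hne : ∀ s ∈ uIcc p q, ζ s ≠ 0) {w : ℂ} (hw : w ≠ 0) (hmem : ∀ s ∈ uIcc p q, w / ζ s ∈ U) :
    ∫ s in p..q, deriv G (w / ζ s) * (1 / ζ s) * (ζ' s / ζ s) =
      (G (w / ζ p) - G (w / ζ q)) / w := by
  have hζc : ContinuousOn ζ (uIcc p q) := fun s hs => (hζ s hs).continuousAt.continuousWithinAt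
  have hcont : ContinuousOn (fun s => deriv G (w / ζ s) * (1 / ζ s) * (ζ' s / ζ s)) (uIcc p q) :=
    (((hG.deriv hU).continuousOn.comp (continuousOn_const.div hζc hne) hmem).mul
      (continuousOn_const.div hζc hne)).mul (hζ'.div hζc hne)
  have hprim : ∀ s ∈ uIcc p q, HasDerivAt (fun s => -(G (w / ζ s) / w))
      (deriv G (w / ζ s) * (1 / ζ s) * (ζ' s / ζ s)) s := fun s hs => by
    have hs₀ := hne s hs
    have hGs := (hG.differentiableAt (hU.mem_nhds (hmem s hs))).hasDerivAt
    refine ((hGs.comp s ((hasDerivAt_const s w).div (hζ s hs) hs₀)).div_const w).neg.congr_deriv ?_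
    field_simp
    ring
  rw [intervalIntegral.integral_eq_sub_of_hasDerivAt hprim hcont.intervalIntegrable]
  ring

-- The derivative of the integrand in `u` is the derivative of `-G (u / ζ s) / u` in `s`.
lemma hasDerivAt_integral_dilation (hU : IsOpen U) (hG : DifferentiableOn ℂ G U)
    (hζ : ∀ s ∈ uIcc p q, HasDerivAt ζ (ζ' s) s) (hζ' : ContinuousOn ζ' (uIcc p q))
    (hne : ∀ s ∈ uIcc p q, ζ s ≠ 0) {t : ℝ} (ht : t ≠ 0)
    (hmem : ∀ᶠ u : ℝ in 𝓝 t, ∀ s ∈ uIcc p q, u / ζ s ∈ U) :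
    HasDerivAt (fun u : ℝ => ∫ s in p..q, G (u / ζ s) * (ζ' s / ζ s))
      ((G (t / ζ p) - G (t / ζ q)) / t) t := by
  obtain ⟨r, hr, hball⟩ := Metric.nhds_basis_closedBall.eventually_iff.mp hmem
  have hζc : ContinuousOn ζ (uIcc p q) := fun s hs => (hζ s hs).continuousAt.continuousWithinAt
  have hlog : ContinuousOn (fun s => ζ' s / ζ s) (uIcc p q) := hζ'.div hζc hne
  rw [← integral_deriv_comp_div hU hG hζ hζ' hne (ofReal_ne_zero.mpr ht)
    (hball (Metric.mem_closedBall_self hr.le))]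
  refine hasDerivAt_intervalIntegral_of_continuousOn
    (F' := fun (u s : ℝ) => deriv G (u / ζ s) * (1 / ζ s) * (ζ' s / ζ s)) hr
    (fun u hu => (hG.continuousOn.comp (continuousOn_const.div hζc hne) (hball hu)).mul hlog) ?_
    fun u hu s hs => ?_
  · have hsnd : MapsTo Prod.snd (Metric.closedBall t r ×ˢ uIcc p q) (uIcc p q) := fun _ h => h.2
    have hζ₂ := hζc.comp continuousOn_snd hsnd
    have hquot : ContinuousOn (fun x : ℝ × ℝ => (x.1 : ℂ) / ζ x.2)
        (Metric.closedBall t r ×ˢ uIcc p q) :=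
      ContinuousOn.div (by fun_prop) hζ₂ fun x hx => hne _ hx.2
    exact (((hG.deriv hU).continuousOn.comp hquot fun x hx => hball hx.1 x.2 hx.2).mul
      (continuousOn_const.div hζ₂ fun x hx => hne _ hx.2)).mul
      (hlog.comp continuousOn_snd hsnd)
  · have hGu := (hG.differentiableAt (hU.mem_nhds (hball hu s hs))).hasDerivAt
    exact (HasDerivAt.comp u hGu (ofRealCLM.hasDerivAt.div_const (ζ s))).mul_const _

end Dilation

/-! ### Triangles -/

section Triangle

/-- Twice the signed area of the triangle with vertices `a 0, a 1, a 2`. -/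
noncomputable def orientedArea (a : Fin 3 → ℂ) : ℝ := ω (a 1 - a 0) (a 2 - a 0)

/-- Twice the signed area of the triangle spanned by `b` and the edge opposite to `a i`, that is,
`orientedArea a` times the `i`-th barycentric coordinate of `b`. -/
noncomputable def subarea (a : Fin 3 → ℂ) (b : ℂ) (i : Fin 3) : ℝ :=
  ω (a (i + 1) - b) (a (i + 2) - b)

/-- The open triangle with the positively oriented vertices `a 0, a 1, a 2`. For the opposite
orientation the set is empty. -/
def insideTriangle (a : Fin 3 → ℂ) : Set ℂ := {b | ∀ i, 0 < subarea a b i}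

variable {a : Fin 3 → ℂ}

lemma orientedArea_eq (a : Fin 3 → ℂ) (i : Fin 3) :
    orientedArea a = ω (a (i + 1) - a i) (a (i + 2) - a i) := by
  fin_cases i
  · rfl
  · exact (areaForm_sub_rotate (a 0) (a 1) (a 2)).symm
  · exact areaForm_sub_rotate (a 2) (a 0) (a 1)

lemma sum_subarea (a : Fin 3 → ℂ) (b : ℂ) : ∑ i, subarea a b i = orientedArea a := by
  simp [Fin.sum_univ_three, subarea, orientedArea]
  ring

lemma orientedArea_pos (hb : ∀ i, 0 < subarea a b i) : 0 < orientedArea a :=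
  sum_subarea a b ▸ Finset.sum_pos (fun i _ => hb i) Finset.univ_nonempty

lemma sum_subarea_smul_sub (a : Fin 3 → ℂ) (b : ℂ) : ∑ i, subarea a b i • (a i - b) = 0 := by
  rw [Fin.sum_univ_three]
  exact areaForm_smul_cyclic_sum (a 0 - b) (a 1 - b) (a 2 - b)

lemma centerMass_subarea (ha : orientedArea a ≠ 0) (b : ℂ) :
    Finset.univ.centerMass (subarea a b) a = b := by
  have hsum := sum_subarea_smul_sub a b
  simp only [smul_sub, Finset.sum_sub_distrib, ← Finset.sum_smul, sum_subarea, sub_eq_zero] at hsum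
  rw [Finset.centerMass, sum_subarea, hsum, inv_smul_smul₀ ha]

lemma insideTriangle_subset_convexHull (a : Fin 3 → ℂ) :
    insideTriangle a ⊆ convexHull ℝ (range a) := fun b hb => by
  have harea := orientedArea_pos hb
  rw [← centerMass_subarea harea.ne' b]
  exact Finset.univ.centerMass_mem_convexHull (fun i _ => (hb i).le)
    (harea.trans_eq (sum_subarea a b).symm) fun i _ => mem_range_self i

lemma isOpen_insideTriangle (a : Fin 3 → ℂ) : IsOpen (insideTriangle a) := by
  simp only [insideTriangle, ofPred_forall]
  refine isOpen_iInter_of_finite fun i => isOpen_lt continuous_const ?_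
  simp only [subarea, Complex.areaForm]
  fun_prop

lemma insideTriangle_subset_interior_convexHull (a : Fin 3 → ℂ) :
    insideTriangle a ⊆ interior (convexHull ℝ (range a)) :=
  interior_maximal (insideTriangle_subset_convexHull a) (isOpen_insideTriangle a)

lemma eq_add_one_or_eq_add_one {i j : Fin 3} (h : i ≠ j) : j = i + 1 ∨ i = j + 1 := by
  decide +revert

lemma injective_of_orientedArea_ne_zero (ha : orientedArea a ≠ 0) : a.Injective := by
  have hne : ∀ i, a i ≠ a (i + 1) := fun i h => ha (by
    rw [orientedArea_eq a i, ← h, sub_self, map_zero, LinearMap.zero_apply])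
  intro i j hij
  by_contra hne'
  rcases eq_add_one_or_eq_add_one hne' with rfl | rfl
  · exact absurd hij (hne i)
  · exact absurd hij.symm (hne j)

lemma collinear_of_orientedArea_eq_zero (ha : orientedArea a = 0) : Collinear ℝ (range a) := by
  have hrange : range a = {a 2, a 0, a 1} := by
    ext x
    simp only [mem_range, Fin.exists_fin_succ, mem_insert_iff, mem_singleton_iff]
    grind
  rw [hrange]
  by_cases h : a 1 - a 0 = 0
  · rw [sub_eq_zero.mp h, insert_eq_of_mem (mem_singleton _)]
    exact collinear_pair ℝ _ _
  · have hreal : (((a 2 - a 0) / (a 1 - a 0)).re : ℂ) = (a 2 - a 0) / (a 1 - a 0) :=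
      Complex.ext rfl (by rw [ofReal_im, im_div_eq_areaForm, ← orientedArea, ha, zero_div])
    have hline : a 2 = lineMap (a 0) (a 1) ((a 2 - a 0) / (a 1 - a 0)).re := by
      rw [lineMap_apply, vsub_eq_sub, vadd_eq_add, real_smul, hreal, div_mul_cancel₀ _ h,
        sub_add_cancel]
    exact collinear_insert_of_mem_affineSpan_pair (hline ▸ lineMap_mem_affineSpan_pair _ _ _)

lemma exists_perm_orientedArea_pos (ha : orientedArea a ≠ 0) :
    ∃ σ : Equiv.Perm (Fin 3), 0 < orientedArea (a ∘ σ) := by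
  rcases ha.lt_or_gt with h | h
  · refine ⟨Equiv.swap 1 2, ?_⟩
    rw [orientedArea, Complex.orientation.areaForm_swap] at h
    exact neg_lt_zero.mp h
  · exact ⟨1, h⟩

end Triangle

/-! ### The sum of the three periods -/

section BranchAtInfinity

variable {ι : Type*}

/-- The branch of `√(ζⁿ / ∏ᵢ (ζ - a i))` at infinity, in the coordinate `w = 1 / ζ`. -/
noncomputable def branchAtInfinity [Fintype ι] (a : ι → ℂ) (w : ℂ) : ℂ :=
  ∏ i, (sqrt (1 - a i * w))⁻¹

/-- The plane cut along the rays from `1 / a i` to infinity, where `branchAtInfinity a` is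
holomorphic. -/
def cutPlane (a : ι → ℂ) : Set ℂ := {w | ∀ i, 1 - a i * w ∈ slitPlane}

lemma isOpen_cutPlane [Finite ι] (a : ι → ℂ) : IsOpen (cutPlane a) := by
  simp only [cutPlane, ofPred_forall]
  exact isOpen_iInter_of_finite fun i => isOpen_slitPlane.preimage (by fun_prop)

variable [Fintype ι]

lemma differentiableOn_branchAtInfinity (a : ι → ℂ) :
    DifferentiableOn ℂ (branchAtInfinity a) (cutPlane a) := fun w hw =>
  (DifferentiableAt.fun_finsetProd fun i _ =>
    (DifferentiableAt.comp (g := sqrt) w (differentiableAt_sqrt (hw i)) (by fun_prop)).inv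
      (sqrt_ne_zero (slitPlane_ne_zero (hw i)))).differentiableWithinAt

lemma branchAtInfinity_zero (a : ι → ℂ) : branchAtInfinity a 0 = 1 := by simp [branchAtInfinity]

lemma measurable_branchAtInfinity (a : ι → ℂ) : Measurable (branchAtInfinity a) := by
  have := measurable_sqrt
  unfold branchAtInfinity
  fun_prop

end BranchAtInfinity

lemma areaForm_sub_lineMap (B C : ℂ) (s : ℝ) : ω (C - B) (lineMap B C s) = -ω B C := by
  simp [lineMap_apply_module]
  ring

lemma lineMap_ne_zero (hBC : ω B C ≠ 0) (s : ℝ) : (lineMap B C s : ℂ) ≠ 0 := by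
  simpa using lineMap_sub_ne_zero (b := 0) (by simpa only [sub_zero] using hBC) s

section SupportingLine

variable {X : ℂ} {t : ℝ}

lemma one_sub_mul_div_lineMap_mem_slitPlane (hBC : 0 < ω B C) (hX : -ω B C ≤ ω (C - B) X)
    (ht : t ∈ Icc (0 : ℝ) 1) {s : ℝ} (hne : t = 1 → X ≠ lineMap B C s) :
    1 - X * (t / lineMap B C s) ∈ slitPlane := by
  have hζ := lineMap_ne_zero hBC.ne' s
  by_contra h
  obtain ⟨hre, him⟩ := Complex.nonpos_iff.mp (not_not.mp (mem_slitPlane_iff_not_le_zero.not.mp h))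
  set r := 1 - (1 - X * (t / lineMap B C s)).re
  have hr : X * (t / lineMap B C s) = r := by
    apply Complex.ext <;> simp [r] at him ⊢
    linarith
  have hline : t • X = r • lineMap B C s := by
    rw [real_smul, real_smul, ← hr]
    field_simp
  have harea := congrArg (ω (C - B)) hline
  rw [map_smul, map_smul, areaForm_sub_lineMap, smul_eq_mul, smul_eq_mul] at harea
  have hrt : r ≤ t := by nlinarith [ht.1]
  have hr₁ : 1 ≤ r := by simpa [r] using hre
  have ht₁ : t = 1 := le_antisymm ht.2 (hr₁.trans hrt)
  refine hne ht₁ ?_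
  rwa [le_antisymm (hrt.trans ht.2) hr₁, ht₁, one_smul, one_smul] at hline

lemma norm_lineMap_sub_le (hBC : 0 < ω B C) (hX : -ω B C ≤ ω (C - B) X)
    (ht : t ∈ Icc (0 : ℝ) 1) (s : ℝ) :
    ‖lineMap B C s - X‖ ≤ (1 + ‖X‖ * ‖C - B‖ / ω B C) * ‖lineMap B C s - t • X‖ := by
  have hdist : (1 - t) * ω B C ≤ ‖C - B‖ * ‖lineMap B C s - t • X‖ := calc
    (1 - t) * ω B C ≤ -ω (C - B) (lineMap B C s - t • X) := by
      rw [map_sub, map_smul, areaForm_sub_lineMap, smul_eq_mul]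
      nlinarith [ht.1]
    _ ≤ _ := (neg_le_abs _).trans (Complex.orientation.abs_areaForm_le _ _)
  have htri : ‖lineMap B C s - X‖ ≤ ‖lineMap B C s - t • X‖ + (1 - t) * ‖X‖ := calc
    ‖lineMap B C s - X‖ = ‖(lineMap B C s - t • X) - (1 - t) • X‖ := by
      rw [sub_smul, one_smul]
      ring_nf
    _ ≤ _ := (norm_sub_le _ _).trans_eq (by
      rw [norm_smul, Real.norm_of_nonneg (sub_nonneg.mpr ht.2)])
  have hdist' : 1 - t ≤ ‖C - B‖ * ‖lineMap B C s - t • X‖ / ω B C := (le_div_iff₀ hBC).mpr hdist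
  calc ‖lineMap B C s - X‖ ≤ ‖lineMap B C s - t • X‖ + (1 - t) * ‖X‖ := htri
    _ ≤ ‖lineMap B C s - t • X‖ + ‖C - B‖ * ‖lineMap B C s - t • X‖ / ω B C * ‖X‖ := by gcongr
    _ = _ := by ring

lemma norm_inv_sqrt_one_sub_le (hBC : 0 < ω B C) (hX : -ω B C ≤ ω (C - B) X)
    (ht : t ∈ Icc (0 : ℝ) 1) {s : ℝ} (hne : X ≠ lineMap B C s) :
    ‖(sqrt (1 - X * (t / lineMap B C s)))⁻¹‖ ≤
      √(1 + ‖X‖ * ‖C - B‖ / ω B C) * ‖(sqrt (1 - X * (1 / lineMap B C s)))⁻¹‖ := by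
  have hζ := lineMap_ne_zero hBC.ne' s
  have hfactor : ∀ u : ℝ, ‖1 - X * (u / lineMap B C s)‖ =
      ‖lineMap B C s - u • X‖ / ‖lineMap B C s‖ := fun u => by
    rw [← norm_div, real_smul]
    congr 1
    field_simp
  have hpos : ∀ {u : ℝ}, u ∈ Icc (0 : ℝ) 1 → 0 < ‖1 - X * (u / lineMap B C s)‖ := fun hu =>
    norm_pos_iff.mpr (slitPlane_ne_zero
      (one_sub_mul_div_lineMap_mem_slitPlane hBC hX hu fun _ => hne))
  have hone := hfactor 1
  have hpos₁ := hpos (u := 1) (by simp)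
  rw [ofReal_one, one_smul] at hone
  rw [ofReal_one] at hpos₁
  rw [norm_inv, norm_inv, norm_sqrt, norm_sqrt, ← Real.sqrt_inv, ← Real.sqrt_inv,
    ← Real.sqrt_mul (by positivity)]
  gcongr
  rw [← div_eq_mul_inv, inv_le_comm₀ (hpos ht) (by positivity), inv_div,
    div_le_iff₀ (by positivity), hone, hfactor, ← mul_div_right_comm, mul_comm]
  gcongr
  exact norm_lineMap_sub_le hBC hX ht s

end SupportingLine

section DilatedPeriod

variable {ι : Type*} [Fintype ι] {a : ι → ℂ}

/-- The integral of `branchAtInfinity a (t / ζ) / ζ` over the edge from `B` to `C`. It joins the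
period of the edge, up to a factor `I`, at `t = 1` to a logarithm at `t = 0`. -/
noncomputable def dilatedPeriod (a : ι → ℂ) (B C : ℂ) (t : ℝ) : ℂ :=
  ∫ s in Ioo (0 : ℝ) 1, branchAtInfinity a (t / lineMap B C s) * ((C - B) / lineMap B C s)

lemma dilatedPeriod_eq_intervalIntegral (a : ι → ℂ) (B C : ℂ) (t : ℝ) :
    dilatedPeriod a B C t =
      ∫ s in (0 : ℝ)..1, branchAtInfinity a (t / lineMap B C s) * ((C - B) / lineMap B C s) := by
  rw [intervalIntegral.integral_of_le zero_le_one, integral_Ioc_eq_integral_Ioo, dilatedPeriod]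

lemma exists_norm_branchAtInfinity_le (hBC : 0 < ω B C)
    (hsupp : ∀ i, -ω B C ≤ ω (C - B) (a i)) :
    ∃ M, ∀ t ∈ Icc (0 : ℝ) 1, ∀ s : ℝ, (∀ i, a i ≠ lineMap B C s) →
      ‖branchAtInfinity a (t / lineMap B C s)‖ ≤ M * ‖branchAtInfinity a (1 / lineMap B C s)‖ := by
  refine ⟨∏ i, √(1 + ‖a i‖ * ‖C - B‖ / ω B C), fun t ht s hne => ?_⟩
  rw [branchAtInfinity, branchAtInfinity, norm_prod, norm_prod, ← Finset.prod_mul_distrib]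
  exact Finset.prod_le_prod (fun _ _ => norm_nonneg _) fun i _ =>
    norm_inv_sqrt_one_sub_le hBC (hsupp i) ht (hne i)

lemma continuousOn_dilatedPeriod (hBC : 0 < ω B C) (hsupp : ∀ i, -ω B C ≤ ω (C - B) (a i))
    (hedge : ∀ s ∈ Ioo (0 : ℝ) 1, ∀ i, a i ≠ lineMap B C s)
    (hint : IntegrableOn (fun s : ℝ =>
      branchAtInfinity a (1 / lineMap B C s) * ((C - B) / lineMap B C s)) (Ioo 0 1)) :
    ContinuousOn (dilatedPeriod a B C) (Icc 0 1) := by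
  intro t ht
  obtain ⟨M, hM⟩ := exists_norm_branchAtInfinity_le hBC hsupp
  have hline : Measurable (lineMap B C : ℝ → ℂ) := lineMap_continuous.measurable
  have hG := measurable_branchAtInfinity a
  refine continuousWithinAt_of_dominated (.of_forall fun u => Measurable.aestronglyMeasurable
    (by fun_prop)) ?_ (hint.norm.const_mul M) (ae_restrict_of_forall_mem measurableSet_Ioo
      fun s hs => ContinuousAt.continuousWithinAt ?_)
  · filter_upwards [self_mem_nhdsWithin] with u hu
    refine ae_restrict_of_forall_mem measurableSet_Ioo fun s hs => ?_
    rw [norm_mul, norm_mul, ← mul_assoc]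
    exact mul_le_mul_of_nonneg_right (hM u hu s (hedge s hs)) (norm_nonneg _)
  · have hmem : (t / lineMap B C s : ℂ) ∈ cutPlane a := fun i =>
      one_sub_mul_div_lineMap_mem_slitPlane hBC (hsupp i) ht fun _ => hedge s hs i
    have hGt := ((differentiableOn_branchAtInfinity a).differentiableAt
      ((isOpen_cutPlane a).mem_nhds hmem)).continuousAt
    exact (ContinuousAt.comp (g := branchAtInfinity a) (f := fun u : ℝ => u / lineMap B C s) hGt
      (by fun_prop)).mul continuousAt_const

lemma hasDerivAt_dilatedPeriod (hBC : 0 < ω B C) (hsupp : ∀ i, -ω B C ≤ ω (C - B) (a i)) {t : ℝ}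
    (ht : t ∈ Ioo (0 : ℝ) 1) :
    HasDerivAt (dilatedPeriod a B C)
      ((branchAtInfinity a (t / B) - branchAtInfinity a (t / C)) / t) t := by
  have hmem : ∀ᶠ u : ℝ in 𝓝 t, ∀ s ∈ uIcc (0 : ℝ) 1, u / lineMap B C s ∈ cutPlane a := by
    filter_upwards [Ioo_mem_nhds ht.1 ht.2] with u hu s _ i
    exact one_sub_mul_div_lineMap_mem_slitPlane hBC (hsupp i) (Ioo_subset_Icc_self hu)
      fun h => absurd h hu.2.ne
  have hderiv := hasDerivAt_integral_dilation (isOpen_cutPlane a)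
    (differentiableOn_branchAtInfinity a) (fun s _ => hasDerivAt_lineMap (a := B) (b := C))
    continuousOn_const (fun s _ => lineMap_ne_zero hBC.ne' s) ht.1.ne' hmem
  simp only [lineMap_apply_zero, lineMap_apply_one] at hderiv
  exact hderiv.congr_of_eventuallyEq
    (.of_forall fun u => dilatedPeriod_eq_intervalIntegral a B C u)

lemma integral_logDeriv_lineMap (hBC : 0 < ω B C) :
    ∫ s in (0 : ℝ)..1, (C - B) / lineMap B C s = log (C / B) := by
  have hB : B ≠ 0 := fun h => by simp [h] at hBC
  have hslit : ∀ s ∈ uIcc (0 : ℝ) 1, lineMap B C s / B ∈ slitPlane := fun s hs => by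
    rw [uIcc_of_le zero_le_one] at hs
    have him : (lineMap B C s / B).im = s * (C / B).im := by
      rw [lineMap_apply_module, add_div, smul_div_assoc, div_self hB, smul_div_assoc]
      simp
    rcases hs.1.eq_or_lt with rfl | hs₀
    · simp [hB]
    · exact Or.inr (him ▸ (mul_pos hs₀ (im_div_pos hBC)).ne')
  have hprim : ∀ s ∈ uIcc (0 : ℝ) 1,
      HasDerivAt (fun s : ℝ => log (lineMap B C s / B)) ((C - B) / lineMap B C s) s :=
    fun s hs => ((hasDerivAt_lineMap.div_const B).clog_real (hslit s hs)).congr_deriv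
      (div_div_div_cancel_right₀ hB _ _)
  have hcont : Continuous fun s : ℝ => (C - B) / lineMap B C s :=
    Continuous.div (by fun_prop) (by fun_prop) (lineMap_ne_zero hBC.ne')
  rw [intervalIntegral.integral_eq_sub_of_hasDerivAt hprim (hcont.intervalIntegrable 0 1)]
  simp [hB]

lemma re_dilatedPeriod_zero (a : ι → ℂ) (hBC : 0 < ω B C) :
    (dilatedPeriod a B C 0).re = Real.log ‖C‖ - Real.log ‖B‖ := by
  have hB : B ≠ 0 := fun h => by simp [h] at hBC
  have hC : C ≠ 0 := fun h => by simp [h] at hBC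
  simp only [dilatedPeriod_eq_intervalIntegral, ofReal_zero, zero_div, branchAtInfinity_zero,
    one_mul]
  rw [integral_logDeriv_lineMap hBC, log_re, norm_div,
    Real.log_div (norm_ne_zero_iff.mpr hC) (norm_ne_zero_iff.mpr hB)]

end DilatedPeriod

section Sum

lemma sum_translate_sub_translate {G M : Type*} [AddGroup G] [Fintype G] [AddCommGroup M]
    (f : G → M) (g h : G) : ∑ x, (f (x + g) - f (x + h)) = 0 := by
  rw [Finset.sum_sub_distrib, sub_eq_zero]
  exact (Equiv.sum_comp (Equiv.addRight g) f).trans (Equiv.sum_comp (Equiv.addRight h) f).symm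

variable {a : Fin 3 → ℂ}

lemma neg_areaForm_le_areaForm_edge (hpos : ∀ i, 0 < ω (a (i + 1)) (a (i + 2))) (i j : Fin 3) :
    -ω (a (i + 1)) (a (i + 2)) ≤ ω (a (i + 2) - a (i + 1)) (a j) := by
  have h₀ := hpos 0
  have h₁ := hpos 1
  have h₂ := hpos 2
  fin_cases i <;> fin_cases j <;> simp at h₀ h₁ h₂ ⊢ <;> linarith

lemma ne_lineMap_edge (hpos : ∀ i, 0 < ω (a (i + 1)) (a (i + 2))) (i j : Fin 3) {s : ℝ}
    (hs : s ∈ Ioo (0 : ℝ) 1) : a j ≠ lineMap (a (i + 1)) (a (i + 2)) s := by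
  intro h
  have harea := fun δ => areaForm_lineMap_sub δ (a (i + 1)) (a (i + 2)) 0 s
  simp only [sub_zero, ← h] at harea
  have hleft : 0 < ω (a (i + 1)) (a j) := by
    rw [harea, Complex.orientation.areaForm_apply_self, mul_zero, zero_add]
    exact mul_pos hs.1 (hpos i)
  have hright : 0 < ω (a j) (a (i + 2)) := by
    rw [Complex.orientation.areaForm_swap, harea, Complex.orientation.areaForm_apply_self,
      mul_zero, add_zero, ← mul_neg, ← Complex.orientation.areaForm_swap]
    exact mul_pos (sub_pos.mpr hs.2) (hpos i)
  have h₀ := hpos 0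
  have h₁ := hpos 1
  have h₂ := hpos 2
  fin_cases i <;> fin_cases j <;> simp at h₀ h₁ h₂ hleft hright <;> linarith

lemma sqrt_smul_mul_sqrt_smul_neg {v : ℂ} (hv : 0 < v.im) {s : ℝ} (hs : s ∈ Ioo (0 : ℝ) 1) :
    sqrt (s * v) * sqrt ((1 - s : ℝ) * -v) = -I * v / arcsineWeight s := by
  have hv₀ : v ≠ 0 := fun h => by simp [h] at hv
  rw [sqrt_ofReal_mul hs.1 hv₀, sqrt_ofReal_mul (sub_pos.mpr hs.2) (neg_ne_zero.mpr hv₀),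
    mul_mul_mul_comm, sqrt_mul_sqrt_neg hv, arcsineWeight, Real.sqrt_mul hs.1.le]
  push_cast
  rw [div_inv_eq_mul, mul_comm]

lemma one_sub_left_mul_one_div_lineMap {s : ℝ} (hζ : (lineMap B C s : ℂ) ≠ 0) :
    1 - B * (1 / lineMap B C s) = s * ((C - B) / lineMap B C s) := by
  field_simp
  simp [lineMap_apply]

lemma one_sub_right_mul_one_div_lineMap {s : ℝ} (hζ : (lineMap B C s : ℂ) ≠ 0) :
    1 - C * (1 / lineMap B C s) = (1 - s : ℝ) * -((C - B) / lineMap B C s) := by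
  field_simp
  simp [lineMap_apply]
  ring

lemma branchAtInfinity_edge (hpos : ∀ i, 0 < ω (a (i + 1)) (a (i + 2))) (i : Fin 3) {s : ℝ}
    (hs : s ∈ Ioo (0 : ℝ) 1) :
    branchAtInfinity a (1 / lineMap (a (i + 1)) (a (i + 2)) s) *
        ((a (i + 2) - a (i + 1)) / lineMap (a (i + 1)) (a (i + 2)) s) =
      I * branch (a i) (a (i + 1)) (a (i + 2)) 0 s := by
  set A := a i
  set B := a (i + 1)
  set C := a (i + 2)
  set ζ : ℂ := lineMap B C s
  set v := (C - B) / ζ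
  have hζ : ζ ≠ 0 := lineMap_ne_zero (hpos i).ne' s
  have hv : 0 < v.im := by
    refine im_div_pos ((hpos i).trans_eq ?_)
    simpa only [sub_zero] using (areaForm_lineMap_sub_edge B C 0 s).symm
  have hv₀ : v ≠ 0 := fun h => by simp [h] at hv
  have hA : 1 - A * (1 / ζ) ∈ slitPlane := by
    simpa using one_sub_mul_div_lineMap_mem_slitPlane (t := 1) (hpos i)
      (neg_areaForm_le_areaForm_edge hpos i i) (by simp) fun _ => ne_lineMap_edge hpos i i hs
  have hB : 1 - B * (1 / ζ) = s * v := one_sub_left_mul_one_div_lineMap hζ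
  have hC : 1 - C * (1 / ζ) = (1 - s : ℝ) * -v := one_sub_right_mul_one_div_lineMap hζ
  have hratio : (ζ - 0) / (ζ - A) = (1 - A * (1 / ζ))⁻¹ := by
    rw [sub_zero]
    field_simp
  rw [branchAtInfinity, prod_univ_three_rotate _ i, branch, hratio, sqrt_inv hA, hB, hC,
    mul_assoc (sqrt _)⁻¹, ← mul_inv, sqrt_smul_mul_sqrt_smul_neg hv hs]
  field_simp
  simp [A, neg_div]

lemma continuousOn_sum_re_dilatedPeriod (hpos : ∀ i, 0 < ω (a (i + 1)) (a (i + 2))) :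
    ContinuousOn (fun t => ∑ i, (dilatedPeriod a (a (i + 1)) (a (i + 2)) t).re) (Icc 0 1) := by
  refine continuousOn_finsetSum _ fun i _ => continuous_re.comp_continuousOn
    (continuousOn_dilatedPeriod (hpos i) (neg_areaForm_le_areaForm_edge hpos i)
      (fun s hs j => ne_lineMap_edge hpos i j hs) ?_)
  have hW : 0 < ω (a (i + 1) - a i) (a (i + 2) - a i) :=
    orientedArea_eq a i ▸ orientedArea_pos (b := 0) (by simpa only [subarea, sub_zero] using hpos)
  have hint : IntegrableOn (fun s => I * branch (a i) (a (i + 1)) (a (i + 2)) 0 s) (Ioo 0 1) :=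
    (integrableOn_branch hW.ne' 0).const_mul I
  exact hint.congr_fun
    (fun s hs => (branchAtInfinity_edge hpos i hs).symm) measurableSet_Ioo

lemma hasDerivAt_sum_re_dilatedPeriod (hpos : ∀ i, 0 < ω (a (i + 1)) (a (i + 2))) {t : ℝ}
    (ht : t ∈ Ioo (0 : ℝ) 1) :
    HasDerivAt (fun t => ∑ i, (dilatedPeriod a (a (i + 1)) (a (i + 2)) t).re) 0 t := by
  refine (HasDerivAt.fun_sum fun i _ => reCLM.hasFDerivAt.comp_hasDerivAt t
    (hasDerivAt_dilatedPeriod (hpos i) (neg_areaForm_le_areaForm_edge hpos i) ht)).congr_deriv ?_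
  rw [← map_sum, ← Finset.sum_div,
    sum_translate_sub_translate fun i => branchAtInfinity a (t / a i), zero_div, map_zero]

lemma sum_im_period_zero (hpos : ∀ i, 0 < ω (a (i + 1)) (a (i + 2))) :
    ∑ i, (period (a i) (a (i + 1)) (a (i + 2)) 0).im = 0 := by
  have hone : ∀ i, (dilatedPeriod a (a (i + 1)) (a (i + 2)) 1).re =
      -(period (a i) (a (i + 1)) (a (i + 2)) 0).im := fun i => by
    rw [← I_mul_re, period, ← integral_const_mul, dilatedPeriod]
    congr 1
    refine setIntegral_congr_fun measurableSet_Ioo fun s hs => ?_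
    simpa using branchAtInfinity_edge hpos i hs
  have hzero : ∑ i, (dilatedPeriod a (a (i + 1)) (a (i + 2)) 0).re = 0 := by
    simp only [re_dilatedPeriod_zero _ (hpos _)]
    exact sum_translate_sub_translate (fun i => Real.log ‖a i‖) 2 1
  obtain ⟨t, -, hslope⟩ := exists_hasDerivAt_eq_slope _ _ one_pos
    (continuousOn_sum_re_dilatedPeriod hpos) fun t ht => hasDerivAt_sum_re_dilatedPeriod hpos ht
  simpa only [hzero, hone, Finset.sum_neg_distrib, sub_zero, div_one, zero_eq_neg] using hslope

end Sum

/-! ### Uniqueness -/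

section Uniqueness

variable {b' : ℂ} {a : Fin 3 → ℂ}

/-- The imaginary part of the period along the edge opposite to `a i`. Inside a positively oriented
triangle its zero set is the curve `γ_i`. -/
noncomputable def imPeriod (a : Fin 3 → ℂ) (i : Fin 3) (b : ℂ) : ℝ :=
  (period (a i) (a (i + 1)) (a (i + 2)) b).im

lemma period_translate (A B C b : ℂ) : period (A - b) (B - b) (C - b) 0 = period A B C b := by
  have hline : ∀ s : ℝ, lineMap (B - b) (C - b) s = lineMap B C s - b := fun s => by
    simp only [lineMap_apply_module]
    module
  simp only [period, branch, hline, sub_zero, sub_sub_sub_cancel_right]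

lemma sum_imPeriod (hb : b ∈ insideTriangle a) : ∑ i, imPeriod a i b = 0 := by
  simp only [imPeriod, ← period_translate _ _ _ b]
  exact sum_im_period_zero hb

lemma forall_cyclic {p : Fin 3 → Prop} (i : Fin 3) :
    (∀ j, p j) ↔ p i ∧ p (i + 1) ∧ p (i + 2) := by
  refine ⟨fun h => ⟨h _, h _, h _⟩, fun ⟨h₀, h₁, h₂⟩ j => ?_⟩
  have hcases : ∀ i j : Fin 3, j = i ∨ j = i + 1 ∨ j = i + 2 := by decide
  rcases hcases i j with rfl | rfl | rfl <;> assumption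

lemma imPeriod_eq_zero_of_pair (hb : b ∈ insideTriangle a) {i : Fin 3} (hi : imPeriod a i b = 0)
    (hi' : imPeriod a (i + 1) b = 0) (j : Fin 3) : imPeriod a j b = 0 := by
  have hsum := sum_imPeriod hb
  rw [sum_univ_three_rotate _ i, hi, hi', zero_add, zero_add] at hsum
  exact (forall_cyclic (p := fun j => imPeriod a j b = 0) i).mpr ⟨hi, hi', hsum⟩ j

lemma mem_gammaSet_iff (hb : b ∈ insideTriangle a) (i : Fin 3) :
    b ∈ gammaSet a i ↔ imPeriod a i b = 0 := by
  have ha := orientedArea_pos hb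
  rw [gammaSet_eq_realPeriodSet (injective_of_orientedArea_ne_zero ha.ne') i]
  exact mem_realPeriodSet_iff (orientedArea_eq a i ▸ ha) (hb i)

lemma sign_areaForm_eq_of_mem_realPeriodSet (hW : ω (B - A) (C - A) ≠ 0)
    (hb : b ∈ realPeriodSet A B C) :
    SignType.sign (ω (C - b) (A - b)) = SignType.sign (ω (A - b) (B - b)) := by
  obtain ⟨s, hs, r, rfl⟩ := exists_eq_lineMap_of_mem_realPeriodSet hW hb
  set b : ℂ := lineMap (lineMap B C s) A r with hb
  have heq : s * ω (C - b) (A - b) = (1 - s) * ω (A - b) (B - b) := by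
    simp [hb, lineMap_apply_module]
    ring
  rw [← one_mul (SignType.sign _), ← sign_pos hs.1, ← sign_mul, heq, sign_mul,
    sign_pos (sub_pos.mpr hs.2), one_mul]

lemma mem_insideTriangle_of_mem_gammaSet (ha : 0 < orientedArea a) {i : Fin 3}
    (hi : b ∈ gammaSet a i) (hi' : b ∈ gammaSet a (i + 1)) : b ∈ insideTriangle a := by
  have hsign : ∀ j, b ∈ gammaSet a j →
      SignType.sign (subarea a b (j + 1)) = SignType.sign (subarea a b (j + 2)) := fun j hj => by
    rw [gammaSet_eq_realPeriodSet (injective_of_orientedArea_ne_zero ha.ne') j] at hj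
    have h := sign_areaForm_eq_of_mem_realPeriodSet (orientedArea_eq a j ▸ ha.ne') hj
    fin_cases j <;> exact h
  have hi₁ := hsign i hi
  have hi₂ := hsign (i + 1) hi'
  simp only [add_assoc, Fin.reduceAdd, add_zero] at hi₂
  have hall : ∀ j, SignType.sign (subarea a b j) = SignType.sign (subarea a b i) :=
    (forall_cyclic i).mpr ⟨rfl, hi₁.trans hi₂, hi₂⟩
  obtain ⟨k, hk⟩ : ∃ k, 0 < subarea a b k := by
    by_contra! h
    exact ha.not_ge (sum_subarea a b ▸ Finset.sum_nonpos fun j _ => h j)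
  exact fun j => sign_eq_one_iff.mp (((hall j).trans (hall k).symm).trans (sign_pos hk))

lemma imPeriod_lt (hb : b ∈ insideTriangle a) (hne : b' ≠ b) {i : Fin 3}
    (h₁ : ω (b' - b) (a (i + 1) - b) ≤ 0) (h₂ : ω (b' - b) (a (i + 2) - b) ≤ 0) :
    imPeriod a i b' < imPeriod a i b := by
  have hW : 0 < ω (a (i + 1) - a i) (a (i + 2) - a i) := orientedArea_eq a i ▸ orientedArea_pos hb
  have h₀ : 0 ≤ ω (b' - b) (a i - b) := by
    have hsum := congrArg (ω (b' - b)) (sum_subarea_smul_sub a b)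
    rw [map_sum, map_zero, sum_univ_three_rotate _ i] at hsum
    simp only [map_smul, smul_eq_mul] at hsum
    have hi := hb i
    have hi₁ := mul_nonpos_of_nonneg_of_nonpos (hb (i + 1)).le h₁
    have hi₂ := mul_nonpos_of_nonneg_of_nonpos (hb (i + 2)).le h₂
    exact nonneg_of_mul_nonneg_right (by linarith) hi
  refine im_period_lt hW.ne' hne ?_ ?_ h₁ h₂ <;>
  · rw [← sub_sub_sub_cancel_right _ (a i) b, map_sub]
    linarith

lemma exists_pair_nonpos_or_nonneg (f : Fin 3 → ℝ) :
    ∃ i, f (i + 1) ≤ 0 ∧ f (i + 2) ≤ 0 ∨ 0 ≤ f (i + 1) ∧ 0 ≤ f (i + 2) := by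
  simp only [Fin.exists_fin_succ]
  rcases le_total (f 0) 0 with h₀ | h₀ <;> rcases le_total (f 1) 0 with h₁ | h₁ <;>
    rcases le_total (f 2) 0 with h₂ | h₂ <;> simp [*]

lemma eq_of_imPeriod_eq (hb : b ∈ insideTriangle a) (hb' : b' ∈ insideTriangle a)
    (h : ∀ i, imPeriod a i b = imPeriod a i b') : b = b' := by
  by_contra hne
  have hneg : ∀ x, ω (b - b') (x - b') = -ω (b' - b) (x - b) := fun x => by
    simp
    ring
  obtain ⟨i, ⟨h₁, h₂⟩ | ⟨h₁, h₂⟩⟩ := exists_pair_nonpos_or_nonneg fun j => ω (b' - b) (a j - b)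
  · exact (imPeriod_lt hb (Ne.symm hne) h₁ h₂).ne (h i).symm
  · refine (imPeriod_lt hb' hne ?_ ?_).ne (h i) <;> rw [hneg] <;> exact neg_nonpos.mpr ‹_›

end Uniqueness

/-! ### Existence -/

section Existence

lemma continuousOn_of_strictAntiOn_of_eq_zero {X α : Type*} [TopologicalSpace X] [LinearOrder α]
    [TopologicalSpace α] [OrderTopology α] {F : X → α → ℝ} {τ : X → α} {S : Set X} {I : Set α}
    (hI : I.OrdConnected) (hF : ∀ t ∈ I, ContinuousOn (F · t) S)
    (hanti : ∀ x ∈ S, StrictAntiOn (F x) I) (hτ : MapsTo τ S I) (hroot : ∀ x ∈ S, F x (τ x) = 0) :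
    ContinuousOn τ S := by
  intro x hx
  refine tendsto_order.mpr ⟨fun c hc => ?_, fun c hc => ?_⟩
  · by_cases hcI : c ∈ I
    · have hpos : 0 < F x c := hroot x hx ▸ hanti x hx hcI (hτ hx) hc
      filter_upwards [(hF c hcI x hx).eventually (lt_mem_nhds hpos), self_mem_nhdsWithin]
        with y hy hyS
      exact ((hanti y hyS).lt_iff_gt (hτ hyS) hcI).mp ((hroot y hyS).trans_lt hy)
    · filter_upwards [self_mem_nhdsWithin] with y hyS
      exact not_le.mp fun hle => hcI (hI.out (hτ hyS) (hτ hx) ⟨hle, hc.le⟩)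
  · by_cases hcI : c ∈ I
    · have hneg : F x c < 0 := hroot x hx ▸ hanti x hx (hτ hx) hcI hc
      filter_upwards [(hF c hcI x hx).eventually (gt_mem_nhds hneg), self_mem_nhdsWithin]
        with y hy hyS
      exact ((hanti y hyS).lt_iff_gt hcI (hτ hyS)).mp (hy.trans_eq (hroot y hyS).symm)
    · filter_upwards [self_mem_nhdsWithin] with y hyS
      exact not_le.mp fun hle => hcI (hI.out (hτ hx) (hτ hyS) ⟨hc.le, hle⟩)

lemma im_period_lineMap_left_pos (hW : 0 < ω (B - A) (C - A)) {h : ℝ} (hh : 0 < h) :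
    0 < (period A B C (lineMap A B h)).im := by
  have hne : A ≠ lineMap A B h := by
    rw [ne_eq, eq_comm, lineMap_eq_left_iff, not_or]
    exact ⟨fun hAB => by simp [hAB] at hW, hh.ne'⟩
  have hself : ω (A - lineMap A B h) (B - A) = 0 := by
    simp [lineMap_apply_module]
    ring
  have hapex : ω (A - lineMap A B h) (C - A) = -(h * ω (B - A) (C - A)) := by
    simp [lineMap_apply_module]
    ring
  have hshift : ∀ x, ω (A - lineMap A B h) (x - lineMap A B h) = ω (A - lineMap A B h) (x - A) :=
    fun x => by
      rw [← sub_add_sub_cancel x A, map_add, Complex.orientation.areaForm_apply_self, add_zero]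
  have hneg : -(h * ω (B - A) (C - A)) ≤ 0 := (neg_lt_zero.mpr (mul_pos hh hW)).le
  rw [← im_period_apex hW.ne']
  apply im_period_lt hW.ne' hne <;> simp only [hshift, hself, hapex, hneg, le_refl]

lemma im_period_vertex_neg (hW : 0 < ω (B - A) (C - A)) : (period A B C C).im < 0 := by
  have hne : C ≠ A := fun h => by simp [h] at hW
  have hle : ω (C - A) (B - A) ≤ 0 := by
    rw [Complex.orientation.areaForm_swap]
    exact (neg_lt_zero.mpr hW).le
  have hself := (Complex.orientation.areaForm_apply_self (C - A)).le
  rw [← im_period_apex hW.ne']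
  exact im_period_lt hW.ne' hne hle hself hle hself

/-- The point dividing in the ratio `t : 1 - t` the segment from the point `lineMap A B h` of the
edge `AB` to the vertex `C`. -/
noncomputable def cevianPoint (A B C : ℂ) (h t : ℝ) : ℂ := lineMap (lineMap A B h) C t

lemma areaForm_cevianPoint_BC (A B C : ℂ) (h t : ℝ) :
    ω (B - cevianPoint A B C h t) (C - cevianPoint A B C h t) =
      (1 - t) * (1 - h) * ω (B - A) (C - A) := by
  simp [cevianPoint, lineMap_apply_module]
  ring

lemma areaForm_cevianPoint_CA (A B C : ℂ) (h t : ℝ) :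
    ω (C - cevianPoint A B C h t) (A - cevianPoint A B C h t) =
      (1 - t) * h * ω (B - A) (C - A) := by
  simp [cevianPoint, lineMap_apply_module]
  ring

lemma areaForm_cevianPoint_AB (A B C : ℂ) (h t : ℝ) :
    ω (A - cevianPoint A B C h t) (B - cevianPoint A B C h t) = t * ω (B - A) (C - A) := by
  simp [cevianPoint, lineMap_apply_module]
  ring

lemma strictAnti_im_period_cevianPoint (hW : 0 < ω (B - A) (C - A)) {h : ℝ}
    (hh : h ∈ Icc (0 : ℝ) 1) : StrictAnti fun t => (period A B C (cevianPoint A B C h t)).im := by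
  intro t t' htt
  have hd := sub_pos.mpr htt
  have hδ : cevianPoint A B C h t' - cevianPoint A B C h t = (t' - t) • (C - lineMap A B h) := by
    simp [cevianPoint, lineMap_apply]
    ring
  have hBA : ω (C - lineMap A B h) (B - A) = -ω (B - A) (C - A) := by
    simp [lineMap_apply_module]
    ring
  have hne : cevianPoint A B C h t' ≠ cevianPoint A B C h t := by
    rw [ne_eq, ← sub_eq_zero, hδ, smul_eq_zero, not_or]
    refine ⟨hd.ne', fun hP => hW.ne ?_⟩
    rwa [hP, map_zero, LinearMap.zero_apply, zero_eq_neg, eq_comm] at hBA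
  have hCA : ω (C - lineMap A B h) (C - A) = -(h * ω (B - A) (C - A)) := by
    simp [lineMap_apply_module]
    ring
  have hB : ω (C - lineMap A B h) (B - cevianPoint A B C h t) =
      -((1 - h) * ω (B - A) (C - A)) := by
    simp [cevianPoint, lineMap_apply_module]
    ring
  have hC : ω (C - lineMap A B h) (C - cevianPoint A B C h t) = 0 := by
    simp [cevianPoint, lineMap_apply_module]
    ring
  have hhW := mul_nonneg hh.1 hW.le
  have hhW' := mul_nonneg (sub_nonneg.mpr hh.2) hW.le
  apply im_period_lt hW.ne' hne <;> rw [hδ, map_smul, LinearMap.smul_apply, smul_eq_mul] <;>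
    refine mul_nonpos_of_nonneg_of_nonpos hd.le ?_ <;> linarith

lemma exists_im_period_cevianPoint_eq_zero (hW : 0 < ω (B - A) (C - A)) {h : ℝ}
    (hh : h ∈ Icc (0 : ℝ) 1) :
    ∃ t ∈ Ico (0 : ℝ) 1, (period A B C (cevianPoint A B C h t)).im = 0 := by
  have hcont : ContinuousOn (fun t => (period A B C (cevianPoint A B C h t)).im) (Icc 0 1) := by
    refine continuous_im.comp_continuousOn ((continuousOn_period hW).comp ?_ fun t ht => ?_)
    · exact lineMap_continuous.continuousOn
    · rw [mem_ofPred_eq, areaForm_cevianPoint_BC]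
      exact mul_nonneg (mul_nonneg (sub_nonneg.mpr ht.2) (sub_nonneg.mpr hh.2)) hW.le
  have hleft : 0 ≤ (period A B C (cevianPoint A B C h 0)).im := by
    rw [cevianPoint, lineMap_apply_zero]
    rcases hh.1.eq_or_lt with rfl | hpos
    · rw [lineMap_apply_zero, im_period_apex hW.ne']
    · exact (im_period_lineMap_left_pos hW hpos).le
  have hright : (period A B C (cevianPoint A B C h 1)).im < 0 := by
    rw [cevianPoint, lineMap_apply_one]
    exact im_period_vertex_neg hW
  exact intermediate_value_Ico' zero_le_one hcont ⟨hright, hleft⟩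

lemma continuousOn_cevianPoint_root (hW : 0 < ω (B - A) (C - A)) {τ : ℝ → ℝ}
    (hτ : MapsTo τ (Icc 0 1) (Ico 0 1))
    (hroot : ∀ h ∈ Icc (0 : ℝ) 1, (period A B C (cevianPoint A B C h (τ h))).im = 0) :
    ContinuousOn τ (Icc 0 1) := by
  refine continuousOn_of_strictAntiOn_of_eq_zero ordConnected_Ico (fun t ht => ?_)
    (fun h hh => (strictAnti_im_period_cevianPoint hW hh).strictAntiOn _) hτ hroot
  refine continuous_im.comp_continuousOn ((continuousOn_period hW).comp ?_ fun h hh => ?_)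
  · unfold cevianPoint
    fun_prop
  · rw [mem_ofPred_eq, areaForm_cevianPoint_BC]
    exact mul_nonneg (mul_nonneg (sub_nonneg.mpr ht.2.le) (sub_nonneg.mpr hh.2)) hW.le

lemma exists_continuousOn_cevianPoint_root (hW : 0 < ω (B - A) (C - A)) :
    ∃ τ : ℝ → ℝ, ContinuousOn τ (Icc 0 1) ∧ MapsTo τ (Icc 0 1) (Ico 0 1) ∧ τ 0 = 0 ∧
      (∀ h ∈ Ioc (0 : ℝ) 1, 0 < τ h) ∧
      ∀ h ∈ Icc (0 : ℝ) 1, (period A B C (cevianPoint A B C h (τ h))).im = 0 := by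
  choose! τ hτ hroot using fun h => exists_im_period_cevianPoint_eq_zero hW (h := h)
  refine ⟨τ, continuousOn_cevianPoint_root hW hτ hroot, hτ, ?_, fun h hh => ?_, hroot⟩
  · have h₀ : (0 : ℝ) ∈ Icc (0 : ℝ) 1 := by simp
    refine (strictAnti_im_period_cevianPoint hW h₀).injective ?_
    simp only [hroot 0 h₀]
    rw [cevianPoint, lineMap_apply_zero, lineMap_apply_zero, im_period_apex hW.ne']
  · have hhIcc := Ioc_subset_Icc_self hh
    refine (strictAnti_im_period_cevianPoint hW hhIcc).lt_iff_gt.mp ?_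
    rw [hroot h hhIcc, cevianPoint, lineMap_apply_zero]
    exact im_period_lineMap_left_pos hW hh.1

lemma exists_im_period_eq_zero (hW : 0 < ω (B - A) (C - A)) :
    ∃ b, 0 < ω (B - b) (C - b) ∧ 0 < ω (C - b) (A - b) ∧ 0 < ω (A - b) (B - b) ∧
      (period A B C b).im = 0 ∧ (period B C A b).im = 0 := by
  have hW' : 0 < ω (C - B) (A - B) := (areaForm_sub_rotate A B C).symm ▸ hW
  obtain ⟨τ, hcont_τ, hτ, hτ₀, hτ_pos, hroot⟩ := exists_continuousOn_cevianPoint_root hW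
  have hpath : ContinuousOn (fun h => cevianPoint A B C h (τ h)) (Icc 0 1) := by
    unfold cevianPoint
    fun_prop
  have hcont : ContinuousOn (fun h => (period B C A (cevianPoint A B C h (τ h))).im)
      (Icc 0 1) := by
    refine continuous_im.comp_continuousOn ((continuousOn_period hW').comp hpath fun h hh => ?_)
    rw [mem_ofPred_eq, areaForm_cevianPoint_CA]
    exact mul_nonneg (mul_nonneg (sub_nonneg.mpr (hτ hh).2.le) hh.1) hW.le
  have hleft : (period B C A (cevianPoint A B C 0 (τ 0))).im < 0 := by
    rw [hτ₀, cevianPoint, lineMap_apply_zero, lineMap_apply_zero]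
    exact im_period_vertex_neg hW'
  have hright : 0 < (period B C A (cevianPoint A B C 1 (τ 1))).im := by
    rw [cevianPoint, lineMap_apply_one]
    exact im_period_lineMap_left_pos hW' (hτ_pos 1 (by simp))
  obtain ⟨h, hh, hzero⟩ := intermediate_value_Ioo zero_le_one hcont ⟨hleft, hright⟩
  have hhIcc := Ioo_subset_Icc_self hh
  have ht := sub_pos.mpr (hτ hhIcc).2
  refine ⟨cevianPoint A B C h (τ h), ?_, ?_, ?_, hroot h hhIcc, hzero⟩
  · rw [areaForm_cevianPoint_BC]
    exact mul_pos (mul_pos ht (sub_pos.mpr hh.2)) hW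
  · rw [areaForm_cevianPoint_CA]
    exact mul_pos (mul_pos ht hh.1) hW
  · rw [areaForm_cevianPoint_AB]
    exact mul_pos (hτ_pos h (Ioo_subset_Ioc_self hh)) hW

end Existence

/-! ### The common point -/

section CommonPoint

variable {a : Fin 3 → ℂ}

lemma exists_mem_insideTriangle_forall_imPeriod_eq_zero (ha : 0 < orientedArea a) :
    ∃ b ∈ insideTriangle a, ∀ i, imPeriod a i b = 0 := by
  obtain ⟨b, h₀, h₁, h₂, hA, hB⟩ := exists_im_period_eq_zero ha
  have hb : b ∈ insideTriangle a := (forall_cyclic (p := fun i => 0 < subarea a b i) 0).mpr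
    ⟨h₀, h₁, h₂⟩
  exact ⟨b, hb, imPeriod_eq_zero_of_pair hb (i := 0) hA hB⟩

lemma exists_common_point (ha : 0 < orientedArea a) :
    ∃ b₀ ∈ insideTriangle a, (∀ i, b₀ ∈ gammaSet a i) ∧
      ∀ i i', i ≠ i' → gammaSet a i ∩ gammaSet a i' = {b₀} := by
  obtain ⟨b₀, hb₀, hzero⟩ := exists_mem_insideTriangle_forall_imPeriod_eq_zero ha
  have hmem : ∀ i, b₀ ∈ gammaSet a i := fun i => (mem_gammaSet_iff hb₀ i).mpr (hzero i)
  have huniq : ∀ {b i}, b ∈ gammaSet a i → b ∈ gammaSet a (i + 1) → b = b₀ := fun hi hi' => by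
    have hb := mem_insideTriangle_of_mem_gammaSet ha hi hi'
    rw [mem_gammaSet_iff hb] at hi hi'
    exact eq_of_imPeriod_eq hb hb₀ fun j =>
      (imPeriod_eq_zero_of_pair hb hi hi' j).trans (hzero j).symm
  refine ⟨b₀, hb₀, hmem, fun i i' hne => eq_singleton_iff_unique_mem.mpr
    ⟨⟨hmem i, hmem i'⟩, fun b ⟨hi, hi'⟩ => ?_⟩⟩
  rcases eq_add_one_or_eq_add_one hne with rfl | rfl
  · exact huniq hi hi'
  · exact huniq hi' hi

end CommonPoint

end PeriodTriangle

/-- Lemma 9: for non-collinear `a₁, a₂, a₃`, the three curves `γ₁, γ₂, γ₃` meet at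
exactly one point `b₀`; any two of them meet only at `b₀`, and `b₀` lies in the interior
of the triangle spanned by `a₁, a₂, a₃`. -/
theorem stmt12 (a : Fin 3 → ℂ) (hcol : ¬ Collinear ℝ (Set.range a)) :
    ∃ b₀ : ℂ, (∀ i : Fin 3, b₀ ∈ gammaSet a i) ∧
      (∀ i i' : Fin 3, i ≠ i' → gammaSet a i ∩ gammaSet a i' = {b₀}) ∧
      b₀ ∈ interior (convexHull ℝ (Set.range a)) := by
  have harea : PeriodTriangle.orientedArea a ≠ 0 := fun h =>
    hcol (PeriodTriangle.collinear_of_orientedArea_eq_zero h)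
  have ha := PeriodTriangle.injective_of_orientedArea_ne_zero harea
  obtain ⟨σ, hσ⟩ := PeriodTriangle.exists_perm_orientedArea_pos harea
  obtain ⟨b₀, hinside, hmem, hinter⟩ := PeriodTriangle.exists_common_point hσ
  simp only [PeriodTriangle.gammaSet_comp_perm ha] at hmem hinter
  refine ⟨b₀, σ.forall_congr_right.mp hmem, fun i i' hne => ?_, ?_⟩
  · simpa using hinter (σ.symm i) (σ.symm i') (σ.symm.injective.ne hne)
  · rw [← σ.surjective.range_comp a]
    exact PeriodTriangle.insideTriangle_subset_interior_convexHull _ hinside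
end

section
/- Let α < β < γ be real numbers, Q(z) = (z−α)(z−β)(z−γ), and P = Q'/2 (the Lamé case). If V is a complex polynomial with deg V ≤ 1 and S is a complex polynomial of degree n ≥ 1 such that Q·S'' + P·S' + V·S = 0 identically, then every root of S and every root of V is real and lies in the open interval (α, γ). -/
open Polynomial

/-!
Dividing by `Q S'`, the equation at a root `w` of `V S` with `S'(w) ≠ 0` says that
`S'' / S' + P / Q` vanishes at `w`. This is a sum of terms `ρ / (w - t)` with `ρ > 0`, where `t`
runs over the roots of `S'` and of `Q`: an equilibrium of repelling charges. If all the charges lie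
in a closed half-plane with `w` on its boundary line, and not all of them on that line, the forces
push `w` strictly out of the half-plane, so there is no equilibrium. By Gauss-Lucas this keeps the
extreme root of `S` in a given direction from lying beyond all the roots of `Q`, and then likewise
any root of `V`. A root `w` of `S` satisfies `S'(w) ≠ 0` because the exponents of the equation are
`0, 1` at an ordinary point and `0, 1 - ρ` at a root of `Q`.
-/

section Indicial

variable {R : Type*} [CommRing R]

theorem X_sub_C_mul_derivative_pow_mul (w : R) (k : ℕ) (A : R[X]) :
    (X - C w) * derivative ((X - C w) ^ k * A) =
      (X - C w) ^ k * (C (k : R) * A + (X - C w) * derivative A) := by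
  cases k with
  | zero => simp
  | succ k =>
    simp only [derivative_mul, derivative_X_sub_C_pow, Nat.add_sub_cancel]
    ring

variable [IsDomain R]

-- For `k` the order of vanishing of `D` at `w`, both conclusions are read off from the two lowest
-- coefficients of `Q D' + P D` at `w`, those of `(X - w) ^ (k - 1)` and `(X - w) ^ k`.
theorem indicial_eq_zero_of_pow_dvd {Q P D : R[X]} {w : R} (hD : D ≠ 0)
    (h : (X - C w) ^ (D.rootMultiplicity w + 1) ∣ Q * derivative D + P * D) :
    D.rootMultiplicity w * Q.eval w = 0 ∧
      (Q.eval w = 0 → D.rootMultiplicity w * (derivative Q).eval w + P.eval w = 0) := by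
  obtain ⟨A, hDA, hA⟩ := exists_eq_pow_rootMultiplicity_mul_and_not_dvd D hD w
  obtain ⟨B, hB⟩ := h
  set k := D.rootMultiplicity w
  have hAw : A.eval w ≠ 0 := fun h0 => hA (dvd_iff_isRoot.2 h0)
  have hlocal : Q * (C (k : R) * A + (X - C w) * derivative A) + (X - C w) * (P * A) =
      (X - C w) ^ 2 * B := by
    apply mul_left_cancel₀ (pow_ne_zero k (X_sub_C_ne_zero w))
    have hD' := X_sub_C_mul_derivative_pow_mul w k A
    rw [← hDA] at hD'
    linear_combination (X - C w) * hB - Q * hD' - (X - C w) * P * hDA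
  have hvalue := congrArg (eval w) hlocal
  have hderiv := congrArg (eval w ∘ derivative) hlocal
  simp only [Function.comp_apply, derivative_mul, derivative_add, derivative_C,
    derivative_X_sub_C, derivative_X_sub_C_sq, eval_add, eval_mul, eval_C, eval_one, eval_sub,
    eval_X, eval_pow, sub_self] at hvalue hderiv
  constructor
  · apply mul_right_cancel₀ hAw
    linear_combination hvalue
  · intro hQw
    apply mul_right_cancel₀ hAw
    rw [hQw] at hderiv
    linear_combination hderiv

theorem eval_derivative_ne_zero_of_isRoot [CharZero R] {Q P V S : R[X]} {w : R} (hS0 : S ≠ 0)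
    (heq : Q * derivative (derivative S) + P * derivative S + V * S = 0)
    (hindicial : Q.eval w = 0 → ∀ k : ℕ, k * (derivative Q).eval w + P.eval w ≠ 0)
    (hw : S.IsRoot w) : (derivative S).eval w ≠ 0 := by
  have hmult := derivative_rootMultiplicity_of_root hw
  have hpos : 0 < S.rootMultiplicity w := (rootMultiplicity_pos hS0).2 hw
  have hS' : derivative S ≠ 0 := fun h0 =>
    hS0 (by rw [eq_C_of_derivative_eq_zero h0] at hw ⊢; simpa using hw)
  have hdvd : (X - C w) ^ ((derivative S).rootMultiplicity w + 1) ∣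
      Q * derivative (derivative S) + P * derivative S := by
    rw [hmult, Nat.sub_add_cancel hpos, eq_neg_of_add_eq_zero_left heq]
    exact ((pow_rootMultiplicity_dvd S w).mul_left V).neg_right
  obtain ⟨hk, hQ⟩ := indicial_eq_zero_of_pow_dvd hS' hdvd
  have hQw : Q.eval w ≠ 0 := fun h0 => hindicial h0 _ (hQ h0)
  have hmult0 : (derivative S).rootMultiplicity w = 0 :=
    Nat.cast_eq_zero.1 ((mul_eq_zero.1 hk).resolve_right hQw)
  exact fun h0 => ((rootMultiplicity_pos hS').2 h0).ne' hmult0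

end Indicial

section WeightedNodalSum

open Lagrange

variable {ι R : Type*} [CommRing R]

theorem eval_nodal_eq_zero_iff [IsDomain R] {s : Finset ι} {v : ι → R} {x : R} :
    (nodal s v).eval x = 0 ↔ ∃ i ∈ s, x = v i := by
  simp only [eval_nodal, Finset.prod_eq_zero_iff, sub_eq_zero]

theorem eval_derivative_nodal_node_ne_zero [IsDomain R] {s : Finset ι} {v : ι → R}
    (hv : Set.InjOn v s) {i : ι} (hi : i ∈ s) : (derivative (nodal s v)).eval (v i) ≠ 0 := by
  classical
  rw [eval_nodal_derivative_eval_node_eq hi]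
  refine eval_nodal_not_at_node fun j hj hij => ?_
  exact Finset.ne_of_mem_erase hj (hv hi (Finset.mem_of_mem_erase hj) hij).symm

variable [DecidableEq ι]

/-- The numerator of `∑ i ∈ s, ρ i / (X - v i)` over the denominator `Lagrange.nodal s v`; it is the
coefficient `P` of `S'` in the generalized Lamé equation with residues `ρ`. -/
noncomputable def weightedNodalSum (s : Finset ι) (v ρ : ι → R) : R[X] :=
  ∑ i ∈ s, C (ρ i) * nodal (s.erase i) v

theorem weightedNodalSum_const (s : Finset ι) (v : ι → R) (c : R) :
    weightedNodalSum s v (fun _ => c) = C c * derivative (nodal s v) := by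
  rw [weightedNodalSum, derivative_nodal, Finset.mul_sum]

theorem eval_weightedNodalSum_node {s : Finset ι} (v ρ : ι → R) {i : ι} (hi : i ∈ s) :
    (weightedNodalSum s v ρ).eval (v i) = ρ i * (derivative (nodal s v)).eval (v i) := by
  rw [weightedNodalSum, eval_finsetSum, eval_nodal_derivative_eval_node_eq hi,
    Finset.sum_eq_single_of_mem i hi, eval_mul, eval_C]
  intro j _ hji
  rw [eval_mul, eval_nodal_at_node (Finset.mem_erase.2 ⟨hji.symm, hi⟩), mul_zero]

theorem eval_weightedNodalSum_div_eval_nodal {K : Type*} [Field K] {s : Finset ι} {v : ι → K}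
    (ρ : ι → K) {x : K} (hx : (nodal s v).eval x ≠ 0) :
    (weightedNodalSum s v ρ).eval x / (nodal s v).eval x = ∑ i ∈ s, ρ i * (x - v i)⁻¹ := by
  rw [weightedNodalSum, eval_finsetSum, Finset.sum_div]
  refine Finset.sum_congr rfl fun i hi => ?_
  rw [nodal_eq_mul_nodal_erase hi, eval_mul] at hx ⊢
  simp only [eval_mul, eval_sub, eval_X, eval_C] at hx ⊢
  have hxi := left_ne_zero_of_mul hx
  have herase := right_ne_zero_of_mul hx
  field_simp

end WeightedNodalSum

section HalfPlane

open Lagrange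

theorem re_mul_inv_eq_inner_div (u z : ℂ) : (u * z⁻¹).re = inner ℝ u z / Complex.normSq z := by
  simp only [Complex.inner, Complex.mul_re, Complex.inv_re, Complex.inv_im, Complex.conj_re,
    Complex.conj_im]
  ring

theorem re_mul_inv_sub_nonneg {u w t : ℂ} (h : inner ℝ u t ≤ inner ℝ u w) :
    0 ≤ (u * (w - t)⁻¹).re := by
  rw [re_mul_inv_eq_inner_div, inner_sub_right]
  exact div_nonneg (sub_nonneg.2 h) (Complex.normSq_nonneg _)

theorem re_mul_inv_sub_pos {u w t : ℂ} (h : inner ℝ u t < inner ℝ u w) :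
    0 < (u * (w - t)⁻¹).re := by
  have hwt : w - t ≠ 0 := sub_ne_zero.2 (ne_of_apply_ne (inner ℝ u) h.ne')
  rw [re_mul_inv_eq_inner_div, inner_sub_right]
  exact div_pos (sub_pos.2 h) (Complex.normSq_pos.2 hwt)

theorem re_mul_eval_derivative_div_eval_nonneg {D : ℂ[X]} {u w : ℂ} (hw : D.eval w ≠ 0)
    (hD : ∀ t ∈ D.roots, inner ℝ u t ≤ inner ℝ u w) :
    0 ≤ (u * ((derivative D).eval w / D.eval w)).re := by
  rw [(IsAlgClosed.splits D).eval_derivative_div_eval_of_ne_zero hw,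
    ← Multiset.sum_map_mul_left, ← Complex.reLm_coe, map_multiset_sum, Multiset.map_map]
  refine Multiset.sum_nonneg fun x hx => ?_
  obtain ⟨t, ht, rfl⟩ := Multiset.mem_map.1 hx
  simpa only [Function.comp_apply, Complex.reLm_coe, one_div] using re_mul_inv_sub_nonneg (hD t ht)

theorem mem_of_mem_roots_derivative_of_convex {S : ℂ[X]} {K : Set ℂ} (hK : Convex ℝ K)
    (hS : ∀ t ∈ S.roots, t ∈ K) {z : ℂ} (hz : z ∈ (derivative S).roots) : z ∈ K := by
  have hS' : derivative S ≠ 0 := ne_zero_of_mem_roots hz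
  have hdeg : 0 < S.degree :=
    natDegree_pos_iff_degree_pos.1 (Nat.pos_of_ne_zero fun h0 => hS' (derivative_eq_zero.2 h0))
  have hsub : S.rootSet ℂ ⊆ K := fun t ht => hS t (by simpa [rootSet] using ht)
  exact convexHull_min hsub hK
    (rootSet_derivative_subset_convexHull_rootSet hdeg (by simpa [rootSet] using hz))

variable {ι : Type*} [DecidableEq ι] {s : Finset ι} {a : ι → ℂ} {ρ : ι → ℝ} {u : ℂ}

theorem re_mul_eval_weightedNodalSum_div_pos (hρ : ∀ i ∈ s, 0 < ρ i) {w : ℂ}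
    (hw : (nodal s a).eval w ≠ 0) (hle : ∀ i ∈ s, inner ℝ u (a i) ≤ inner ℝ u w)
    (hlt : ∃ i ∈ s, inner ℝ u (a i) < inner ℝ u w) :
    0 < (u * ((weightedNodalSum s a (fun i => (ρ i : ℂ))).eval w / (nodal s a).eval w)).re := by
  rw [eval_weightedNodalSum_div_eval_nodal _ hw, Finset.mul_sum, Complex.re_sum]
  simp only [mul_left_comm u, Complex.re_ofReal_mul]
  obtain ⟨i, hi, hlt⟩ := hlt
  exact Finset.sum_pos' (fun j hj => mul_nonneg (hρ j hj).le (re_mul_inv_sub_nonneg (hle j hj)))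
    ⟨i, hi, mul_pos (hρ i hi) (re_mul_inv_sub_pos hlt)⟩

theorem natCast_mul_add_eval_weightedNodalSum_ne_zero (ha : Set.InjOn a s)
    (hρ : ∀ i ∈ s, 0 < ρ i) {w : ℂ} (hw : (nodal s a).eval w = 0) (k : ℕ) :
    k * (derivative (nodal s a)).eval w +
      (weightedNodalSum s a (fun i => (ρ i : ℂ))).eval w ≠ 0 := by
  obtain ⟨i, hi, rfl⟩ := eval_nodal_eq_zero_iff.1 hw
  rw [eval_weightedNodalSum_node a _ hi, ← add_mul]
  have hexponent : (0 : ℝ) < k + ρ i := add_pos_of_nonneg_of_pos k.cast_nonneg (hρ i hi)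
  exact mul_ne_zero (by exact_mod_cast hexponent.ne') (eval_derivative_nodal_node_ne_zero ha hi)

theorem eval_nodal_mul_derivative_add_ne_zero (ha : Set.InjOn a s) (hρ : ∀ i ∈ s, 0 < ρ i)
    {D : ℂ[X]} {w : ℂ} (hDw : D.eval w ≠ 0) (hD : ∀ t ∈ D.roots, inner ℝ u t ≤ inner ℝ u w)
    (hle : ∀ i ∈ s, inner ℝ u (a i) ≤ inner ℝ u w)
    (hlt : ∃ i ∈ s, inner ℝ u (a i) < inner ℝ u w) :
    (nodal s a * derivative D + weightedNodalSum s a (fun i => (ρ i : ℂ)) * D).eval w ≠ 0 := by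
  rw [eval_add, eval_mul, eval_mul]
  intro h
  have hQw : (nodal s a).eval w ≠ 0 := by
    intro hQw
    have hPw := natCast_mul_add_eval_weightedNodalSum_ne_zero ha hρ hQw 0
    rw [Nat.cast_zero, zero_mul, zero_add] at hPw
    rw [hQw, zero_mul, zero_add] at h
    exact mul_ne_zero hPw hDw h
  have hforce : (derivative D).eval w / D.eval w +
      (weightedNodalSum s a (fun i => (ρ i : ℂ))).eval w / (nodal s a).eval w = 0 := by
    field_simp
    linear_combination h
  have hre := congrArg (fun x => (u * x).re) hforce
  simp only [mul_add, Complex.add_re, mul_zero, Complex.zero_re] at hre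
  exact (add_pos_of_nonneg_of_pos (re_mul_eval_derivative_div_eval_nonneg hDw hD)
    (re_mul_eval_weightedNodalSum_div_pos hρ hQw hle hlt)).ne' hre

variable {V S : ℂ[X]} {c : ℝ}

theorem inner_lt_of_mem_roots_stieltjes (ha : Set.InjOn a s) (hρ : ∀ i ∈ s, 0 < ρ i)
    (heq : nodal s a * derivative (derivative S) +
      weightedNodalSum s a (fun i => (ρ i : ℂ)) * derivative S + V * S = 0)
    (hle : ∀ i ∈ s, inner ℝ u (a i) ≤ c) (hlt : ∃ i ∈ s, inner ℝ u (a i) < c)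
    {z : ℂ} (hz : z ∈ S.roots) : inner ℝ u z < c := by
  by_contra! hcz
  obtain ⟨w, hw, hmax⟩ := S.roots.toFinset.exists_max_image (inner ℝ u)
    ⟨z, Multiset.mem_toFinset.2 hz⟩
  simp only [Multiset.mem_toFinset] at hw hmax
  have hcw : c ≤ inner ℝ u w := hcz.trans (hmax z hz)
  have hS'w : (derivative S).eval w ≠ 0 :=
    eval_derivative_ne_zero_of_isRoot (ne_zero_of_mem_roots hz) heq
      (natCast_mul_add_eval_weightedNodalSum_ne_zero ha hρ) (isRoot_of_mem_roots hw)
  have hS' : ∀ t ∈ (derivative S).roots, inner ℝ u t ≤ inner ℝ u w := fun t =>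
    mem_of_mem_roots_derivative_of_convex
      (convex_halfSpace_le (innerₗ ℂ u).isLinear (inner ℝ u w)) hmax
  refine eval_nodal_mul_derivative_add_ne_zero ha hρ hS'w hS' (fun i hi => (hle i hi).trans hcw)
    (hlt.imp fun i hi => ⟨hi.1, hi.2.trans_le hcw⟩) ?_
  rw [eq_neg_of_add_eq_zero_left heq, eval_neg, eval_mul, isRoot_of_mem_roots hw, mul_zero,
    neg_zero]

theorem inner_lt_of_isRoot_vanVleck (ha : Set.InjOn a s) (hρ : ∀ i ∈ s, 0 < ρ i)
    (hS : 0 < S.natDegree)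
    (heq : nodal s a * derivative (derivative S) +
      weightedNodalSum s a (fun i => (ρ i : ℂ)) * derivative S + V * S = 0)
    (hle : ∀ i ∈ s, inner ℝ u (a i) ≤ c) (hlt : ∃ i ∈ s, inner ℝ u (a i) < c)
    {z : ℂ} (hz : V.IsRoot z) : inner ℝ u z < c := by
  have hS'0 : derivative S ≠ 0 := mt derivative_eq_zero.1 hS.ne'
  have hS' : ∀ t ∈ (derivative S).roots, inner ℝ u t < c := fun t =>
    mem_of_mem_roots_derivative_of_convex (convex_halfSpace_lt (innerₗ ℂ u).isLinear c)
      fun _ => inner_lt_of_mem_roots_stieltjes ha hρ heq hle hlt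
  by_contra! hcz
  have hS'z : (derivative S).eval z ≠ 0 := fun h0 =>
    (hS' z ((mem_roots hS'0).2 h0)).not_ge hcz
  refine eval_nodal_mul_derivative_add_ne_zero ha hρ hS'z (fun t ht => (hS' t ht).le.trans hcz)
    (fun i hi => (hle i hi).trans hcz) (hlt.imp fun i hi => ⟨hi.1, hi.2.trans_le hcz⟩) ?_
  rw [eq_neg_of_add_eq_zero_left heq, eval_neg, eval_mul, hz, zero_mul, neg_zero]

end HalfPlane

theorem re_mem_Ioo_of_forall_inner_lt {m : ℕ} {a : Fin (m + 2) → ℝ} (ha : StrictMono a) {z : ℂ}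
    (h : ∀ (u : ℂ) (c : ℝ), (∀ i, inner ℝ u (a i : ℂ) ≤ c) → (∃ i, inner ℝ u (a i : ℂ) < c) →
      inner ℝ u z < c) :
    z.im = 0 ∧ a 0 < z.re ∧ z.re < a (Fin.last (m + 1)) := by
  have hends : a 0 < a (Fin.last (m + 1)) := ha Fin.last_pos
  simp only [Complex.inner, Complex.mul_re, Complex.conj_re, Complex.conj_im, Complex.ofReal_re,
    Complex.ofReal_im] at h
  have hfirst (i) : a 0 ≤ a i := ha.monotone (Fin.zero_le i)
  have hlast (i) : a i ≤ a (Fin.last (m + 1)) := ha.monotone (Fin.le_last i)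
  have him : z.im ≤ 0 := by
    by_contra! hpos
    simpa using h Complex.I z.im (by simp [hpos.le]) (by simp [hpos])
  have him' : 0 ≤ z.im := by
    by_contra! hneg
    simpa using h (-Complex.I) (-z.im) (by simp [hneg.le]) (by simp [hneg])
  have hleft : a 0 < z.re := by
    simpa using h (-1) (-a 0) (by simpa using hfirst) ⟨Fin.last _, by simpa using hends⟩
  have hright : z.re < a (Fin.last (m + 1)) := by
    simpa using h 1 (a (Fin.last _)) (by simpa using hlast) ⟨0, by simpa using hends⟩
  exact ⟨le_antisymm him him', hleft, hright⟩

theorem stmt16_general {m : ℕ} {a ρ : Fin (m + 2) → ℝ} (ha : StrictMono a) (hρ : ∀ i, 0 < ρ i)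
    {V S : ℂ[X]} (hS : 0 < S.natDegree)
    (heq : Lagrange.nodal Finset.univ (fun i => (a i : ℂ)) * derivative (derivative S) +
      weightedNodalSum Finset.univ (fun i => (a i : ℂ)) (fun i => (ρ i : ℂ)) * derivative S +
        V * S = 0) :
    (∀ z ∈ S.roots, z.im = 0 ∧ a 0 < z.re ∧ z.re < a (Fin.last (m + 1))) ∧
    (∀ z ∈ V.roots, z.im = 0 ∧ a 0 < z.re ∧ z.re < a (Fin.last (m + 1))) := by
  have hinj : Set.InjOn (fun i => (a i : ℂ)) (Finset.univ : Finset (Fin (m + 2))) :=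
    (Complex.ofReal_injective.comp ha.injective).injOn
  constructor <;> intro z hz <;> refine re_mem_Ioo_of_forall_inner_lt ha fun u c hle hlt => ?_
  · exact inner_lt_of_mem_roots_stieltjes hinj (fun i _ => hρ i) heq (fun i _ => hle i)
      (by simpa using hlt) hz
  · exact inner_lt_of_isRoot_vanVleck hinj (fun i _ => hρ i) hS heq (fun i _ => hle i)
      (by simpa using hlt) (isRoot_of_mem_roots hz)

theorem nodal_vec_three (α β γ : ℝ) :
    Lagrange.nodal Finset.univ (fun i => ((![α, β, γ] i : ℝ) : ℂ)) =
      (X - C (α : ℂ)) * (X - C (β : ℂ)) * (X - C (γ : ℂ)) := by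
  simp [Lagrange.nodal_eq, Fin.prod_univ_three]

/-- Stieltjes's theorem (Lamé case): for `Q(z) = (z-α)(z-β)(z-γ)` with real `α < β < γ`
and `P = Q'/2`, every root of every Van Vleck polynomial `V` (deg ≤ 1) and every root of
every Stieltjes polynomial `S` of degree `n ≥ 1` solving `Q S'' + P S' + V S = 0` is real
and lies in the open interval `(α, γ)`. -/
theorem stmt16 (α β γ : ℝ) (hαβ : α < β) (hβγ : β < γ)
    (Q : Polynomial ℂ)
    (hQ : Q = (X - C (α : ℂ)) * (X - C (β : ℂ)) * (X - C (γ : ℂ)))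
    (P : Polynomial ℂ) (hP : P = C (1 / 2 : ℂ) * derivative Q)
    (V S : Polynomial ℂ) (hV : V.degree ≤ 1)
    (n : ℕ) (hn : 1 ≤ n) (hS : S.natDegree = n)
    (heq : Q * (derivative (derivative S)) + P * (derivative S) + V * S = 0) :
    (∀ z ∈ S.roots, z.im = 0 ∧ α < z.re ∧ z.re < γ) ∧
    (∀ z ∈ V.roots, z.im = 0 ∧ α < z.re ∧ z.re < γ) := by
  refine stmt16_general (a := ![α, β, γ]) (ρ := fun _ => 1 / 2) (by simp [hαβ, hβγ])
    (fun _ => one_half_pos) (hS ▸ hn) ?_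
  simpa [weightedNodalSum_const, nodal_vec_three, ← hQ, hP] using heq
end
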